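/- Suppose each receiver of a discrete memoryless interference channel has side information correlated with the interfering source: Receiver 1 observes V_2^n and Receiver 2 observes V_1^n. The sources U1 and U2 can be transmitted reliably if there exist a finite-valued random variable Q and finite-valued auxiliary random variables W1, W2 with joint distribution p(q,u1,v1,u2,v2,w1,w2,x1,x2,y1,y2) = p(q) p(u1,v1) p(u2,v2) p(w1,x1|u1,q) p(w2,x2|u2,q) p(y1,y2|x1,x2) such that all of the following strict inequalities hold: H(U1) < I(X1; V2,Y1 | W2,Q); H(U2) < I(X2; V1,Y2 | W1,Q); H(U1) < I(W2,X1; V2,Y1 | Q) - I(U2;W2|Q); H(U2) < I(W1,X2; V1,Y2 | Q) - I(U1;W1|Q); H(U1)+H(U2) < I(X1; V2,Y1 | W1,W2,Q) + I(W1,X2; V1,Y2 | Q); H(U1)+H(U2) < I(X2; V1,Y2 | W1,W2,Q) + I(W2,X1; V2,Y1 | Q); H(U1)+H(U2) < I(W1,X2; V1,Y2 | W2,Q) + I(W2,X1; V2,Y1 | W1,Q); H(U1)+H(U2) < I(W2,X1; V2,Y1 | Q) + I(W1,X2; V1,Y2 | W2,Q) - I(U1;W1|Q); H(U1)+H(U2)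 < I(W1,X2; V1,Y2 | Q) + I(W2,X1; V2,Y1 | W1,Q) - I(U2;W2|Q); 2H(U1)+H(U2) < I(W2,X1; V2,Y1 | Q) + I(X1; V2,Y1 | W1,W2,Q) + I(W1,X2; V1,Y2 | W2,Q); H(U1)+2H(U2) < I(W1,X2; V1,Y2 | Q) + I(X2; V1,Y2 | W1,W2,Q) + I(W2,X1; V2,Y1 | W1,Q). -/

import Mathlib

open Finset Real Filter
open scoped Classical

namespace Paper

/-- `p` is a probability mass function on the finite type `α`. -/
def IsPMF {α : Type*} [Fintype α] (p : α → ℝ) : Prop :=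
  (∀ a, 0 ≤ p a) ∧ ∑ a, p a = 1

/-- `k` is a transition probability (channel) from `α` to the finite type `β`. -/
def IsKernel {α β : Type*} [Fintype β] (k : α → β → ℝ) : Prop :=
  ∀ a, IsPMF (k a)

variable {Ω : Type*} [Fintype Ω]

/-- Probability that the random variable `X` takes the value `x`, under the weight `p`. -/
noncomputable def pr {α : Type*} (p : Ω → ℝ) (X : Ω → α) (x : α) : ℝ :=
  ∑ ω, if X ω = x then p ω else 0

/-- Shannon entropy (base 2) of the random variable `X` under `p`. -/
noncomputable def ent {α : Type*} [Fintype α] (p : Ω → ℝ) (X : Ω → α) : ℝ :=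
  ∑ x, -(pr p X x * Real.logb 2 (pr p X x))

/-- Conditional entropy `H(X|Y) = H(X,Y) - H(Y)`. -/
noncomputable def condEnt {α β : Type*} [Fintype α] [Fintype β]
    (p : Ω → ℝ) (X : Ω → α) (Y : Ω → β) : ℝ :=
  ent p (fun ω => (X ω, Y ω)) - ent p Y

/-- Mutual information `I(X;Y) = H(X) + H(Y) - H(X,Y)`. -/
noncomputable def mi {α β : Type*} [Fintype α] [Fintype β]
    (p : Ω → ℝ) (X : Ω → α) (Y : Ω → β) : ℝ :=
  ent p X + ent p Y - ent p (fun ω => (X ω, Y ω))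

/-- Conditional mutual information `I(X;Y|Z) = H(X,Z) + H(Y,Z) - H(X,Y,Z) - H(Z)`. -/
noncomputable def cmi {α β γ : Type*} [Fintype α] [Fintype β] [Fintype γ]
    (p : Ω → ℝ) (X : Ω → α) (Y : Ω → β) (Z : Ω → γ) : ℝ :=
  ent p (fun ω => (X ω, Z ω)) + ent p (fun ω => (Y ω, Z ω))
    - ent p (fun ω => (X ω, Y ω, Z ω)) - ent p Z

/-- The Markov chain `A → B → C`: `A` and `C` are conditionally independent given `B`. -/
def MarkovChain {α β γ : Type*} (p : Ω → ℝ) (A : Ω → α) (B : Ω → β) (C : Ω → γ) : Prop :=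
  ∀ a b c, pr p (fun ω => (A ω, B ω, C ω)) (a, b, c) * pr p B b =
    pr p (fun ω => (A ω, B ω)) (a, b) * pr p (fun ω => (B ω, C ω)) (b, c)

/-! ## Statement 1: sufficient conditions (joint source-channel Han–Kobayashi scheme)
when each receiver has side information correlated with the interfering source. -/

section Stmt1

variable {U1 V1 U2 V2 X1 X2 Y1 Y2 : Type}
  [Fintype U1] [Fintype V1] [Fintype U2] [Fintype V2]
  [Fintype X1] [Fintype X2] [Fintype Y1] [Fintype Y2]

/-- Error probability of a length-`n` joint source-channel code, where Receiver 1
has side information `V_2^n` and Receiver 2 has side information `V_1^n`. -/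
noncomputable def PerrCross (ch : X1 × X2 → Y1 × Y2 → ℝ)
    (q1 : U1 × V1 → ℝ) (q2 : U2 × V2 → ℝ) (n : ℕ)
    (f1 : (Fin n → U1) → Fin n → X1) (f2 : (Fin n → U2) → Fin n → X2)
    (g1 : (Fin n → Y1) → (Fin n → V2) → Fin n → U1)
    (g2 : (Fin n → Y2) → (Fin n → V1) → Fin n → U2) : ℝ :=
  ∑ u1 : Fin n → U1, ∑ v1 : Fin n → V1, ∑ u2 : Fin n → U2, ∑ v2 : Fin n → V2,
    ∑ y : Fin n → Y1 × Y2,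
      (∏ i, q1 (u1 i, v1 i)) * (∏ i, q2 (u2 i, v2 i)) *
      (∏ i, ch (f1 u1 i, f2 u2 i) (y i)) *
      (if g1 (fun i => (y i).1) v2 = u1 ∧ g2 (fun i => (y i).2) v1 = u2 then 0 else 1)

/-- The sources can be transmitted reliably (side information about the interfering source). -/
def ReliableCross (ch : X1 × X2 → Y1 × Y2 → ℝ)
    (q1 : U1 × V1 → ℝ) (q2 : U2 × V2 → ℝ) : Prop :=
  ∃ (f1 : ∀ n : ℕ, (Fin n → U1) → Fin n → X1)
    (f2 : ∀ n : ℕ, (Fin n → U2) → Fin n → X2)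
    (g1 : ∀ n : ℕ, (Fin n → Y1) → (Fin n → V2) → Fin n → U1)
    (g2 : ∀ n : ℕ, (Fin n → Y2) → (Fin n → V1) → Fin n → U2),
    Tendsto (fun n => PerrCross ch q1 q2 n (f1 n) (f2 n) (g1 n) (g2 n)) atTop (nhds 0)

/-- The joint single-letter law
`p(q,u1,v1,u2,v2,w1,x1,w2,x2,y1,y2) =
  p(q) p(u1,v1) p(u2,v2) p(w1,x1|u1,q) p(w2,x2|u2,q) p(y1,y2|x1,x2)`. -/
noncomputable def jointHK (mQ mW1 mW2 : ℕ) (ch : X1 × X2 → Y1 × Y2 → ℝ)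
    (q1 : U1 × V1 → ℝ) (q2 : U2 × V2 → ℝ)
    (pQ : Fin mQ → ℝ) (k1 : U1 → Fin mQ → Fin mW1 × X1 → ℝ)
    (k2 : U2 → Fin mQ → Fin mW2 × X2 → ℝ) :
    Fin mQ × U1 × V1 × U2 × V2 × Fin mW1 × X1 × Fin mW2 × X2 × Y1 × Y2 → ℝ :=
  fun (q, u1, v1, u2, v2, w1, x1, w2, x2, y1, y2) =>
    pQ q * q1 (u1, v1) * q2 (u2, v2) * k1 u1 q (w1, x1) * k2 u2 q (w2, x2) * ch (x1, x2) (y1, y2)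

end Stmt1

set_option linter.unusedSectionVars false

/-! ### Toolkit: sums of products over function spaces -/

theorem sum_pi_prod {ι A : Type} [DecidableEq ι] [Fintype ι] [Fintype A] (F : ι → A → ℝ) :
    ∑ c : ι → A, ∏ i, F i (c i) = ∏ i, ∑ a, F i a := by
  rw [Finset.prod_univ_sum]; simp

theorem sum_pi_sep {ι A : Type} [DecidableEq ι] [Fintype ι] [Fintype A] (g : ι → A → ℝ)
    (hg : ∀ i, ∑ a, g i a = 1) {j j' : ι} (hj : j ≠ j') (α β : A → ℝ) :
    ∑ c : ι → A, (∏ i, g i (c i)) * (α (c j) * β (c j')) =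
      (∑ a, g j a * α a) * (∑ a, g j' a * β a) := by
  have h1 : ∀ c : ι → A, (∏ i, g i (c i)) * (α (c j) * β (c j')) =
      ∏ i, (g i (c i) * ((if i = j then α (c i) else 1) * (if i = j' then β (c i) else 1))) := by
    intro c
    rw [Finset.prod_mul_distrib, Finset.prod_mul_distrib]
    simp
  simp_rw [h1]
  rw [sum_pi_prod (fun i a => g i a * ((if i = j then α a else 1) * (if i = j' then β a else 1)))]
  have h2 : ∀ i, ∑ a, g i a * ((if i = j then α a else 1) * (if i = j' then β a else 1)) =
      (if i = j then ∑ a, g j a * α a else 1) * (if i = j' then ∑ a, g j' a * β a else 1) := by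
    intro i
    by_cases h : i = j
    · subst h; simp [hj]
    · by_cases h' : i = j'
      · subst h'; simp [h]
      · simp [h, h', hg]
  simp_rw [h2]
  rw [Finset.prod_mul_distrib]
  simp

theorem sum_pi_one {ι A : Type} [DecidableEq ι] [Fintype ι] [Fintype A] (g : ι → A → ℝ)
    (hg : ∀ i, ∑ a, g i a = 1) (j : ι) (α : A → ℝ) :
    ∑ c : ι → A, (∏ i, g i (c i)) * α (c j) = ∑ a, g j a * α a := by
  have h1 : ∀ c : ι → A, (∏ i, g i (c i)) * α (c j) =
      ∏ i, (g i (c i) * (if i = j then α (c i) else 1)) := by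
    intro c
    rw [Finset.prod_mul_distrib]
    simp
  simp_rw [h1]
  rw [sum_pi_prod (fun i a => g i a * (if i = j then α a else 1))]
  have h2 : ∀ i, ∑ a, g i a * (if i = j then α a else 1) =
      (if i = j then ∑ a, g j a * α a else 1) := by
    intro i
    by_cases h : i = j
    · subst h; simp
    · simp [h, hg]
  simp_rw [h2]
  simp

theorem sum_pi_two {ι A : Type} [DecidableEq ι] [Fintype ι] [Fintype A] (g : ι → A → ℝ)
    (hg : ∀ i, ∑ a, g i a = 1) {j j' : ι} (hj : j ≠ j') (φ : A → A → ℝ) :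
    ∑ c : ι → A, (∏ i, g i (c i)) * φ (c j) (c j') =
      ∑ a, ∑ b, g j a * g j' b * φ a b := by
  have h1 : ∀ c : ι → A, (∏ i, g i (c i)) * φ (c j) (c j') =
      ∑ a, (∏ i, g i (c i)) * ((if c j = a then 1 else 0) * φ a (c j')) := by
    intro c
    simp
  simp_rw [h1]
  rw [Finset.sum_comm]
  refine Finset.sum_congr rfl fun a _ => ?_
  rw [sum_pi_sep g hg hj (fun b => if b = a then 1 else 0) (fun b => φ a b)]
  simp [Finset.mul_sum, mul_assoc]

/-! ### The random encoder -/

section Enc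
variable {U W X : Type} [Fintype U] [Fintype W] [Fintype X]

/-- a codebook together with a table selecting, for each source word, an index and an input word -/
abbrev Enc (U W X : Type) (M : ℕ) := (Fin M → W) × (U → Option (Fin M × X))

/-- truncated likelihood weight -/
noncomputable def ell (M : ℕ) (r : W → ℝ) (k : U → W → X → ℝ) (E : U → W → Prop)
    (u : U) (w : W) (x : X) : ℝ := if E u w then k u w x / (M * r w) else 0

noncomputable def ellSum (M : ℕ) (r : W → ℝ) (k : U → W → X → ℝ) (E : U → W → Prop)
    (C : Fin M → W) (u : U) : ℝ := ∑ mx : Fin M × X, ell M r k E u (C mx.1) mx.2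

/-- law of the selected pair -/
noncomputable def sel (M : ℕ) (r : W → ℝ) (k : U → W → X → ℝ) (E : U → W → Prop)
    (C : Fin M → W) (u : U) (o : Option (Fin M × X)) : ℝ :=
  o.elim (1 - ellSum M r k E C u / max 1 (ellSum M r k E C u))
    (fun mx => ell M r k E u (C mx.1) mx.2 / max 1 (ellSum M r k E C u))

noncomputable def wt (M : ℕ) (r : W → ℝ) (k : U → W → X → ℝ) (E : U → W → Prop)
    (c : Enc U W X M) : ℝ := (∏ m, r (c.1 m)) * ∏ u, sel M r k E c.1 u (c.2 u)

variable {M : ℕ} {r : W → ℝ} {k : U → W → X → ℝ} {E : U → W → Prop}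

theorem ell_nonneg (hr : ∀ w, 0 ≤ r w) (hk : ∀ u w x, 0 ≤ k u w x) (u : U) (w : W) (x : X) :
    0 ≤ ell M r k E u w x := by
  unfold ell
  split_ifs
  · exact div_nonneg (hk _ _ _) (mul_nonneg (Nat.cast_nonneg _) (hr _))
  · exact le_rfl

theorem ell_le (hr : ∀ w, 0 ≤ r w) (hk : ∀ u w x, 0 ≤ k u w x) (u : U) (w : W) (x : X) :
    ell M r k E u w x ≤ k u w x / (M * r w) := by
  unfold ell
  split_ifs
  · exact le_rfl
  · exact div_nonneg (hk _ _ _) (mul_nonneg (Nat.cast_nonneg _) (hr _))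

theorem ellSum_nonneg (hr : ∀ w, 0 ≤ r w) (hk : ∀ u w x, 0 ≤ k u w x) (C : Fin M → W) (u : U) :
    0 ≤ ellSum M r k E C u := Finset.sum_nonneg fun _ _ => ell_nonneg hr hk _ _ _

theorem sel_nonneg (hr : ∀ w, 0 ≤ r w) (hk : ∀ u w x, 0 ≤ k u w x) (C : Fin M → W) (u : U)
    (o : Option (Fin M × X)) : 0 ≤ sel M r k E C u o := by
  have hpos : (0 : ℝ) < max 1 (ellSum M r k E C u) := lt_of_lt_of_le one_pos (le_max_left _ _)
  cases o with
  | none =>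
    simp only [sel, Option.elim]
    rw [sub_nonneg, div_le_one hpos]
    exact le_max_right _ _
  | some mx =>
    simp only [sel, Option.elim]
    exact div_nonneg (ell_nonneg hr hk _ _ _) hpos.le

theorem sel_some_le (hr : ∀ w, 0 ≤ r w) (hk : ∀ u w x, 0 ≤ k u w x) (C : Fin M → W) (u : U)
    (mx : Fin M × X) : sel M r k E C u (some mx) ≤ k u (C mx.1) mx.2 / (M * r (C mx.1)) := by
  simp only [sel, Option.elim]
  refine le_trans (div_le_self (ell_nonneg hr hk _ _ _) (le_max_left _ _)) (ell_le hr hk _ _ _)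

theorem sel_sum (C : Fin M → W) (u : U) : ∑ o, sel M r k E C u o = 1 := by
  rw [Fintype.sum_option]
  simp only [sel, Option.elim]
  rw [← Finset.sum_div]
  change _ + ellSum M r k E C u / _ = 1
  ring

theorem wt_nonneg (hr : ∀ w, 0 ≤ r w) (hk : ∀ u w x, 0 ≤ k u w x) (c : Enc U W X M) :
    0 ≤ wt M r k E c :=
  mul_nonneg (Finset.prod_nonneg fun _ _ => hr _)
    (Finset.prod_nonneg fun _ _ => sel_nonneg hr hk _ _ _)

theorem sum_wt_eq (f : Enc U W X M → ℝ) : ∑ c, wt M r k E c * f c =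
    ∑ C : Fin M → W, (∏ m, r (C m)) *
      ∑ F : U → Option (Fin M × X), (∏ u, sel M r k E C u (F u)) * f (C, F) := by
  rw [Fintype.sum_prod_type]
  refine Finset.sum_congr rfl fun C _ => ?_
  rw [Finset.mul_sum]
  refine Finset.sum_congr rfl fun F _ => ?_
  simp only [wt]; ring

theorem wt_sum (hr1 : ∑ w, r w = 1) : ∑ c, wt M r k E c = 1 := by
  have h := sum_wt_eq (M := M) (r := r) (k := k) (E := E) (fun _ => 1)
  simp only [mul_one] at h
  rw [h]
  have : ∀ C : Fin M → W, ∑ F : U → Option (Fin M × X), (∏ u, sel M r k E C u (F u)) = 1 := by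
    intro C
    rw [sum_pi_prod (fun u o => sel M r k E C u o)]
    simp only [sel_sum, Finset.prod_const_one]
  simp only [this, mul_one]
  rw [sum_pi_prod (fun _ w => r w)]
  simp [hr1]

/-- one codeword -/
theorem wt_one (hr : ∀ w, 0 ≤ r w) (hr1 : ∑ w, r w = 1) (hk : ∀ u w x, 0 ≤ k u w x)
    (hM : 0 < M) (u : U) (φ : W → X → ℝ) (hφ : ∀ w x, 0 ≤ φ w x) :
    ∑ c, wt M r k E c * ((c.2 u).elim 0 fun mx => φ (c.1 mx.1) mx.2) ≤
      ∑ w, ∑ x, k u w x * φ w x := by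
  rw [sum_wt_eq]
  have hM' : (0 : ℝ) < M := by exact_mod_cast hM
  calc _ = ∑ C : Fin M → W, (∏ m, r (C m)) * ∑ mx : Fin M × X,
            sel M r k E C u (some mx) * φ (C mx.1) mx.2 := by
        refine Finset.sum_congr rfl fun C _ => ?_
        congr 1
        rw [sum_pi_one (fun u o => sel M r k E C u o) (fun u => sel_sum C u) u
          (fun o => o.elim 0 fun mx => φ (C mx.1) mx.2), Fintype.sum_option]
        simp
    _ ≤ ∑ C : Fin M → W, (∏ m, r (C m)) * ∑ mx : Fin M × X,
            k u (C mx.1) mx.2 / (M * r (C mx.1)) * φ (C mx.1) mx.2 := by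
        gcongr with C _ mx _
        · exact Finset.prod_nonneg fun _ _ => hr _
        · exact hφ _ _
        · exact sel_some_le hr hk _ _ _
    _ = ∑ mx : Fin M × X, ∑ w, r w * (k u w mx.2 / (M * r w) * φ w mx.2) := by
        simp_rw [Finset.mul_sum]
        rw [Finset.sum_comm]
        refine Finset.sum_congr rfl fun mx _ => ?_
        exact sum_pi_one (fun _ w => r w) (fun _ => hr1) mx.1
          (fun w => k u w mx.2 / (M * r w) * φ w mx.2)
    _ ≤ ∑ mx : Fin M × X, ∑ w, (1 / M) * (k u w mx.2 * φ w mx.2) := by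
        refine Finset.sum_le_sum fun mx _ => Finset.sum_le_sum fun w _ => ?_
        by_cases h0 : r w = 0
        · rw [h0, zero_mul]
          exact mul_nonneg (by positivity) (mul_nonneg (hk _ _ _) (hφ _ _))
        · apply le_of_eq; field_simp
    _ = _ := by
        rw [Fintype.sum_prod_type, Finset.sum_comm]
        simp only [Finset.sum_const, Finset.card_univ, Fintype.card_fin, nsmul_eq_mul]
        rw [Finset.sum_comm (s := (Finset.univ : Finset W))]
        refine Finset.sum_congr rfl fun x _ => ?_
        rw [← Finset.mul_sum]
        field_simp

/-- two different source words -/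
theorem wt_two (hr : ∀ w, 0 ≤ r w) (hr1 : ∑ w, r w = 1) (hk : ∀ u w x, 0 ≤ k u w x)
    (hM : 0 < M) {u u' : U} (huu : u ≠ u') (φ : W → X → W → X → ℝ)
    (hφ : ∀ w x w' x', 0 ≤ φ w x w' x') :
    ∑ c, wt M r k E c * ((c.2 u).elim 0 fun mx => (c.2 u').elim 0 fun mx' =>
        φ (c.1 mx.1) mx.2 (c.1 mx'.1) mx'.2) ≤
      (∑ w, ∑ x, ∑ x', 1 / M * (k u w x * (k u' w x' / r w)) * φ w x w x') +
      ∑ w, ∑ x, ∑ w', ∑ x', k u w x * k u' w' x' * φ w x w' x' := by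
  rw [sum_wt_eq]
  have hM' : (0 : ℝ) < M := by exact_mod_cast hM
  calc _ = ∑ C : Fin M → W, (∏ m, r (C m)) * ∑ mx : Fin M × X, ∑ mx' : Fin M × X,
            sel M r k E C u (some mx) * sel M r k E C u' (some mx') *
              φ (C mx.1) mx.2 (C mx'.1) mx'.2 := by
        refine Finset.sum_congr rfl fun C _ => ?_
        congr 1
        rw [sum_pi_two (fun u o => sel M r k E C u o) (fun u => sel_sum C u) huu
          (fun o o' => o.elim 0 fun mx => o'.elim 0 fun mx' =>
            φ (C mx.1) mx.2 (C mx'.1) mx'.2), Fintype.sum_option]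
        simp [Fintype.sum_option]
    _ ≤ ∑ C : Fin M → W, (∏ m, r (C m)) * ∑ mx : Fin M × X, ∑ mx' : Fin M × X,
            (k u (C mx.1) mx.2 / (M * r (C mx.1))) * (k u' (C mx'.1) mx'.2 / (M * r (C mx'.1))) *
              φ (C mx.1) mx.2 (C mx'.1) mx'.2 := by
        gcongr with C _ mx _ mx' _
        · exact Finset.prod_nonneg fun _ _ => hr _
        · exact hφ _ _ _ _
        · exact sel_nonneg hr hk _ _ _
        · exact div_nonneg (hk _ _ _) (mul_nonneg (Nat.cast_nonneg _) (hr _))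
        · exact sel_some_le hr hk _ _ _
        · exact sel_some_le hr hk _ _ _
    _ = ∑ mx : Fin M × X, ∑ mx' : Fin M × X, ∑ C : Fin M → W, (∏ m, r (C m)) *
            ((k u (C mx.1) mx.2 / (M * r (C mx.1))) * (k u' (C mx'.1) mx'.2 / (M * r (C mx'.1))) *
              φ (C mx.1) mx.2 (C mx'.1) mx'.2) := by
        simp_rw [Finset.mul_sum]
        rw [Finset.sum_comm]
        refine Finset.sum_congr rfl fun mx _ => ?_
        rw [Finset.sum_comm]
    _ ≤ ∑ mx : Fin M × X, ∑ mx' : Fin M × X,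
          ((if mx'.1 = mx.1 then 1 / M * ∑ w, 1 / M * (k u w mx.2 * (k u' w mx'.2 / r w)) *
              φ w mx.2 w mx'.2 else 0) +
            1 / M * (1 / M) * ∑ w, ∑ w', k u w mx.2 * k u' w' mx'.2 * φ w mx.2 w' mx'.2) := by
        gcongr with mx _ mx' _
        have hpos2 : 0 ≤ 1 / (M : ℝ) * (1 / M) *
            ∑ w, ∑ w', k u w mx.2 * k u' w' mx'.2 * φ w mx.2 w' mx'.2 := by
          refine mul_nonneg (by positivity) (Finset.sum_nonneg fun w _ => Finset.sum_nonneg fun w' _ =>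
            mul_nonneg (mul_nonneg (hk _ _ _) (hk _ _ _)) (hφ _ _ _ _))
        by_cases hm : mx'.1 = mx.1
        · rw [if_pos hm, hm]
          refine le_add_of_le_of_nonneg ?_ hpos2
          rw [sum_pi_one (fun _ w => r w) (fun _ => hr1) mx.1
            (fun w => k u w mx.2 / (M * r w) * (k u' w mx'.2 / (M * r w)) * φ w mx.2 w mx'.2),
            Finset.mul_sum]
          refine Finset.sum_le_sum fun w _ => ?_
          by_cases h0 : r w = 0
          · simp [h0]
          · apply le_of_eq; field_simp
        · rw [if_neg hm, zero_add]
          rw [sum_pi_two (fun _ w => r w) (fun _ => hr1) (Ne.symm hm)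
            (fun w w' => k u w mx.2 / (M * r w) * (k u' w' mx'.2 / (M * r w')) *
              φ w mx.2 w' mx'.2), Finset.mul_sum]
          refine Finset.sum_le_sum fun w _ => ?_
          rw [Finset.mul_sum]
          refine Finset.sum_le_sum fun w' _ => ?_
          have hn : 0 ≤ 1 / (M : ℝ) * (1 / M) * (k u w mx.2 * k u' w' mx'.2 * φ w mx.2 w' mx'.2) :=
            mul_nonneg (by positivity) (mul_nonneg (mul_nonneg (hk _ _ _) (hk _ _ _)) (hφ _ _ _ _))
          by_cases h0 : r w = 0
          · simpa [h0] using hn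
          · by_cases h0' : r w' = 0
            · simpa [h0'] using hn
            · apply le_of_eq; field_simp
    _ = _ := by
        simp_rw [Finset.sum_add_distrib]
        congr 1
        · rw [Fintype.sum_prod_type]
          simp_rw [Fintype.sum_prod_type, ]
          have : ∀ (m : Fin M) (x : X), (∑ m' : Fin M, ∑ x' : X, (if m' = m then
              1 / (M : ℝ) * ∑ w, 1 / M * (k u w x * (k u' w x' / r w)) * φ w x w x' else 0)) =
              ∑ x' : X, 1 / (M : ℝ) * ∑ w, 1 / M * (k u w x * (k u' w x' / r w)) * φ w x w x' := by
            intro m x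
            rw [Finset.sum_comm]
            simp
          simp_rw [this]
          simp only [Finset.sum_const, Finset.card_univ, Fintype.card_fin, nsmul_eq_mul]
          simp_rw [← Finset.mul_sum]
          rw [← mul_assoc, mul_one_div_cancel hM'.ne', one_mul]
          rw [Finset.sum_comm (s := (Finset.univ : Finset W))]
          refine Finset.sum_congr rfl fun x _ => ?_
          rw [Finset.sum_comm]
        · simp_rw [← Finset.mul_sum, Fintype.sum_prod_type]
          simp only [Finset.sum_const, Finset.card_univ, Fintype.card_fin, nsmul_eq_mul]
          simp_rw [← Finset.mul_sum]
          have : ∀ z : ℝ, 1 / (M : ℝ) * (1 / M) * (M * (M * z)) = z := by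
            intro z; field_simp
          rw [this, Finset.sum_comm (s := (Finset.univ : Finset W))]
          refine Finset.sum_congr rfl fun x _ => ?_
          rw [Finset.sum_comm]
          refine Finset.sum_congr rfl fun w _ => ?_
          rw [Finset.sum_comm]

/-- the true codeword and an arbitrary codeword -/
theorem wt_wrong (hr : ∀ w, 0 ≤ r w) (hr1 : ∑ w, r w = 1) (hk : ∀ u w x, 0 ≤ k u w x)
    (hM : 0 < M) (u : U) (φ : W → X → W → ℝ)
    (hφ : ∀ w x w', 0 ≤ φ w x w') :
    ∑ c, wt M r k E c * ((c.2 u).elim 0 fun mx => ∑ m', φ (c.1 mx.1) mx.2 (c.1 m')) ≤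
      (∑ w, ∑ x, k u w x * φ w x w) +
      M * ∑ w, ∑ x, ∑ w', k u w x * r w' * φ w x w' := by
  rw [sum_wt_eq]
  have hM' : (0 : ℝ) < M := by exact_mod_cast hM
  calc _ = ∑ C : Fin M → W, (∏ m, r (C m)) * ∑ mx : Fin M × X, ∑ m' : Fin M,
            sel M r k E C u (some mx) * φ (C mx.1) mx.2 (C m') := by
        refine Finset.sum_congr rfl fun C _ => ?_
        congr 1
        rw [sum_pi_one (fun u o => sel M r k E C u o) (fun u => sel_sum C u) u
          (fun o => o.elim 0 fun mx => ∑ m', φ (C mx.1) mx.2 (C m')), Fintype.sum_option]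
        simp [Finset.mul_sum]
    _ ≤ ∑ C : Fin M → W, (∏ m, r (C m)) * ∑ mx : Fin M × X, ∑ m' : Fin M,
            (k u (C mx.1) mx.2 / (M * r (C mx.1))) * φ (C mx.1) mx.2 (C m') := by
        gcongr with C _ mx _ m' _
        · exact Finset.prod_nonneg fun _ _ => hr _
        · exact hφ _ _ _
        · exact sel_some_le hr hk _ _ _
    _ = ∑ mx : Fin M × X, ∑ m' : Fin M, ∑ C : Fin M → W, (∏ m, r (C m)) *
            ((k u (C mx.1) mx.2 / (M * r (C mx.1))) * φ (C mx.1) mx.2 (C m')) := by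
        simp_rw [Finset.mul_sum]
        rw [Finset.sum_comm]
        refine Finset.sum_congr rfl fun mx _ => ?_
        rw [Finset.sum_comm]
    _ ≤ ∑ mx : Fin M × X, ∑ m' : Fin M,
          ((if m' = mx.1 then 1 / M * ∑ w, k u w mx.2 * φ w mx.2 w else 0) +
            1 / M * ∑ w, ∑ w', k u w mx.2 * r w' * φ w mx.2 w') := by
        gcongr with mx _ m' _
        have hpos2 : 0 ≤ 1 / (M : ℝ) * ∑ w, ∑ w', k u w mx.2 * r w' * φ w mx.2 w' := by
          refine mul_nonneg (by positivity) (Finset.sum_nonneg fun w _ => Finset.sum_nonneg fun w' _ =>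
            mul_nonneg (mul_nonneg (hk _ _ _) (hr _)) (hφ _ _ _))
        by_cases hm : m' = mx.1
        · rw [if_pos hm, hm]
          refine le_add_of_le_of_nonneg ?_ hpos2
          rw [sum_pi_one (fun _ w => r w) (fun _ => hr1) mx.1
            (fun w => k u w mx.2 / (M * r w) * φ w mx.2 w),
            Finset.mul_sum]
          refine Finset.sum_le_sum fun w _ => ?_
          by_cases h0 : r w = 0
          · rw [h0, zero_mul]
            exact mul_nonneg (by positivity) (mul_nonneg (hk _ _ _) (hφ _ _ _))
          · apply le_of_eq; field_simp
        · rw [if_neg hm, zero_add]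
          rw [sum_pi_two (fun _ w => r w) (fun _ => hr1) (Ne.symm hm)
            (fun w w' => k u w mx.2 / (M * r w) * φ w mx.2 w'), Finset.mul_sum]
          refine Finset.sum_le_sum fun w _ => ?_
          rw [Finset.mul_sum]
          refine Finset.sum_le_sum fun w' _ => ?_
          have hn : 0 ≤ 1 / (M : ℝ) * (k u w mx.2 * r w' * φ w mx.2 w') :=
            mul_nonneg (by positivity) (mul_nonneg (mul_nonneg (hk _ _ _) (hr _)) (hφ _ _ _))
          by_cases h0 : r w = 0
          · simpa [h0] using hn
          · apply le_of_eq; field_simp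
    _ = _ := by
        simp_rw [Finset.sum_add_distrib]
        congr 1
        · simp only [Finset.sum_ite_eq', Finset.mem_univ, if_true]
          rw [Fintype.sum_prod_type]
          simp only [Finset.sum_const, Finset.card_univ, Fintype.card_fin, nsmul_eq_mul]
          simp_rw [← Finset.mul_sum]
          rw [← mul_assoc, mul_one_div_cancel hM'.ne', one_mul]
          rw [Finset.sum_comm]
        · simp only [Finset.sum_const, Finset.card_univ, Fintype.card_fin, nsmul_eq_mul]
          rw [Fintype.sum_prod_type]
          simp only [Finset.sum_const, Finset.card_univ, Fintype.card_fin, nsmul_eq_mul]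
          simp_rw [← Finset.mul_sum]
          have : ∀ z : ℝ, (M : ℝ) * (M * (1 / (M : ℝ) * z)) = M * z := by
            intro z; field_simp
          rw [this, Finset.sum_comm]

end Enc

set_option linter.unusedSectionVars false

/-- variance of an i.i.d. sum -/
theorem iid_var {W : Type} [Fintype W] (M : ℕ) (hM : 0 < M) (r : W → ℝ)
    (hr1 : ∑ w, r w = 1) (h : W → ℝ) (μ : ℝ) (hμ : M * ∑ w, r w * h w = μ) :
    ∑ C : Fin M → W, (∏ m, r (C m)) * (∑ m, h (C m) - μ) ^ 2 ≤ M * ∑ w, r w * h w ^ 2 := by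
  have hM' : (0 : ℝ) < M := by exact_mod_cast hM
  set c := ∑ w, r w * h w with hc
  have hg0 : ∑ w, r w * (h w - c) = 0 := by
    simp_rw [mul_sub]
    rw [Finset.sum_sub_distrib, ← Finset.sum_mul, hr1, ← hc]; ring
  have h1 : ∀ C : Fin M → W, (∏ m, r (C m)) * (∑ m, h (C m) - μ) ^ 2 =
      ∑ m, ∑ m', (∏ m, r (C m)) * ((h (C m) - c) * (h (C m') - c)) := by
    intro C
    have : ∑ m, h (C m) - μ = ∑ m, (h (C m) - c) := by
      rw [Finset.sum_sub_distrib, ← hμ]; simp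
    rw [this, sq, Finset.sum_mul_sum, Finset.mul_sum]
    refine Finset.sum_congr rfl fun m _ => ?_
    rw [Finset.mul_sum]
  simp_rw [h1]
  rw [Finset.sum_comm]
  have h2 : ∀ m : Fin M, ∑ C : Fin M → W, ∑ m', (∏ m, r (C m)) * ((h (C m) - c) * (h (C m') - c))
      ≤ ∑ w, r w * h w ^ 2 := by
    intro m
    rw [Finset.sum_comm, Finset.sum_eq_single m]
    · rw [sum_pi_one (fun _ w => r w) (fun _ => hr1) m (fun w => (h w - c) * (h w - c))]
      have : ∑ w, r w * ((h w - c) * (h w - c)) = ∑ w, r w * h w ^ 2 - c ^ 2 := by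
        have e : ∀ w, r w * ((h w - c) * (h w - c)) = r w * h w ^ 2 - 2 * c * (r w * h w)
            + c ^ 2 * r w := by intro w; ring
        simp_rw [e]
        rw [Finset.sum_add_distrib, Finset.sum_sub_distrib, ← Finset.mul_sum, ← Finset.mul_sum,
          hr1, ← hc]; ring
      rw [this]; nlinarith [sq_nonneg c]
    · intro m' _ hm
      rw [sum_pi_sep (fun _ w => r w) (fun _ => hr1) (Ne.symm hm) (fun w => h w - c)
        (fun w => h w - c), hg0, zero_mul]
    · simp
  calc _ ≤ ∑ m : Fin M, ∑ w, r w * h w ^ 2 := Finset.sum_le_sum fun m _ => h2 m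
    _ = _ := by simp

section Fail
variable {U W X : Type} [Fintype U] [Fintype W] [Fintype X]
  {M : ℕ} {r : W → ℝ} {k : U → W → X → ℝ} {E : U → W → Prop}

theorem wt_fail_one (hr : ∀ w, 0 ≤ r w) (hr1 : ∑ w, r w = 1) (hk : ∀ u w x, 0 ≤ k u w x)
    (hM : 0 < M) (u : U) (hk1 : ∑ w, ∑ x, k u w x = 1)
    (hr0 : ∀ w, r w = 0 → ∀ x, k u w x = 0) (s δ : ℝ) (hδ : 0 < δ)
    (hE : ∀ w, E u w → ∑ x, k u w x ≤ s * r w) (hs : 0 ≤ s) :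
    ∑ c, wt M r k E c * (if c.2 u = none then 1 else 0) ≤
      (∑ w, ∑ x, k u w x * (if E u w then 0 else 1)) + (δ + s / (M * δ)) := by
  have hM' : (0 : ℝ) < M := by exact_mod_cast hM
  rw [sum_wt_eq]
  set h : W → ℝ := fun w => ∑ x, ell M r k E u w x with hh
  set μ : ℝ := ∑ w, ∑ x, k u w x * (if E u w then 1 else 0) with hμ
  have hμc : (∑ w, ∑ x, k u w x * (if E u w then 0 else 1)) = 1 - μ := by
    have e1 : 1 - μ = (∑ w, ∑ x, k u w x) - μ := by rw [hk1]
    rw [e1, hμ, ← Finset.sum_sub_distrib]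
    refine Finset.sum_congr rfl fun w _ => ?_
    rw [← Finset.sum_sub_distrib]
    refine Finset.sum_congr rfl fun x _ => ?_
    split_ifs <;> ring
  have hμ1 : 0 ≤ 1 - μ := by
    rw [← hμc]
    refine Finset.sum_nonneg fun w _ => Finset.sum_nonneg fun x _ => mul_nonneg (hk _ _ _) ?_
    split_ifs <;> norm_num
  have hell : ∀ w, h w = (if E u w then (∑ x, k u w x) / (M * r w) else 0) := by
    intro w
    simp only [hh, ell]
    split_ifs
    · rw [Finset.sum_div]
    · simp
  have hmean : M * ∑ w, r w * h w = μ := by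
    rw [hμ, Finset.mul_sum]
    refine Finset.sum_congr rfl fun w _ => ?_
    rw [hell w, ← Finset.sum_mul]
    split_ifs
    · by_cases h0 : r w = 0
      · simp [h0, hr0 w h0]
      · field_simp
    · simp
  have hsq : M * ∑ w, r w * h w ^ 2 ≤ s / M := by
    rw [Finset.mul_sum]
    calc _ ≤ ∑ w, (s / M) * ∑ x, k u w x := by
          refine Finset.sum_le_sum fun w _ => ?_
          have hK : 0 ≤ ∑ x, k u w x := Finset.sum_nonneg fun x _ => hk _ _ _
          rw [hell w]
          split_ifs with hEw
          · by_cases h0 : r w = 0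
            · simp [h0, hr0 w h0]
            · have hrp : 0 < r w := lt_of_le_of_ne (hr w) (Ne.symm h0)
              have e : (M : ℝ) * (r w * ((∑ x, k u w x) / (M * r w)) ^ 2) =
                ((∑ x, k u w x) / r w) / M * ∑ x, k u w x := by field_simp
              rw [e]
              gcongr
              rw [div_le_iff₀ hrp]; exact hE w hEw
          · simp; positivity
      _ = s / M := by rw [← Finset.mul_sum, hk1, mul_one]
  have hS : ∀ C : Fin M → W, ellSum M r k E C u = ∑ m, h (C m) := by
    intro C; rw [ellSum, Fintype.sum_prod_type]
  have hstep : ∀ C : Fin M → W, ∑ F : U → Option (Fin M × X), (∏ u, sel M r k E C u (F u)) *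
      (if F u = none then 1 else 0) ≤ (1 - μ) + δ + (1 / δ) * (∑ m, h (C m) - μ) ^ 2 := by
    intro C
    rw [sum_pi_one (fun u o => sel M r k E C u o) (fun u => sel_sum C u) u
      (fun o => if o = none then 1 else 0), Fintype.sum_option]
    simp only [reduceCtorEq, if_true, if_false, mul_one, mul_zero, Finset.sum_const_zero, add_zero]
    simp only [sel, Option.elim, hS]
    set S := ∑ m, h (C m)
    have hq : 0 ≤ δ + (S - μ) + (1 / δ) * (S - μ) ^ 2 := by
      have e : δ + (S - μ) + (1 / δ) * (S - μ) ^ 2 = (1 / δ) * ((S - μ + δ / 2) ^ 2 + 3 / 4 * δ ^ 2) := by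
        field_simp; ring
      rw [e]; positivity
    rcases le_total S 1 with h1 | h1
    · rw [max_eq_left h1, div_one]; linarith
    · rw [max_eq_right h1, div_self (by linarith)]
      have : 0 ≤ (1 / δ) * (S - μ) ^ 2 := by positivity
      linarith
  have hone : ∑ C : Fin M → W, ∏ m, r (C m) = 1 := by
    rw [sum_pi_prod (fun _ w => r w)]; simp [hr1]
  calc _ ≤ ∑ C : Fin M → W, (∏ m, r (C m)) * ((1 - μ) + δ + (1 / δ) * (∑ m, h (C m) - μ) ^ 2) := by
        refine Finset.sum_le_sum fun C _ => mul_le_mul_of_nonneg_left (hstep C) ?_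
        exact Finset.prod_nonneg fun _ _ => hr _
    _ = ((1 - μ) + δ) + (1 / δ) * ∑ C : Fin M → W, (∏ m, r (C m)) * (∑ m, h (C m) - μ) ^ 2 := by
        simp_rw [mul_add _ ((1 - μ) + δ)]
        rw [Finset.sum_add_distrib, ← Finset.sum_mul, hone, one_mul, Finset.mul_sum]
        congr 1
        refine Finset.sum_congr rfl fun C _ => ?_
        ring
    _ ≤ ((1 - μ) + δ) + (1 / δ) * (s / M) := by
        have := (iid_var M hM r hr1 h μ hmean).trans hsq
        gcongr
    _ = _ := by rw [hμc]; field_simp; ring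

theorem wt_fail {p : U → ℝ} (hp : ∀ u, 0 ≤ p u) (hp1 : ∑ u, p u = 1)
    (hr : ∀ w, 0 ≤ r w) (hr1 : ∑ w, r w = 1) (hk : ∀ u w x, 0 ≤ k u w x)
    (hM : 0 < M) (hk1 : ∀ u, ∑ w, ∑ x, k u w x = 1)
    (hr0 : ∀ u w, p u ≠ 0 → r w = 0 → ∀ x, k u w x = 0) (s δ : ℝ) (hδ : 0 < δ) (hs : 0 ≤ s)
    (hE : ∀ u w, E u w → ∑ x, k u w x ≤ s * r w) :
    ∑ u, p u * ∑ c, wt M r k E c * (if c.2 u = none then 1 else 0) ≤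
      (∑ u, ∑ w, ∑ x, p u * k u w x * (if E u w then 0 else 1)) + (δ + s / (M * δ)) := by
  calc _ ≤ ∑ u, p u * ((∑ w, ∑ x, k u w x * (if E u w then 0 else 1)) + (δ + s / (M * δ))) := by
        refine Finset.sum_le_sum fun u _ => ?_
        by_cases h0 : p u = 0
        · simp [h0]
        · exact mul_le_mul_of_nonneg_left
            (wt_fail_one hr hr1 hk hM u (hk1 u) (fun w => hr0 u w h0) s δ hδ (hE u) hs) (hp u)
    _ = _ := by
        simp_rw [mul_add _ _ (δ + s / (M * δ))]
        rw [Finset.sum_add_distrib, ← Finset.sum_mul, hp1, one_mul]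
        simp_rw [Finset.mul_sum, mul_assoc]

end Fail

set_option linter.unusedSectionVars false

/-! ### Reordering sums -/

theorem perm_a {A B C D E : Type} [Fintype A] [Fintype B] [Fintype C] [Fintype D] [Fintype E]
    (f : A → B → C → D → E → ℝ) :
    ∑ a, ∑ b, ∑ c, ∑ d, ∑ e, f a b c d e = ∑ b, ∑ d, ∑ e, ∑ a, ∑ c, f a b c d e := by
  have := Fintype.sum_equiv (⟨fun t => (t.2.1, t.2.2.2.1, t.2.2.2.2, t.1, t.2.2.1),
    fun t => (t.2.2.2.1, t.1, t.2.2.2.2, t.2.1, t.2.2.1), fun _ => rfl, fun _ => rfl⟩ :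
      A × B × C × D × E ≃ B × D × E × A × C) (fun t => f t.1 t.2.1 t.2.2.1 t.2.2.2.1 t.2.2.2.2)
      (fun t => f t.2.2.2.1 t.1 t.2.2.2.2 t.2.1 t.2.2.1) (fun _ => rfl)
  simpa only [Fintype.sum_prod_type] using this

theorem perm_c {A B C D E F : Type} [Fintype A] [Fintype B] [Fintype C] [Fintype D] [Fintype E]
    [Fintype F] (f : A → B → C → D → E → F → ℝ) :
    ∑ a, ∑ b, ∑ c, ∑ d, ∑ e, ∑ g, f a b c d e g = ∑ b, ∑ d, ∑ e, ∑ a, ∑ c, ∑ g, f a b c d e g := by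
  have := perm_a (fun a b c d e => ∑ g, f a b c d e g)
  simpa using this

theorem perm_b {A B C D E F : Type} [Fintype A] [Fintype B] [Fintype C] [Fintype D] [Fintype E]
    [Fintype F] (f : A → B → C → D → E → F → ℝ) :
    ∑ a, ∑ b, ∑ c, ∑ d, ∑ e, ∑ g, f a b c d e g = ∑ d, ∑ e, ∑ g, ∑ a, ∑ b, ∑ c, f a b c d e g := by
  have := Fintype.sum_equiv (⟨fun t => (t.2.2.2.1, t.2.2.2.2.1, t.2.2.2.2.2, t.1, t.2.1, t.2.2.1),
    fun t => (t.2.2.2.1, t.2.2.2.2.1, t.2.2.2.2.2, t.1, t.2.1, t.2.2.1),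
      fun _ => rfl, fun _ => rfl⟩ :
      A × B × C × D × E × F ≃ D × E × F × A × B × C)
      (fun t => f t.1 t.2.1 t.2.2.1 t.2.2.2.1 t.2.2.2.2.1 t.2.2.2.2.2)
      (fun t => f t.2.2.2.1 t.2.2.2.2.1 t.2.2.2.2.2 t.1 t.2.1 t.2.2.1) (fun _ => rfl)
  simpa only [Fintype.sum_prod_type] using this

theorem perm_d {A B C D E F H : Type} [Fintype A] [Fintype B] [Fintype C] [Fintype D] [Fintype E]
    [Fintype F] [Fintype H] (f : A → B → C → D → E → F → H → ℝ) :
    ∑ a, ∑ b, ∑ c, ∑ d, ∑ e, ∑ g, ∑ h, f a b c d e g h =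
      ∑ d, ∑ e, ∑ g, ∑ a, ∑ b, ∑ c, ∑ h, f a b c d e g h := by
  have := perm_b (fun a b c d e g => ∑ h, f a b c d e g h)
  simpa using this

/-! ### Marginals -/
section Recv
variable {U W X Z A U' X' : Type} [Fintype U] [Fintype W] [Fintype X] [Fintype Z] [Fintype A]
  [Fintype U'] [Fintype X']

noncomputable def rr (p : U → ℝ) (k : U → W → X → ℝ) (w : W) : ℝ := ∑ u, ∑ x, p u * k u w x

noncomputable def GG (k' : U' → Z → X' → ℝ) (Γ : U' → X → X' → A → ℝ) (x : X) (z : Z) (a : A) : ℝ :=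
  ∑ u', ∑ x', k' u' z x' * Γ u' x x' a

noncomputable def Ja (p : U → ℝ) (k : U → W → X → ℝ) (G : X → Z → A → ℝ) (w : W) (z : Z) (a : A) : ℝ :=
  ∑ u, ∑ x, p u * k u w x * G x z a
noncomputable def Jb (p : U → ℝ) (k : U → W → X → ℝ) (G : X → Z → A → ℝ) (z : Z) (a : A) : ℝ :=
  ∑ u, ∑ w, ∑ x, p u * k u w x * G x z a
noncomputable def Jc (p : U → ℝ) (k : U → W → X → ℝ) (G : X → Z → A → ℝ) (w : W) (a : A) : ℝ :=
  ∑ u, ∑ x, ∑ z, p u * k u w x * G x z a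
noncomputable def Jd (p : U → ℝ) (k : U → W → X → ℝ) (G : X → Z → A → ℝ) (a : A) : ℝ :=
  ∑ u, ∑ w, ∑ x, ∑ z, p u * k u w x * G x z a

/-- The input word that is sent. -/
noncomputable def xof {M : ℕ} (x0 : X) (c : Enc U W X M) (u : U) : X := (c.2 u).elim x0 Prod.snd

def good {M M' : ℕ} (T : U → W → X → Z → A → Prop) (c : Enc U W X M) (c' : Enc U' Z X' M')
    (a : A) (u : U) : Prop :=
  ∃ (mx : Fin M × X) (m' : Fin M'), c.2 u = some mx ∧ T u (c.1 mx.1) mx.2 (c'.1 m') a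

noncomputable def dec {M M' : ℕ} (u0 : U) (T : U → W → X → Z → A → Prop) (c : Enc U W X M)
    (c' : Enc U' Z X' M') (a : A) : U :=
  if h : ∃ u, good T c c' a u then h.choose else u0

noncomputable def ind (P : Prop) : ℝ := if P then 1 else 0

theorem ind_nonneg (P : Prop) : 0 ≤ ind P := by unfold ind; split_ifs <;> norm_num

theorem dec_bound {M M' : ℕ} (u0 : U) (T : U → W → X → Z → A → Prop) (c : Enc U W X M)
    (c' : Enc U' Z X' M') (a : A) (x0 : X) (x0' : X') (Γ : U' → X → X' → A → ℝ)
    (hΓ : ∀ u x x' a, 0 ≤ Γ u x x' a) (u : U) (u' : U') :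
    Γ u' (xof x0 c u) (xof x0' c' u') a * (if dec u0 T c c' a = u then 0 else 1) ≤
      Γ u' (xof x0 c u) (xof x0' c' u') a * (if c.2 u = none then 1 else 0) +
      Γ u' (xof x0 c u) (xof x0' c' u') a * (if c'.2 u' = none then 1 else 0) +
      ((c.2 u).elim 0 fun mx => (c'.2 u').elim 0 fun mz =>
        Γ u' mx.2 mz.2 a * ind (¬ T u (c.1 mx.1) mx.2 (c'.1 mz.1) a)) +
      ∑ v : U, if u = v then 0 else
        ((c.2 u).elim 0 fun mx => (c.2 v).elim 0 fun mx' => (c'.2 u').elim 0 fun mz =>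
          ∑ m', Γ u' mx.2 mz.2 a * ind (T v (c.1 mx'.1) mx'.2 (c'.1 m') a)) := by
  have hlast : ∀ v : U, 0 ≤ (if u = v then 0 else
        ((c.2 u).elim 0 fun mx => (c.2 v).elim 0 fun mx' => (c'.2 u').elim 0 fun mz =>
          ∑ m', Γ u' mx.2 mz.2 a * ind (T v (c.1 mx'.1) mx'.2 (c'.1 m') a)) : ℝ) := by
    intro v
    split_ifs
    · exact le_rfl
    · cases c.2 u with
      | none => simp
      | some mx =>
        cases c.2 v with
        | none => simp
        | some mx' =>
          cases c'.2 u' with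
          | none => simp
          | some mz =>
            simp only [Option.elim]
            exact Finset.sum_nonneg fun _ _ => mul_nonneg (hΓ _ _ _ _) (ind_nonneg _)
  have hlast' := Finset.sum_nonneg (s := Finset.univ) fun v _ => hlast v
  have hG := hΓ u' (xof x0 c u) (xof x0' c' u') a
  have hite : (if dec u0 T c c' a = u then 0 else 1 : ℝ) ≤ 1 := by split_ifs <;> norm_num
  have hGite := mul_le_of_le_one_right hG hite
  rcases hcu : c.2 u with _ | mx
  · rw [hcu] at hlast'
    simp only [Option.elim, if_true, mul_one] at hlast' ⊢
    have : 0 ≤ Γ u' (xof x0 c u) (xof x0' c' u') a * (if c'.2 u' = none then 1 else 0) :=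
      mul_nonneg hG (by split_ifs <;> norm_num)
    linarith
  · rcases hcu' : c'.2 u' with _ | mz
    · rw [hcu, hcu'] at hlast'
      simp only [Option.elim, if_true, mul_one, reduceCtorEq, if_false, mul_zero] at hlast' ⊢
      linarith
    · have hx : xof x0 c u = mx.2 := by simp [xof, hcu]
      have hx' : xof x0' c' u' = mz.2 := by simp [xof, hcu']
      rw [hcu, hcu'] at hlast'
      rw [hx, hx'] at hGite hG ⊢
      simp only [Option.elim, reduceCtorEq, if_false, mul_zero, zero_add] at hlast' ⊢
      by_cases hT : T u (c.1 mx.1) mx.2 (c'.1 mz.1) a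
      · have hgood : good T c c' a u := ⟨mx, mz.1, hcu, hT⟩
        by_cases hd : dec u0 T c c' a = u
        · rw [if_pos hd, mul_zero]
          exact add_nonneg (mul_nonneg hG (ind_nonneg _)) hlast'
        · have hex : ∃ u, good T c c' a u := ⟨u, hgood⟩
          have hdd : good T c c' a (dec u0 T c c' a) := by
            unfold dec; rw [dif_pos hex]; exact hex.choose_spec
          set v := dec u0 T c c' a with hv
          obtain ⟨mx', m', hmx', hT'⟩ := hdd
          have hterm : Γ u' mx.2 mz.2 a ≤ (if u = v then 0 else
            ((c.2 v).elim 0 fun mx' => 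
              ∑ m', Γ u' mx.2 mz.2 a * ind (T v (c.1 mx'.1) mx'.2 (c'.1 m') a)) : ℝ) := by
            rw [if_neg (Ne.symm hd), hmx']
            simp only [Option.elim]
            calc Γ u' mx.2 mz.2 a = Γ u' mx.2 mz.2 a * ind (T v (c.1 mx'.1) mx'.2 (c'.1 m') a) := by
                  simp [ind, hT']
              _ ≤ _ := Finset.single_le_sum
                (f := fun m' => Γ u' mx.2 mz.2 a * ind (T v (c.1 mx'.1) mx'.2 (c'.1 m') a))
                (fun _ _ => mul_nonneg hG (ind_nonneg _)) (Finset.mem_univ m')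
          have hnn : ∀ v ∈ (Finset.univ : Finset U), 0 ≤ (if u = v then 0 else
            ((c.2 v).elim 0 fun mx' => 
              ∑ m', Γ u' mx.2 mz.2 a * ind (T v (c.1 mx'.1) mx'.2 (c'.1 m') a)) : ℝ) := by
            intro v _
            have := hlast v
            rw [hcu, hcu'] at this
            simpa only [Option.elim] using this
          have := Finset.single_le_sum hnn (Finset.mem_univ v)
          have h0 : 0 ≤ Γ u' mx.2 mz.2 a * ind (¬ T u (c.1 mx.1) mx.2 (c'.1 mz.1) a) :=
            mul_nonneg hG (ind_nonneg _)
          refine le_trans hGite ?_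
          refine le_trans (le_trans hterm this) ?_
          exact le_add_of_nonneg_left h0
      · have : ind (¬ T u (c.1 mx.1) mx.2 (c'.1 mz.1) a) = 1 := by simp [ind, hT]
        rw [this, mul_one]
        exact le_trans hGite (le_add_of_nonneg_right hlast')

theorem sum_elim {C B : Type} [Fintype C] (g : C → ℝ) (o : Option B) (f : C → B → ℝ) :
    ∑ c, g c * (o.elim 0 fun b => f c b) = o.elim 0 fun b => ∑ c, g c * f c b := by
  cases o <;> simp

end Recv

set_option linter.unusedSectionVars false

section Recv
variable {U W X Z A U' X' : Type} [Fintype U] [Fintype W] [Fintype X] [Fintype Z] [Fintype A]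
  [Fintype U'] [Fintype X']

/-- sum over one side of the pair of events -/
theorem avg_true {M M' : ℕ} {r : W → ℝ} {k : U → W → X → ℝ} {E : U → W → Prop}
    {r' : Z → ℝ} {k' : U' → Z → X' → ℝ} {E' : U' → Z → Prop}
    (hr : ∀ w, 0 ≤ r w) (hr1 : ∑ w, r w = 1) (hk : ∀ u w x, 0 ≤ k u w x) (hM : 0 < M)
    (hr' : ∀ w, 0 ≤ r' w) (hr1' : ∑ w, r' w = 1) (hk' : ∀ u w x, 0 ≤ k' u w x) (hM' : 0 < M')
    (u : U) (u' : U') (ψ : W → X → Z → X' → ℝ) (hψ : ∀ w x z x', 0 ≤ ψ w x z x') :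
    ∑ c, wt M r k E c * ∑ c', wt M' r' k' E' c' *
      ((c.2 u).elim 0 fun mx => (c'.2 u').elim 0 fun mz =>
        ψ (c.1 mx.1) mx.2 (c'.1 mz.1) mz.2) ≤
    ∑ w, ∑ x, k u w x * ∑ z, ∑ x', k' u' z x' * ψ w x z x' := by
  simp_rw [sum_elim]
  refine le_trans (wt_one hr hr1 hk hM u (fun w x => ∑ c' : Enc U' Z X' M', wt M' r' k' E' c' *
    ((c'.2 u').elim 0 fun mz => ψ w x (c'.1 mz.1) mz.2)) ?_) ?_
  · intro w x
    refine Finset.sum_nonneg fun c' _ => mul_nonneg (wt_nonneg hr' hk' _) ?_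
    cases c'.2 u' with
    | none => exact le_rfl
    | some mz => exact hψ _ _ _ _
  · gcongr with w _ x _
    · exact hk _ _ _
    · exact wt_one hr' hr1' hk' hM' u' (fun z x' => ψ w x z x') (fun z x' => hψ _ _ _ _)

theorem avg_wrong {M M' : ℕ} {r : W → ℝ} {k : U → W → X → ℝ} {E : U → W → Prop}
    {r' : Z → ℝ} {k' : U' → Z → X' → ℝ} {E' : U' → Z → Prop}
    (hr : ∀ w, 0 ≤ r w) (hr1 : ∑ w, r w = 1) (hk : ∀ u w x, 0 ≤ k u w x) (hM : 0 < M)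
    (hr' : ∀ w, 0 ≤ r' w) (hr1' : ∑ w, r' w = 1) (hk' : ∀ u w x, 0 ≤ k' u w x) (hM' : 0 < M')
    {u v : U} (huv : u ≠ v) (u' : U') (g : X → X' → ℝ) (hg : ∀ x x', 0 ≤ g x x')
    (τ : W → X → Z → ℝ) (hτ : ∀ w x z, 0 ≤ τ w x z) :
    ∑ c, wt M r k E c * ∑ c', wt M' r' k' E' c' *
      ((c.2 u).elim 0 fun mx => (c.2 v).elim 0 fun mx' => (c'.2 u').elim 0 fun mz =>
        ∑ m', g mx.2 mz.2 * τ (c.1 mx'.1) mx'.2 (c'.1 m')) ≤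
    (∑ w, ∑ x, ∑ y, 1 / M * (k u w x * (k v w y / r w)) *
      ((∑ z, ∑ x', k' u' z x' * (g x x' * τ w y z)) +
        M' * ∑ z, ∑ x', ∑ z', k' u' z x' * r' z' * (g x x' * τ w y z'))) +
    ∑ w, ∑ x, ∑ w', ∑ y, k u w x * k v w' y * 
      ((∑ z, ∑ x', k' u' z x' * (g x x' * τ w' y z)) +
        M' * ∑ z, ∑ x', ∑ z', k' u' z x' * r' z' * (g x x' * τ w' y z')) := by
  simp_rw [sum_elim]
  have key : ∀ x w' y, ∑ c' : Enc U' Z X' M', wt M' r' k' E' c' *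
      ((c'.2 u').elim 0 fun mz => ∑ m', g x mz.2 * τ w' y (c'.1 m')) ≤
      (∑ z, ∑ x', k' u' z x' * (g x x' * τ w' y z)) +
        M' * ∑ z, ∑ x', ∑ z', k' u' z x' * r' z' * (g x x' * τ w' y z') := fun x w' y =>
    wt_wrong hr' hr1' hk' hM' u' (fun z x' z' => g x x' * τ w' y z')
      (fun z x' z' => mul_nonneg (hg _ _) (hτ _ _ _))
  refine le_trans (wt_two hr hr1 hk hM huv (fun w x w' y => ∑ c' : Enc U' Z X' M',
    wt M' r' k' E' c' * ((c'.2 u').elim 0 fun mz => ∑ m', g x mz.2 * τ w' y (c'.1 m'))) ?_) ?_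
  · intro w x w' y
    refine Finset.sum_nonneg fun c' _ => mul_nonneg (wt_nonneg hr' hk' _) ?_
    cases c'.2 u' with
    | none => exact le_rfl
    | some mz => exact Finset.sum_nonneg fun _ _ => mul_nonneg (hg _ _) (hτ _ _ _)
  · refine add_le_add ?_ ?_
    · refine Finset.sum_le_sum fun w _ => Finset.sum_le_sum fun x _ => Finset.sum_le_sum fun y _ => ?_
      refine mul_le_mul_of_nonneg_left (key _ _ _) ?_
      exact mul_nonneg (by positivity) (mul_nonneg (hk _ _ _) (div_nonneg (hk _ _ _) (hr _)))
    · refine Finset.sum_le_sum fun w _ => Finset.sum_le_sum fun x _ => Finset.sum_le_sum fun w' _ =>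
        Finset.sum_le_sum fun y _ => ?_
      exact mul_le_mul_of_nonneg_left (key _ _ _) (mul_nonneg (hk _ _ _) (hk _ _ _))

/-- algebra for the sum over the interfering source -/
theorem inner_sum {M' : ℕ} (r' : Z → ℝ) (k' : U' → Z → X' → ℝ) (Γ : U' → X → X' → A → ℝ)
    (x : X) (a : A) (τ : Z → ℝ) :
    ∑ u', ((∑ z, ∑ x', k' u' z x' * (Γ u' x x' a * τ z)) +
        (M' : ℝ) * ∑ z, ∑ x', ∑ z', k' u' z x' * r' z' * (Γ u' x x' a * τ z')) =
      (∑ z, GG k' Γ x z a * τ z) + M' * ∑ z', r' z' * τ z' * ∑ z, GG k' Γ x z a := by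
  rw [Finset.sum_add_distrib, ← Finset.mul_sum]
  congr 1
  · rw [Finset.sum_comm]
    refine Finset.sum_congr rfl fun z _ => ?_
    simp only [GG, Finset.sum_mul]
    refine Finset.sum_congr rfl fun u' _ => Finset.sum_congr rfl fun x' _ => ?_
    ring
  · congr 1
    simp only [GG, Finset.mul_sum]
    rw [Finset.sum_comm]
    have e : ∀ z : Z, ∑ u' : U', ∑ x' : X', ∑ z', k' u' z x' * r' z' * (Γ u' x x' a * τ z') =
        ∑ z', ∑ u', ∑ x', r' z' * τ z' * (k' u' z x' * Γ u' x x' a) := by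
      intro z
      have := Fintype.sum_equiv (⟨fun t => (t.2.2, t.1, t.2.1), fun t => (t.2.1, t.2.2, t.1),
        fun _ => rfl, fun _ => rfl⟩ : U' × X' × Z ≃ Z × U' × X')
        (fun t => k' t.1 z t.2.1 * r' t.2.2 * (Γ t.1 x t.2.1 a * τ t.2.2))
        (fun t => r' t.1 * τ t.1 * (k' t.2.1 z t.2.2 * Γ t.2.1 x t.2.2 a)) (fun t => by simp; ring)
      simpa only [Fintype.sum_prod_type] using this
    simp_rw [e]
    rw [Finset.sum_comm]

/-- The main bound on the sum over competitors `v`, for fixed output `a`. -/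
theorem comp_bound {M M' : ℕ} {p : U → ℝ} {r : W → ℝ} {k : U → W → X → ℝ} {r' : Z → ℝ}
    (G : X → Z → A → ℝ) (a : A) (v : U) (T : U → W → X → Z → A → Prop)
    (ta tb tc td : ℝ) (J : W → X → Z → ℝ) (hJ : ∀ w x z, 0 ≤ J w x z)
    (hta : 0 ≤ ta) (htb : 0 ≤ tb) (htc : 0 ≤ tc) (htd : 0 ≤ td)
    (hT : ∀ w x z, T v w x z a →
      Ja p k G w z a * (k v w x / r w) ≤ ta * J w x z ∧
      Jb p k G z a * k v w x ≤ tb * J w x z ∧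
      Jc p k G w a * r' z * (k v w x / r w) ≤ tc * J w x z ∧
      Jd p k G a * r' z * k v w x ≤ td * J w x z) :
    ∑ u, p u * ((∑ w, ∑ x, ∑ y, 1 / (M : ℝ) * (k u w x * (k v w y / r w)) *
      ((∑ z, G x z a * ind (T v w y z a)) +
        M' * ∑ z', r' z' * ind (T v w y z' a) * ∑ z, G x z a)) +
    ∑ w, ∑ x, ∑ w', ∑ y, k u w x * k v w' y * 
      ((∑ z, G x z a * ind (T v w' y z a)) +
        M' * ∑ z', r' z' * ind (T v w' y z' a) * ∑ z, G x z a)) ≤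
    (ta / M + tb + tc * M' / M + td * M') * ∑ w, ∑ y, ∑ z, J w y z := by
  have e1 : ∑ u, p u * (∑ w, ∑ x, ∑ y, 1 / (M : ℝ) * (k u w x * (k v w y / r w)) *
      (∑ z, G x z a * ind (T v w y z a))) =
      ∑ w, ∑ y, ∑ z, 1 / (M : ℝ) * ((Ja p k G w z a * (k v w y / r w)) * ind (T v w y z a)) := by
    simp only [Ja, Finset.mul_sum, Finset.sum_mul]
    rw [perm_a]
    refine Finset.sum_congr rfl fun _ _ => Finset.sum_congr rfl fun _ _ => Finset.sum_congr rfl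
      fun _ _ => Finset.sum_congr rfl fun _ _ => Finset.sum_congr rfl fun _ _ => ?_
    ring
  have e3 : ∑ u, p u * (∑ w, ∑ x, ∑ y, 1 / (M : ℝ) * (k u w x * (k v w y / r w)) *
      (M' * ∑ z', r' z' * ind (T v w y z' a) * ∑ z, G x z a)) =
      ∑ w, ∑ y, ∑ z, M' / (M : ℝ) * ((Jc p k G w a * r' z * (k v w y / r w)) * ind (T v w y z a)) := by
    simp only [Jc, Finset.mul_sum, Finset.sum_mul]
    rw [perm_c]
    refine Finset.sum_congr rfl fun _ _ => Finset.sum_congr rfl fun _ _ => Finset.sum_congr rfl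
      fun _ _ => Finset.sum_congr rfl fun _ _ => Finset.sum_congr rfl fun _ _ =>
      Finset.sum_congr rfl fun _ _ => ?_
    ring
  have e2 : ∑ u, p u * (∑ w, ∑ x, ∑ w', ∑ y, k u w x * k v w' y *
      (∑ z, G x z a * ind (T v w' y z a))) =
      ∑ w, ∑ y, ∑ z, ((Jb p k G z a * k v w y) * ind (T v w y z a)) := by
    simp only [Jb, Finset.mul_sum, Finset.sum_mul]
    rw [perm_b]
    refine Finset.sum_congr rfl fun _ _ => Finset.sum_congr rfl fun _ _ => Finset.sum_congr rfl
      fun _ _ => Finset.sum_congr rfl fun _ _ => Finset.sum_congr rfl fun _ _ =>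
      Finset.sum_congr rfl fun _ _ => ?_
    ring
  have e4 : ∑ u, p u * (∑ w, ∑ x, ∑ w', ∑ y, k u w x * k v w' y *
      (M' * ∑ z', r' z' * ind (T v w' y z' a) * ∑ z, G x z a)) =
      ∑ w, ∑ y, ∑ z, (M' : ℝ) * ((Jd p k G a * r' z * k v w y) * ind (T v w y z a)) := by
    simp only [Jd, Finset.mul_sum, Finset.sum_mul]
    rw [perm_d]
    refine Finset.sum_congr rfl fun _ _ => Finset.sum_congr rfl fun _ _ => Finset.sum_congr rfl
      fun _ _ => Finset.sum_congr rfl fun _ _ => Finset.sum_congr rfl fun _ _ =>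
      Finset.sum_congr rfl fun _ _ => Finset.sum_congr rfl fun _ _ => ?_
    ring
  have hind : ∀ (w : W) (y : X) (z : Z) (L t : ℝ), 0 ≤ t → (T v w y z a → L ≤ t * J w y z) →
      L * ind (T v w y z a) ≤ t * J w y z := by
    intro w y z L t ht h
    unfold ind
    split_ifs with hh
    · simpa using h hh
    · simpa using mul_nonneg ht (hJ w y z)
  simp_rw [mul_add, Finset.sum_add_distrib, mul_add, Finset.sum_add_distrib]
  rw [e1, e2, e3, e4]
  simp_rw [Finset.mul_sum, ← Finset.sum_add_distrib]
  refine Finset.sum_le_sum fun w _ => Finset.sum_le_sum fun y _ => Finset.sum_le_sum fun z _ => ?_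
  have h1 := hind w y z _ ta hta fun h => (hT w y z h).1
  have h2 := hind w y z _ tb htb fun h => (hT w y z h).2.1
  have h3 := hind w y z _ tc htc fun h => (hT w y z h).2.2.1
  have h4 := hind w y z _ td htd fun h => (hT w y z h).2.2.2
  have hMi : 0 ≤ 1 / (M : ℝ) := by positivity
  have hMi2 : 0 ≤ M' / (M : ℝ) := by positivity
  have hMi3 : 0 ≤ (M' : ℝ) := by positivity
  have g1 := mul_le_mul_of_nonneg_left h1 hMi
  have g3 := mul_le_mul_of_nonneg_left h3 hMi2
  have g4 := mul_le_mul_of_nonneg_left h4 hMi3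
  have : (ta / M + tb + tc * M' / M + td * M') * J w y z = 1 / (M : ℝ) * (ta * J w y z) +
    tb * J w y z + M' / (M : ℝ) * (tc * J w y z) + M' * (td * J w y z) := by ring
  rw [this]
  linarith

end Recv

set_option linter.unusedSectionVars false

section Recv
variable {U W X Z A U' X' : Type} [Fintype U] [Fintype W] [Fintype X] [Fintype Z] [Fintype A]
  [Fintype U'] [Fintype X']

theorem ex_swap3 {C C' : Type} [Fintype C] [Fintype C'] (g : C → ℝ) (g' : C' → ℝ)
    (p : U → ℝ) (f : C → C' → U → U' → A → ℝ) :
    ∑ c, g c * ∑ c', g' c' * ∑ u, ∑ u', ∑ a, p u * f c c' u u' a =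
      ∑ u, p u * ∑ u', ∑ a, ∑ c, g c * ∑ c', g' c' * f c c' u u' a := by
  simp only [Finset.mul_sum]
  have := Fintype.sum_equiv (⟨fun t => (t.2.2.1, t.2.2.2.1, t.2.2.2.2, t.1, t.2.1),
    fun t => (t.2.2.2.1, t.2.2.2.2, t.1, t.2.1, t.2.2.1),
        fun _ => rfl, fun _ => rfl⟩ : C × C' × U × U' × A ≃ U × U' × A × C × C')
        (fun t => g t.1 * (g' t.2.1 * (p t.2.2.1 * f t.1 t.2.1 t.2.2.1 t.2.2.2.1 t.2.2.2.2)))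
        (fun t => p t.1 * (g t.2.2.2.1 * (g' t.2.2.2.2 * f t.2.2.2.1 t.2.2.2.2 t.1 t.2.1 t.2.2.1)))
        (fun t => by simp; ring)
  simpa only [Fintype.sum_prod_type] using this

theorem ex_swap1 {C C' V : Type} [Fintype C] [Fintype C'] [Fintype V] (g : C → ℝ) (g' : C' → ℝ)
    (f : C → C' → V → ℝ) :
    ∑ c, g c * ∑ c', g' c' * ∑ v, f c c' v = ∑ v, ∑ c, g c * ∑ c', g' c' * f c c' v := by
  simp only [Finset.mul_sum]
  have := Fintype.sum_equiv (⟨fun t => (t.2.2, t.1, t.2.1), fun t => (t.2.1, t.2.2, t.1),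
        fun _ => rfl, fun _ => rfl⟩ : C × C' × V ≃ V × C × C')
        (fun t => g t.1 * (g' t.2.1 * f t.1 t.2.1 t.2.2))
        (fun t => g t.2.1 * (g' t.2.2 * f t.2.1 t.2.2 t.1)) (fun t => by simp)
  simpa only [Fintype.sum_prod_type] using this

theorem recv_bound {M M' : ℕ} {p : U → ℝ} {r : W → ℝ} {k : U → W → X → ℝ} {E : U → W → Prop}
    {p' : U' → ℝ} {r' : Z → ℝ} {k' : U' → Z → X' → ℝ} {E' : U' → Z → Prop}
    (hp : ∀ u, 0 ≤ p u) (hp1 : ∑ u, p u = 1) (hp1' : ∑ u, p' u = 1)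
    (hr : ∀ w, 0 ≤ r w) (hr1 : ∑ w, r w = 1) (hk : ∀ u w x, 0 ≤ k u w x) (hM : 0 < M)
    (hr' : ∀ w, 0 ≤ r' w) (hr1' : ∑ w, r' w = 1) (hk' : ∀ u w x, 0 ≤ k' u w x) (hM' : 0 < M')
    (hk1 : ∀ u, ∑ w, ∑ x, k u w x = 1) (hk1' : ∀ u, ∑ w, ∑ x, k' u w x = 1)
    (Γ : U' → X → X' → A → ℝ) (hΓ : ∀ u x x' a, 0 ≤ Γ u x x' a)
    (hΓ1 : ∀ u x x', ∑ a, Γ u x x' a = p' u)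
    (T : U → W → X → Z → A → Prop) (ta tb tc td : ℝ)
    (hta : 0 ≤ ta) (htb : 0 ≤ tb) (htc : 0 ≤ tc) (htd : 0 ≤ td)
    (hT : ∀ u w x z a, T u w x z a →
      Ja p k (GG k' Γ) w z a * (k u w x / r w) ≤ ta * (p u * k u w x * GG k' Γ x z a) ∧
      Jb p k (GG k' Γ) z a * k u w x ≤ tb * (p u * k u w x * GG k' Γ x z a) ∧
      Jc p k (GG k' Γ) w a * r' z * (k u w x / r w) ≤ tc * (p u * k u w x * GG k' Γ x z a) ∧
      Jd p k (GG k' Γ) a * r' z * k u w x ≤ td * (p u * k u w x * GG k' Γ x z a))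
    (u0 : U) (x0 : X) (x0' : X') :
    ∑ c, wt M r k E c * ∑ c', wt M' r' k' E' c' * ∑ u, ∑ u', ∑ a, p u *
      (Γ u' (xof x0 c u) (xof x0' c' u') a * (if dec u0 T c c' a = u then 0 else 1)) ≤
    (∑ u, p u * ∑ c, wt M r k E c * (if c.2 u = none then 1 else 0)) +
    (∑ u', p' u' * ∑ c', wt M' r' k' E' c' * (if c'.2 u' = none then 1 else 0)) +
    (∑ u, ∑ w, ∑ x, ∑ z, ∑ a, p u * k u w x * GG k' Γ x z a * ind (¬ T u w x z a)) +
    (ta / M + tb + tc * M' / M + td * M') := by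
  have hG0 : ∀ x z a, 0 ≤ GG k' Γ x z a := fun x z a =>
    Finset.sum_nonneg fun u' _ => Finset.sum_nonneg fun x' _ => mul_nonneg (hk' _ _ _) (hΓ _ _ _ _)
  have hG1 : ∀ x, ∑ z, ∑ a, GG k' Γ x z a = 1 := by
    intro x
    have e : ∀ z, ∑ a, GG k' Γ x z a = ∑ u', ∑ x', p' u' * k' u' z x' := by
      intro z
      simp only [GG]
      rw [Finset.sum_comm]
      refine Finset.sum_congr rfl fun u' _ => ?_
      rw [Finset.sum_comm]
      refine Finset.sum_congr rfl fun x' _ => ?_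
      rw [← Finset.mul_sum, hΓ1]; ring
    simp_rw [e]
    rw [Finset.sum_comm]
    simp_rw [← Finset.mul_sum, hk1', mul_one]
    exact hp1'
  have hw := wt_sum (M := M) (r := r) (k := k) (E := E) hr1
  have hw' := wt_sum (M := M') (r := r') (k := k') (E := E') hr1'
  set X3 : Enc U W X M → Enc U' Z X' M' → U → U' → A → ℝ := fun c c' u u' a =>
      ((c.2 u).elim 0 fun mx => (c'.2 u').elim 0 fun mz =>
        Γ u' mx.2 mz.2 a * ind (¬ T u (c.1 mx.1) mx.2 (c'.1 mz.1) a)) with hX3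
  set X4 : Enc U W X M → Enc U' Z X' M' → U → U' → A → U → ℝ := fun c c' u u' a v =>
      if u = v then 0 else
        ((c.2 u).elim 0 fun mx => (c.2 v).elim 0 fun mx' => (c'.2 u').elim 0 fun mz =>
          ∑ m', Γ u' mx.2 mz.2 a * ind (T v (c.1 mx'.1) mx'.2 (c'.1 m') a)) with hX4
  have step1 : ∀ c c', ∑ u, ∑ u', ∑ a, p u *
      (Γ u' (xof x0 c u) (xof x0' c' u') a * (if dec u0 T c c' a = u then 0 else 1)) ≤
      (∑ u, p u * (if c.2 u = none then 1 else 0)) + (∑ u', p' u' * (if c'.2 u' = none then 1 else 0))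
      + ∑ u, ∑ u', ∑ a, p u * (X3 c c' u u' a) + ∑ u, ∑ u', ∑ a, p u * (∑ v, X4 c c' u u' a v) := by
    intro c c'
    have e1 : (∑ u, p u * (if c.2 u = none then 1 else 0)) = ∑ u, ∑ u', ∑ a, p u *
        (Γ u' (xof x0 c u) (xof x0' c' u') a * (if c.2 u = none then 1 else 0)) := by
      refine Finset.sum_congr rfl fun u _ => ?_
      simp_rw [← Finset.mul_sum, ← Finset.sum_mul, hΓ1]
      rw [hp1', one_mul]
    have e2 : (∑ u', p' u' * (if c'.2 u' = none then 1 else 0)) = ∑ u, ∑ u', ∑ a, p u *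
        (Γ u' (xof x0 c u) (xof x0' c' u') a * (if c'.2 u' = none then 1 else 0)) := by
      have : ∀ u, ∑ u', ∑ a, p u *
        (Γ u' (xof x0 c u) (xof x0' c' u') a * (if c'.2 u' = none then 1 else 0)) =
        p u * (∑ u', p' u' * (if c'.2 u' = none then 1 else 0)) := by
        intro u
        simp_rw [← Finset.mul_sum, ← Finset.sum_mul, hΓ1]
      simp_rw [this]
      rw [← Finset.sum_mul, hp1, one_mul]
    rw [e1, e2]
    simp_rw [← Finset.sum_add_distrib]
    refine Finset.sum_le_sum fun u _ => Finset.sum_le_sum fun u' _ => Finset.sum_le_sum fun a _ => ?_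
    have h := mul_le_mul_of_nonneg_left (dec_bound u0 T c c' a x0 x0' Γ hΓ u u') (hp u)
    refine h.trans (le_of_eq ?_)
    simp only [hX3, hX4]
    ring
  have hX3b : ∑ c, wt M r k E c * ∑ c', wt M' r' k' E' c' * ∑ u, ∑ u', ∑ a, p u * (X3 c c' u u' a) ≤
      ∑ u, ∑ w, ∑ x, ∑ z, ∑ a, p u * k u w x * GG k' Γ x z a * ind (¬ T u w x z a) := by
    rw [ex_swap3]
    refine Finset.sum_le_sum fun u _ => ?_
    calc _ ≤ p u * ∑ u', ∑ a, ∑ w, ∑ x, k u w x * ∑ z, ∑ x', k' u' z x' *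
            (Γ u' x x' a * ind (¬ T u w x z a)) := by
          refine mul_le_mul_of_nonneg_left (Finset.sum_le_sum fun u' _ => Finset.sum_le_sum
            fun a _ => ?_) (hp u)
          exact avg_true hr hr1 hk hM hr' hr1' hk' hM' u u'
            (fun w x z x' => Γ u' x x' a * ind (¬ T u w x z a))
            (fun _ _ _ _ => mul_nonneg (hΓ _ _ _ _) (ind_nonneg _))
      _ = _ := by
          simp only [GG, Finset.mul_sum, Finset.sum_mul]
          have := Fintype.sum_equiv (⟨fun t => (t.2.2.1, t.2.2.2.1, t.2.2.2.2.1, t.2.1, t.1, t.2.2.2.2.2),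
            fun t => (t.2.2.2.2.1, t.2.2.2.1, t.1, t.2.1, t.2.2.1, t.2.2.2.2.2),
            fun _ => rfl, fun _ => rfl⟩ : U' × A × W × X × Z × X' ≃ W × X × Z × A × U' × X')
            (fun t => p u * (k u t.2.2.1 t.2.2.2.1 * (k' t.1 t.2.2.2.2.1 t.2.2.2.2.2 *
              (Γ t.1 t.2.2.2.1 t.2.2.2.2.2 t.2.1 *
                ind (¬ T u t.2.2.1 t.2.2.2.1 t.2.2.2.2.1 t.2.1)))))
            (fun t => p u * k u t.1 t.2.1 * (k' t.2.2.2.2.1 t.2.2.1 t.2.2.2.2.2 *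
              Γ t.2.2.2.2.1 t.2.1 t.2.2.2.2.2 t.2.2.2.1) * ind (¬ T u t.1 t.2.1 t.2.2.1 t.2.2.2.1))
            (fun t => by simp; ring)
          simpa only [Fintype.sum_prod_type] using this
  have hX4b : ∑ c, wt M r k E c * ∑ c', wt M' r' k' E' c' * ∑ u, ∑ u', ∑ a, p u *
      (∑ v, X4 c c' u u' a v) ≤ ta / M + tb + tc * M' / M + td * M' := by
    rw [ex_swap3]
    set BB : U → U' → A → U → ℝ := fun u u' a v =>
      (∑ w, ∑ x, ∑ y, 1 / (M : ℝ) * (k u w x * (k v w y / r w)) *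
      ((∑ z, ∑ x', k' u' z x' * (Γ u' x x' a * ind (T v w y z a))) +
        M' * ∑ z, ∑ x', ∑ z', k' u' z x' * r' z' * (Γ u' x x' a * ind (T v w y z' a)))) +
      ∑ w, ∑ x, ∑ w', ∑ y, k u w x * k v w' y * 
      ((∑ z, ∑ x', k' u' z x' * (Γ u' x x' a * ind (T v w' y z a))) +
        M' * ∑ z, ∑ x', ∑ z', k' u' z x' * r' z' * (Γ u' x x' a * ind (T v w' y z' a))) with hBB
    have hsum : ∀ u a v, ∑ u', BB u u' a v =
      (∑ w, ∑ x, ∑ y, 1 / (M : ℝ) * (k u w x * (k v w y / r w)) *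
      ((∑ z, GG k' Γ x z a * ind (T v w y z a)) +
        M' * ∑ z', r' z' * ind (T v w y z' a) * ∑ z, GG k' Γ x z a)) +
      ∑ w, ∑ x, ∑ w', ∑ y, k u w x * k v w' y * 
      ((∑ z, GG k' Γ x z a * ind (T v w' y z a)) +
        M' * ∑ z', r' z' * ind (T v w' y z' a) * ∑ z, GG k' Γ x z a) := by
      intro u a v
      simp only [hBB]
      rw [Finset.sum_add_distrib]
      congr 1
      · rw [Finset.sum_comm]
        refine Finset.sum_congr rfl fun w _ => ?_
        rw [Finset.sum_comm]
        refine Finset.sum_congr rfl fun x _ => ?_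
        rw [Finset.sum_comm]
        refine Finset.sum_congr rfl fun y _ => ?_
        rw [← Finset.mul_sum, inner_sum r' k' Γ x a (fun z => ind (T v w y z a))]
      · rw [Finset.sum_comm]
        refine Finset.sum_congr rfl fun w _ => ?_
        rw [Finset.sum_comm]
        refine Finset.sum_congr rfl fun x _ => ?_
        rw [Finset.sum_comm]
        refine Finset.sum_congr rfl fun w' _ => ?_
        rw [Finset.sum_comm]
        refine Finset.sum_congr rfl fun y _ => ?_
        rw [← Finset.mul_sum, inner_sum r' k' Γ x a (fun z => ind (T v w' y z a))]
    have hBB0 : ∀ u u' a v, 0 ≤ BB u u' a v := by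
      intro u u' a v
      have hin : ∀ (w' : W) (x y : X), 0 ≤ ((∑ z, ∑ x', k' u' z x' * (Γ u' x x' a * ind (T v w' y z a))) +
          M' * ∑ z, ∑ x', ∑ z', k' u' z x' * r' z' * (Γ u' x x' a * ind (T v w' y z' a))) := by
        intro w' x y
        refine add_nonneg ?_ (mul_nonneg (Nat.cast_nonneg _) ?_)
        · exact Finset.sum_nonneg fun _ _ => Finset.sum_nonneg fun _ _ => mul_nonneg (hk' _ _ _)
            (mul_nonneg (hΓ _ _ _ _) (ind_nonneg _))
        · exact Finset.sum_nonneg fun _ _ => Finset.sum_nonneg fun _ _ => Finset.sum_nonneg fun _ _ =>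
            mul_nonneg (mul_nonneg (hk' _ _ _) (hr' _)) (mul_nonneg (hΓ _ _ _ _) (ind_nonneg _))
      refine add_nonneg ?_ ?_
      · exact Finset.sum_nonneg fun _ _ => Finset.sum_nonneg fun _ _ => Finset.sum_nonneg fun _ _ =>
          mul_nonneg (mul_nonneg (by positivity) (mul_nonneg (hk _ _ _)
            (div_nonneg (hk _ _ _) (hr _)))) (hin _ _ _)
      · exact Finset.sum_nonneg fun _ _ => Finset.sum_nonneg fun _ _ => Finset.sum_nonneg fun _ _ =>
          Finset.sum_nonneg fun _ _ => mul_nonneg (mul_nonneg (hk _ _ _) (hk _ _ _)) (hin _ _ _)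
    calc _ ≤ ∑ u, p u * ∑ u', ∑ a, ∑ v, BB u u' a v := by
          refine Finset.sum_le_sum fun u _ => mul_le_mul_of_nonneg_left (Finset.sum_le_sum fun u' _ =>
            Finset.sum_le_sum fun a _ => ?_) (hp u)
          rw [ex_swap1]
          refine Finset.sum_le_sum fun v _ => ?_
          by_cases huv : u = v
          · simp only [hX4, if_pos huv]
            simpa using hBB0 u u' a v
          · simp only [hX4, if_neg huv]
            exact avg_wrong hr hr1 hk hM hr' hr1' hk' hM' huv u' (fun x x' => Γ u' x x' a)
              (fun _ _ => hΓ _ _ _ _) (fun w x z => ind (T v w x z a)) (fun _ _ _ => ind_nonneg _)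
      _ = ∑ a, ∑ v, ∑ u, p u * ∑ u', BB u u' a v := by
          simp only [Finset.mul_sum]
          have := Fintype.sum_equiv (⟨fun t => (t.2.2.1, t.2.2.2, t.1, t.2.1),
            fun t => (t.2.2.1, t.2.2.2, t.1, t.2.1),
            fun _ => rfl, fun _ => rfl⟩ : U × U' × A × U ≃ A × U × U × U')
            (fun t => p t.1 * BB t.1 t.2.1 t.2.2.1 t.2.2.2)
            (fun t => p t.2.2.1 * BB t.2.2.1 t.2.2.2 t.1 t.2.1) (fun t => by simp)
          simpa only [Fintype.sum_prod_type] using this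
      _ ≤ ∑ a, ∑ v, (ta / M + tb + tc * M' / M + td * M') *
            ∑ w, ∑ y, ∑ z, p v * k v w y * GG k' Γ y z a := by
          refine Finset.sum_le_sum fun a _ => Finset.sum_le_sum fun v _ => ?_
          simp_rw [hsum]
          exact comp_bound (GG k' Γ) a v T ta tb tc td (fun w y z => p v * k v w y * GG k' Γ y z a)
            (fun w y z => mul_nonneg (mul_nonneg (hp _) (hk _ _ _)) (hG0 _ _ _)) hta htb htc htd
            (fun w x z h => hT v w x z a h)
      _ = (ta / M + tb + tc * M' / M + td * M') *
            ∑ v, p v * ∑ w, ∑ y, k v w y * ∑ z, ∑ a, GG k' Γ y z a := by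
          simp only [Finset.mul_sum]
          have := Fintype.sum_equiv (⟨fun t => (t.2.1, t.2.2.1, t.2.2.2.1, t.2.2.2.2, t.1),
            fun t => (t.2.2.2.2, t.1, t.2.1, t.2.2.1, t.2.2.2.1),
            fun _ => rfl, fun _ => rfl⟩ : A × U × W × X × Z ≃ U × W × X × Z × A)
            (fun t => (ta / M + tb + tc * M' / M + td * M') *
              (p t.2.1 * k t.2.1 t.2.2.1 t.2.2.2.1 * GG k' Γ t.2.2.2.1 t.2.2.2.2 t.1))
            (fun t => (ta / M + tb + tc * M' / M + td * M') *
              (p t.1 * (k t.1 t.2.1 t.2.2.1 * GG k' Γ t.2.2.1 t.2.2.2.1 t.2.2.2.2)))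
            (fun t => by dsimp only [Equiv.coe_fn_mk]; ring)
          simpa only [Fintype.sum_prod_type] using this
      _ = _ := by simp [hG1, hk1, hp1]
  calc _ ≤ ∑ c, wt M r k E c * ∑ c', wt M' r' k' E' c' *
        ((∑ u, p u * (if c.2 u = none then 1 else 0)) + (∑ u', p' u' * (if c'.2 u' = none then 1 else 0))
      + ∑ u, ∑ u', ∑ a, p u * (X3 c c' u u' a) + ∑ u, ∑ u', ∑ a, p u * (∑ v, X4 c c' u u' a v)) := by
        refine Finset.sum_le_sum fun c _ => mul_le_mul_of_nonneg_left (Finset.sum_le_sum fun c' _ =>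
          mul_le_mul_of_nonneg_left (step1 c c') (wt_nonneg hr' hk' _)) (wt_nonneg hr hk _)
    _ = (∑ u, p u * ∑ c, wt M r k E c * (if c.2 u = none then 1 else 0)) +
        (∑ u', p' u' * ∑ c', wt M' r' k' E' c' * (if c'.2 u' = none then 1 else 0)) +
        (∑ c, wt M r k E c * ∑ c', wt M' r' k' E' c' * ∑ u, ∑ u', ∑ a, p u * (X3 c c' u u' a)) +
        (∑ c, wt M r k E c * ∑ c', wt M' r' k' E' c' * ∑ u, ∑ u', ∑ a, p u *
          (∑ v, X4 c c' u u' a v)) := by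
        simp_rw [mul_add, Finset.sum_add_distrib, mul_add, Finset.sum_add_distrib]
        congr 3
        · simp_rw [← Finset.sum_mul, hw', one_mul, Finset.mul_sum]
          rw [Finset.sum_comm]
          refine Finset.sum_congr rfl fun u _ => Finset.sum_congr rfl fun c _ => ?_
          ring
        · rw [← Finset.sum_mul, hw, one_mul]
          simp_rw [Finset.mul_sum]
          rw [Finset.sum_comm]
          refine Finset.sum_congr rfl fun u _ => Finset.sum_congr rfl fun c _ => ?_
          ring
    _ ≤ _ := by linarith [hX3b, hX4b]

end Recv

set_option linter.unusedSectionVars false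

section Recv
variable {U W X Z A U' X' : Type} [Fintype U] [Fintype W] [Fintype X] [Fintype Z] [Fintype A]
  [Fintype U'] [Fintype X']

theorem rr_nonneg {p : U → ℝ} {k : U → W → X → ℝ} (hp : ∀ u, 0 ≤ p u) (hk : ∀ u w x, 0 ≤ k u w x)
    (w : W) : 0 ≤ rr p k w :=
  Finset.sum_nonneg fun _ _ => Finset.sum_nonneg fun _ _ => mul_nonneg (hp _) (hk _ _ _)

theorem rr_sum {p : U → ℝ} {k : U → W → X → ℝ} (hp1 : ∑ u, p u = 1)
    (hk1 : ∀ u, ∑ w, ∑ x, k u w x = 1) : ∑ w, rr p k w = 1 := by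
  simp only [rr]
  rw [Finset.sum_comm]
  simp_rw [← Finset.mul_sum, hk1, mul_one]
  exact hp1

theorem rr_le {p : U → ℝ} {k : U → W → X → ℝ} (hp : ∀ u, 0 ≤ p u) (hk : ∀ u w x, 0 ≤ k u w x)
    (u : U) (w : W) (x : X) : p u * k u w x ≤ rr p k w := by
  refine le_trans ?_ (Finset.single_le_sum (f := fun u => ∑ x, p u * k u w x)
    (fun u _ => Finset.sum_nonneg fun _ _ => mul_nonneg (hp _) (hk _ _ _)) (Finset.mem_univ u))
  exact (Finset.single_le_sum (f := fun x => p u * k u w x)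
    (fun x _ => mul_nonneg (hp _) (hk _ _ _)) (Finset.mem_univ x))

theorem rr_zero {p : U → ℝ} {k : U → W → X → ℝ} (hp : ∀ u, 0 ≤ p u) (hk : ∀ u w x, 0 ≤ k u w x)
    (u : U) (w : W) (hu : p u ≠ 0) (hw : rr p k w = 0) (x : X) : k u w x = 0 := by
  have h := rr_le hp hk u w x
  rw [hw] at h
  have h2 := mul_nonneg (hp u) (hk u w x)
  have h3 : p u * k u w x = 0 := le_antisymm h h2
  exact (mul_eq_zero.1 h3).resolve_left hu

/-- The encoding event. -/
def EE (p : U → ℝ) (k : U → W → X → ℝ) (s : ℝ) (u : U) (w : W) : Prop :=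
  ∑ x, k u w x ≤ s * rr p k w

/-- The decoding event. -/
def TT (p : U → ℝ) (k : U → W → X → ℝ) (r' : Z → ℝ) (G : X → Z → A → ℝ) (ta tb tc td : ℝ)
    (u : U) (w : W) (x : X) (z : Z) (a : A) : Prop :=
      Ja p k G w z a * (k u w x / rr p k w) ≤ ta * (p u * k u w x * G x z a) ∧
      Jb p k G z a * k u w x ≤ tb * (p u * k u w x * G x z a) ∧
      Jc p k G w a * r' z * (k u w x / rr p k w) ≤ tc * (p u * k u w x * G x z a) ∧
      Jd p k G a * r' z * k u w x ≤ td * (p u * k u w x * G x z a)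

noncomputable def encF (p : U → ℝ) (k : U → W → X → ℝ) (s δ : ℝ) (M : ℕ) : ℝ :=
  (∑ u, ∑ w, ∑ x, p u * k u w x * ind (¬ EE p k s u w)) + (δ + s / (M * δ))

noncomputable def decF (p : U → ℝ) (k : U → W → X → ℝ) (p' : U' → ℝ) (k' : U' → Z → X' → ℝ)
    (Γ : U' → X → X' → A → ℝ) (ta tb tc td : ℝ) (M M' : ℕ) : ℝ :=
  (∑ u, ∑ w, ∑ x, ∑ z, ∑ a, p u * k u w x * GG k' Γ x z a *
    ind (¬ TT p k (rr p' k') (GG k' Γ) ta tb tc td u w x z a)) +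
    (ta / M + tb + tc * M' / M + td * M')

theorem recv_bound2 {M M' : ℕ} {p : U → ℝ} {k : U → W → X → ℝ}
    {p' : U' → ℝ} {k' : U' → Z → X' → ℝ}
    (hp : ∀ u, 0 ≤ p u) (hp1 : ∑ u, p u = 1) (hp' : ∀ u, 0 ≤ p' u) (hp1' : ∑ u, p' u = 1)
    (hk : ∀ u w x, 0 ≤ k u w x) (hM : 0 < M)
    (hk' : ∀ u w x, 0 ≤ k' u w x) (hM' : 0 < M')
    (hk1 : ∀ u, ∑ w, ∑ x, k u w x = 1) (hk1' : ∀ u, ∑ w, ∑ x, k' u w x = 1)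
    (Γ : U' → X → X' → A → ℝ) (hΓ : ∀ u x x' a, 0 ≤ Γ u x x' a)
    (hΓ1 : ∀ u x x', ∑ a, Γ u x x' a = p' u)
    (s δ s' δ' : ℝ) (hδ : 0 < δ) (hs : 0 ≤ s) (hδ' : 0 < δ') (hs' : 0 ≤ s')
    (ta tb tc td : ℝ)
    (hta : 0 ≤ ta) (htb : 0 ≤ tb) (htc : 0 ≤ tc) (htd : 0 ≤ td)
    (u0 : U) (x0 : X) (x0' : X') :
    ∑ c, wt M (rr p k) k (EE p k s) c * ∑ c', wt M' (rr p' k') k' (EE p' k' s') c' *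
      ∑ u, ∑ u', ∑ a, p u *
      (Γ u' (xof x0 c u) (xof x0' c' u') a *
        (if dec u0 (TT p k (rr p' k') (GG k' Γ) ta tb tc td) c c' a = u then 0 else 1)) ≤
    encF p k s δ M + encF p' k' s' δ' M' + decF p k p' k' Γ ta tb tc td M M' := by
  have h1 := recv_bound (E := EE p k s) (E' := EE p' k' s') hp hp1 hp1' (rr_nonneg hp hk)
    (rr_sum hp1 hk1) hk hM (rr_nonneg hp' hk')
    (rr_sum hp1' hk1') hk' hM' hk1 hk1' Γ hΓ hΓ1
    (TT p k (rr p' k') (GG k' Γ) ta tb tc td) ta tb tc td hta htb htc htd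
    (fun u w x z a h => h) u0 x0 x0'
  have h2 := wt_fail (E := EE p k s) hp hp1 (rr_nonneg hp hk) (rr_sum hp1 hk1) hk hM hk1
    (fun u w hu hw x => rr_zero hp hk u w hu hw x) s δ hδ hs (fun u w h => h)
  have h3 := wt_fail (E := EE p' k' s') hp' hp1' (rr_nonneg hp' hk') (rr_sum hp1' hk1') hk' hM' hk1'
    (fun u w hu hw x => rr_zero hp' hk' u w hu hw x) s' δ' hδ' hs' (fun u w h => h)
  have e : ∀ P : Prop, ind (¬ P) = if P then (0 : ℝ) else 1 := by
    intro P; by_cases h : P <;> simp [ind, h]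
  refine h1.trans ?_
  unfold encF decF
  simp only [e] at *
  linarith

end Recv

theorem exists_le_avg {C : Type} [Fintype C] (g f : C → ℝ) (hg : ∀ c, 0 ≤ g c) (hg1 : ∑ c, g c = 1)
    (B : ℝ) (h : ∑ c, g c * f c ≤ B) : ∃ c, f c ≤ B := by
  by_contra hc
  push Not at hc
  have h1 : ∑ c, g c * B ≤ ∑ c, g c * f c :=
    Finset.sum_le_sum fun c _ => mul_le_mul_of_nonneg_left (hc c).le (hg c)
  have h2 : ∑ c, g c * (f c - B) = 0 := by
    simp_rw [mul_sub]
    rw [Finset.sum_sub_distrib]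
    rw [← Finset.sum_mul, hg1, one_mul] at h1 ⊢
    linarith
  have h3 := (Finset.sum_eq_zero_iff_of_nonneg (fun c _ => mul_nonneg (hg c) (by linarith [hc c]))).1 h2
  have h4 : ∑ c, g c = 0 := Finset.sum_eq_zero fun c hcm => by
    rcases mul_eq_zero.1 (h3 c hcm) with h | h
    · exact h
    · linarith [hc c]
  linarith

section Both
variable {U1 W1 X1 U2 W2 X2 A1 A2 : Type} [Fintype U1] [Fintype W1] [Fintype X1] [Fintype U2]
  [Fintype W2] [Fintype X2] [Fintype A1] [Fintype A2]

theorem one_shot {M1 M2 : ℕ} {p1 : U1 → ℝ} {k1 : U1 → W1 → X1 → ℝ}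
    {p2 : U2 → ℝ} {k2 : U2 → W2 → X2 → ℝ}
    (hp1 : ∀ u, 0 ≤ p1 u) (hps1 : ∑ u, p1 u = 1) (hp2 : ∀ u, 0 ≤ p2 u) (hps2 : ∑ u, p2 u = 1)
    (hk1 : ∀ u w x, 0 ≤ k1 u w x) (hM1 : 0 < M1)
    (hk2 : ∀ u w x, 0 ≤ k2 u w x) (hM2 : 0 < M2)
    (hks1 : ∀ u, ∑ w, ∑ x, k1 u w x = 1) (hks2 : ∀ u, ∑ w, ∑ x, k2 u w x = 1)
    (Γ1 : U2 → X1 → X2 → A1 → ℝ) (hΓ1 : ∀ u x x' a, 0 ≤ Γ1 u x x' a)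
    (hΓs1 : ∀ u x x', ∑ a, Γ1 u x x' a = p2 u)
    (Γ2 : U1 → X2 → X1 → A2 → ℝ) (hΓ2 : ∀ u x x' a, 0 ≤ Γ2 u x x' a)
    (hΓs2 : ∀ u x x', ∑ a, Γ2 u x x' a = p1 u)
    (s1 δ1 s2 δ2 : ℝ) (hδ1 : 0 < δ1) (hs1 : 0 ≤ s1) (hδ2 : 0 < δ2) (hs2 : 0 ≤ s2)
    (ta1 tb1 tc1 td1 ta2 tb2 tc2 td2 : ℝ)
    (hta1 : 0 ≤ ta1) (htb1 : 0 ≤ tb1) (htc1 : 0 ≤ tc1) (htd1 : 0 ≤ td1)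
    (hta2 : 0 ≤ ta2) (htb2 : 0 ≤ tb2) (htc2 : 0 ≤ tc2) (htd2 : 0 ≤ td2)
    (u01 : U1) (x01 : X1) (u02 : U2) (x02 : X2) :
    ∃ (f1 : U1 → X1) (f2 : U2 → X2) (g1 : A1 → U1) (g2 : A2 → U2),
      (∑ u, ∑ u', ∑ a, p1 u * (Γ1 u' (f1 u) (f2 u') a * (if g1 a = u then 0 else 1))) +
      (∑ u, ∑ u', ∑ a, p2 u * (Γ2 u' (f2 u) (f1 u') a * (if g2 a = u then 0 else 1))) ≤
      2 * encF p1 k1 s1 δ1 M1 + 2 * encF p2 k2 s2 δ2 M2 +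
        decF p1 k1 p2 k2 Γ1 ta1 tb1 tc1 td1 M1 M2 + decF p2 k2 p1 k1 Γ2 ta2 tb2 tc2 td2 M2 M1 := by
  have h1 := recv_bound2 hp1 hps1 hp2 hps2 hk1 hM1 hk2 hM2 hks1 hks2 Γ1 hΓ1 hΓs1 s1 δ1 s2 δ2
    hδ1 hs1 hδ2 hs2 ta1 tb1 tc1 td1 hta1 htb1 htc1 htd1 u01 x01 x02
  have h2 := recv_bound2 hp2 hps2 hp1 hps1 hk2 hM2 hk1 hM1 hks2 hks1 Γ2 hΓ2 hΓs2 s2 δ2 s1 δ1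
    hδ2 hs2 hδ1 hs1 ta2 tb2 tc2 td2 hta2 htb2 htc2 htd2 u02 x02 x01
  have w1 := wt_sum (M := M1) (r := rr p1 k1) (k := k1) (E := EE p1 k1 s1) (rr_sum hps1 hks1)
  have w2 := wt_sum (M := M2) (r := rr p2 k2) (k := k2) (E := EE p2 k2 s2) (rr_sum hps2 hks2)
  have n1 := fun c => wt_nonneg (M := M1) (r := rr p1 k1) (k := k1) (E := EE p1 k1 s1) (rr_nonneg hp1 hk1) hk1 c
  have n2 := fun c => wt_nonneg (M := M2) (r := rr p2 k2) (k := k2) (E := EE p2 k2 s2) (rr_nonneg hp2 hk2) hk2 c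
  obtain ⟨⟨c1, c2⟩, hc⟩ := exists_le_avg
    (fun c : Enc U1 W1 X1 M1 × Enc U2 W2 X2 M2 =>
      wt M1 (rr p1 k1) k1 (EE p1 k1 s1) c.1 * wt M2 (rr p2 k2) k2 (EE p2 k2 s2) c.2)
    (fun c => (∑ u, ∑ u', ∑ a, p1 u * (Γ1 u' (xof x01 c.1 u) (xof x02 c.2 u') a *
        (if dec u01 (TT p1 k1 (rr p2 k2) (GG k2 Γ1) ta1 tb1 tc1 td1) c.1 c.2 a = u then 0 else 1))) +
      (∑ u, ∑ u', ∑ a, p2 u * (Γ2 u' (xof x02 c.2 u) (xof x01 c.1 u') a *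
        (if dec u02 (TT p2 k2 (rr p1 k1) (GG k1 Γ2) ta2 tb2 tc2 td2) c.2 c.1 a = u then 0 else 1))))
    (fun c => mul_nonneg (n1 _) (n2 _))
    (by
      rw [Fintype.sum_prod_type]
      simp_rw [← Finset.mul_sum, w2, mul_one]
      exact w1)
    (2 * encF p1 k1 s1 δ1 M1 + 2 * encF p2 k2 s2 δ2 M2 +
        decF p1 k1 p2 k2 Γ1 ta1 tb1 tc1 td1 M1 M2 + decF p2 k2 p1 k1 Γ2 ta2 tb2 tc2 td2 M2 M1)
    (by
      simp_rw [mul_add]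
      rw [Finset.sum_add_distrib]
      have e1 : ∀ x y, ∀ F : ℝ, wt M1 (rr p1 k1) k1 (EE p1 k1 s1) x * wt M2 (rr p2 k2) k2 (EE p2 k2 s2) y * F =
        wt M1 (rr p1 k1) k1 (EE p1 k1 s1) x * (wt M2 (rr p2 k2) k2 (EE p2 k2 s2) y * F) :=
        fun _ _ _ => by ring
      have e2 : ∀ x y, ∀ F : ℝ, wt M1 (rr p1 k1) k1 (EE p1 k1 s1) x * (wt M2 (rr p2 k2) k2 (EE p2 k2 s2) y * F) =
        wt M2 (rr p2 k2) k2 (EE p2 k2 s2) y * (wt M1 (rr p1 k1) k1 (EE p1 k1 s1) x * F) :=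
        fun _ _ _ => by ring
      have g1 := h1
      have g2 := h2
      simp_rw [Finset.mul_sum (s := (Finset.univ : Finset (Enc U2 W2 X2 M2)))] at g1
      simp_rw [Finset.mul_sum (s := (Finset.univ : Finset (Enc U1 W1 X1 M1)))] at g2
      have g3 := add_le_add g1 g2
      refine le_trans (le_of_eq ?_) (g3.trans (le_of_eq (by ring)))
      congr 1
      · rw [Fintype.sum_prod_type]
        refine Finset.sum_congr rfl fun c _ => Finset.sum_congr rfl fun c' _ => ?_
        exact e1 _ _ _
      · rw [Fintype.sum_prod_type_right]
        refine Finset.sum_congr rfl fun c _ => Finset.sum_congr rfl fun c' _ => ?_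
        rw [e1, e2])
  exact ⟨_, _, _, _, hc⟩

end Both

set_option linter.unusedSectionVars false

/-! ### Chernoff bound -/

theorem chernoff {Θ : Type} [Fintype Θ] (P A B : Θ → ℝ) (hP : ∀ θ, 0 ≤ P θ) (hP1 : ∑ θ, P θ = 1)
    (hAB : ∀ θ, P θ ≠ 0 → 0 < A θ ∧ 0 < B θ) (t : ℝ)
    (ht : ∑ θ, P θ * (Real.logb 2 (A θ) - Real.logb 2 (B θ)) < t) :
    ∃ ρ : ℝ, 0 ≤ ρ ∧ ρ < 1 ∧ ∀ n : ℕ, ∑ θ : Fin n → Θ, (∏ i, P (θ i)) *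
      ind (¬ (∏ i, A (θ i)) ≤ ((2 : ℝ) ^ t) ^ n * ∏ i, B (θ i)) ≤ ρ ^ n := by
  have hl2 : 0 < Real.log 2 := Real.log_pos (by norm_num)
  set L : Θ → ℝ := fun θ => Real.log (A θ) - Real.log (B θ) - t * Real.log 2 with hL
  have hLneg : ∑ θ, P θ * L θ < 0 := by
    have e : ∑ θ, P θ * L θ = (∑ θ, P θ * (Real.logb 2 (A θ) - Real.logb 2 (B θ))) * Real.log 2
        - t * Real.log 2 := by
      rw [Finset.sum_mul]
      have : t * Real.log 2 = ∑ θ, P θ * (t * Real.log 2) := by rw [← Finset.sum_mul, hP1, one_mul]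
      rw [this, ← Finset.sum_sub_distrib]
      refine Finset.sum_congr rfl fun θ _ => ?_
      simp only [hL, Real.logb]
      field_simp
    rw [e]
    nlinarith
  set φ : ℝ → ℝ := fun s => ∑ θ, P θ * Real.exp (s * L θ) with hφ
  have hd : HasDerivAt φ (∑ θ, P θ * L θ) 0 := by
    have : HasDerivAt φ (∑ θ, P θ * (Real.exp (0 * L θ) * (1 * L θ))) 0 := by
      apply HasDerivAt.fun_sum
      intro θ _
      exact (((hasDerivAt_id (0 : ℝ)).mul_const (L θ)).exp).const_mul (P θ)
    simpa using this
  have hφ0 : φ 0 = 1 := by simp [hφ, hP1]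
  obtain ⟨s, hs0, hs1⟩ : ∃ s : ℝ, 0 < s ∧ φ s < 1 := by
    have h1 := hd.tendsto_slope_zero_right
    have h2 := (h1.eventually (gt_mem_nhds hLneg))
    have h3 : ∀ᶠ s : ℝ in nhdsWithin 0 (Set.Ioi 0), 0 < s := self_mem_nhdsWithin
    obtain ⟨s, hs, hs'⟩ := (h2.and h3).exists
    refine ⟨s, hs', ?_⟩
    rw [zero_add, hφ0, smul_eq_mul] at hs
    by_contra hc
    push Not at hc
    have : 0 ≤ s⁻¹ * (φ s - 1) := mul_nonneg (inv_nonneg.2 hs'.le) (by linarith)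
    linarith
  refine ⟨φ s, Finset.sum_nonneg fun θ _ => mul_nonneg (hP θ) (Real.exp_pos _).le, hs1, ?_⟩
  intro n
  have hpow : φ s ^ n = ∑ θ : Fin n → Θ, ∏ i, (P (θ i) * Real.exp (s * L (θ i))) := by
    rw [sum_pi_prod (fun (_ : Fin n) θ => P θ * Real.exp (s * L θ))]
    simp [hφ]
  rw [hpow]
  refine Finset.sum_le_sum fun θ _ => ?_
  rw [Finset.prod_mul_distrib]
  by_cases h0 : ∏ i, P (θ i) = 0
  · simp [h0]
  refine mul_le_mul_of_nonneg_left ?_ (Finset.prod_nonneg fun i _ => hP _)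
  have hpos : ∀ i, 0 < A (θ i) ∧ 0 < B (θ i) := fun i => hAB _ (Finset.prod_ne_zero_iff.1 h0 i (Finset.mem_univ _))
  rw [← Real.exp_sum]
  by_cases hc : (∏ i, A (θ i)) ≤ ((2 : ℝ) ^ t) ^ n * ∏ i, B (θ i)
  · simp [ind, hc, (Real.exp_pos _).le]
  · simp only [ind, hc, not_false_eq_true, if_true]
    rw [Real.one_le_exp_iff, ← Finset.mul_sum]
    refine mul_nonneg hs0.le ?_
    push Not at hc
    have h2t : (0:ℝ) < (2:ℝ) ^ t := Real.rpow_pos_of_pos (by norm_num) _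
    have hB : 0 < ∏ i, B (θ i) := Finset.prod_pos fun i _ => (hpos i).2
    have hlog := Real.log_lt_log (mul_pos (pow_pos h2t n) hB) hc
    rw [Real.log_mul (pow_pos h2t n).ne' hB.ne', Real.log_pow, Real.log_rpow (by norm_num),
      Real.log_prod (fun i _ => (hpos i).1.ne'), Real.log_prod (fun i _ => (hpos i).2.ne')] at hlog
    simp only [hL, Finset.sum_sub_distrib]
    simp only [Finset.sum_const, Finset.card_univ, Fintype.card_fin, nsmul_eq_mul]
    linarith

/-! ### Sums over words -/
section Words
variable {n : ℕ} {A B C D E F : Type} [Fintype A] [Fintype B] [Fintype C] [Fintype D] [Fintype E]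
  [Fintype F]

theorem spp2 (f : Fin n → A → B → ℝ) :
    ∑ a : Fin n → A, ∑ b : Fin n → B, ∏ i, f i (a i) (b i) = ∏ i, ∑ a, ∑ b, f i a b := by
  have h : ∀ a : Fin n → A, ∑ b : Fin n → B, ∏ i, f i (a i) (b i) = ∏ i, ∑ b, f i (a i) b :=
    fun a => sum_pi_prod (fun i b => f i (a i) b)
  simp_rw [h]
  exact sum_pi_prod (fun i a => ∑ b, f i a b)

theorem spp3 (f : Fin n → A → B → C → ℝ) :
    ∑ a : Fin n → A, ∑ b : Fin n → B, ∑ c : Fin n → C, ∏ i, f i (a i) (b i) (c i) =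
      ∏ i, ∑ a, ∑ b, ∑ c, f i a b c := by
  have h : ∀ a : Fin n → A, ∑ b : Fin n → B, ∑ c : Fin n → C, ∏ i, f i (a i) (b i) (c i) =
      ∏ i, ∑ b, ∑ c, f i (a i) b c :=
    fun a => spp2 (fun i b c => f i (a i) b c)
  simp_rw [h]
  exact sum_pi_prod (fun i a => ∑ b, ∑ c, f i a b c)

theorem spp4 (f : Fin n → A → B → C → D → ℝ) :
    ∑ a : Fin n → A, ∑ b : Fin n → B, ∑ c : Fin n → C, ∑ d : Fin n → D,
      ∏ i, f i (a i) (b i) (c i) (d i) = ∏ i, ∑ a, ∑ b, ∑ c, ∑ d, f i a b c d := by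
  have h : ∀ a : Fin n → A, ∑ b : Fin n → B, ∑ c : Fin n → C, ∑ d : Fin n → D,
      ∏ i, f i (a i) (b i) (c i) (d i) = ∏ i, ∑ b, ∑ c, ∑ d, f i (a i) b c d :=
    fun a => spp3 (fun i b c d => f i (a i) b c d)
  simp_rw [h]
  exact sum_pi_prod (fun i a => ∑ b, ∑ c, ∑ d, f i a b c d)

theorem sum_word2 (f : (Fin n → A × B) → ℝ) :
    ∑ θ, f θ = ∑ a : Fin n → A, ∑ b : Fin n → B, f (fun i => (a i, b i)) := by
  rw [← Fintype.sum_prod_type']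
  refine Fintype.sum_equiv (Equiv.arrowProdEquivProdArrow (Fin n) (fun _ => A) (fun _ => B)) _ _ fun θ => rfl

theorem sum_word4 (f : (Fin n → A × B × C × D) → ℝ) :
    ∑ θ, f θ = ∑ a : Fin n → A, ∑ b : Fin n → B, ∑ c : Fin n → C, ∑ d : Fin n → D,
      f (fun i => (a i, b i, c i, d i)) := by
  rw [sum_word2]
  refine Finset.sum_congr rfl fun a _ => ?_
  rw [sum_word2]
  refine Finset.sum_congr rfl fun b _ => ?_
  rw [sum_word2]

theorem sum_word6 (f : (Fin n → A × B × C × D × E × F) → ℝ) :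
    ∑ θ, f θ = ∑ a : Fin n → A, ∑ b : Fin n → B, ∑ c : Fin n → C, ∑ d : Fin n → D,
      ∑ e : Fin n → E, ∑ g : Fin n → F,
      f (fun i => (a i, b i, c i, d i, e i, g i)) := by
  rw [sum_word4]
  refine Finset.sum_congr rfl fun a _ => Finset.sum_congr rfl fun b _ =>
    Finset.sum_congr rfl fun c _ => ?_
  rw [sum_word2]
  refine Finset.sum_congr rfl fun d _ => ?_
  rw [sum_word2]

end Words

section NL
variable {n : ℕ} {Q U W X Z A U' X' : Type} [Fintype Q] [Fintype U] [Fintype W] [Fintype X]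
  [Fintype Z] [Fintype A] [Fintype U'] [Fintype X']

noncomputable def pN (p : U → ℝ) (u : Fin n → U) : ℝ := ∏ i, p (u i)
noncomputable def kN (k : Q → U → W → X → ℝ) (q : Fin n → Q) (u : Fin n → U) (w : Fin n → W)
    (x : Fin n → X) : ℝ := ∏ i, k (q i) (u i) (w i) (x i)
noncomputable def gN (Γ : U' → X → X' → A → ℝ) (u : Fin n → U') (x : Fin n → X)
    (x' : Fin n → X') (a : Fin n → A) : ℝ := ∏ i, Γ (u i) (x i) (x' i) (a i)

variable (p : U → ℝ) (k : Q → U → W → X → ℝ) (k' : Q → U' → Z → X' → ℝ) (Γ : U' → X → X' → A → ℝ)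
  (q : Fin n → Q)

theorem pN_sum (hp1 : ∑ u, p u = 1) : ∑ u, pN (n := n) p u = 1 := by
  simp only [pN]
  rw [sum_pi_prod (fun (_ : Fin n) u => p u)]; simp [hp1]

theorem kN_sum (hk1 : ∀ q u, ∑ w, ∑ x, k q u w x = 1) (u : Fin n → U) :
    ∑ w, ∑ x, kN k q u w x = 1 := by
  simp only [kN]
  rw [spp2 (fun i w x => k (q i) (u i) w x)]; simp [hk1]

theorem rr_N (w : Fin n → W) : rr (pN p) (kN k q) w = ∏ i, rr p (k (q i)) (w i) := by
  simp only [rr, pN, kN, ← Finset.prod_mul_distrib]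
  exact spp2 (fun i u x => p u * k (q i) u (w i) x)

theorem GG_N (x : Fin n → X) (z : Fin n → Z) (a : Fin n → A) :
    GG (kN k' q) (gN Γ) x z a = ∏ i, GG (k' (q i)) Γ (x i) (z i) (a i) := by
  simp only [GG, gN, kN, ← Finset.prod_mul_distrib]
  exact spp2 (fun i u' x' => k' (q i) u' (z i) x' * Γ u' (x i) x' (a i))

theorem K_N (u : Fin n → U) (w : Fin n → W) :
    ∑ x, kN k q u w x = ∏ i, ∑ x, k (q i) (u i) (w i) x := by
  simp only [kN]
  exact sum_pi_prod (fun i x => k (q i) (u i) (w i) x)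

theorem Ja_N (w : Fin n → W) (z : Fin n → Z) (a : Fin n → A) :
    Ja (pN p) (kN k q) (GG (kN k' q) (gN Γ)) w z a =
      ∏ i, Ja p (k (q i)) (GG (k' (q i)) Γ) (w i) (z i) (a i) := by
  simp only [Ja, GG_N]
  simp only [pN, kN, ← Finset.prod_mul_distrib]
  exact spp2 (fun i u x => p u * k (q i) u (w i) x * GG (k' (q i)) Γ x (z i) (a i))

theorem Jb_N (z : Fin n → Z) (a : Fin n → A) :
    Jb (pN p) (kN k q) (GG (kN k' q) (gN Γ)) z a =
      ∏ i, Jb p (k (q i)) (GG (k' (q i)) Γ) (z i) (a i) := by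
  simp only [Jb, GG_N]
  simp only [pN, kN, ← Finset.prod_mul_distrib]
  exact spp3 (fun i u w x => p u * k (q i) u w x * GG (k' (q i)) Γ x (z i) (a i))

theorem Jc_N (w : Fin n → W) (a : Fin n → A) :
    Jc (pN p) (kN k q) (GG (kN k' q) (gN Γ)) w a =
      ∏ i, Jc p (k (q i)) (GG (k' (q i)) Γ) (w i) (a i) := by
  simp only [Jc, GG_N]
  simp only [pN, kN, ← Finset.prod_mul_distrib]
  exact spp3 (fun i u x z => p u * k (q i) u (w i) x * GG (k' (q i)) Γ x z (a i))

theorem Jd_N (a : Fin n → A) :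
    Jd (pN p) (kN k q) (GG (kN k' q) (gN Γ)) a =
      ∏ i, Jd p (k (q i)) (GG (k' (q i)) Γ) (a i) := by
  simp only [Jd, GG_N]
  simp only [pN, kN, ← Finset.prod_mul_distrib]
  exact spp4 (fun i u w x z => p u * k (q i) u w x * GG (k' (q i)) Γ x z (a i))

theorem enc_avg {p : U → ℝ} {k : Q → U → W → X → ℝ} {pQ : Q → ℝ}
    (hQ : ∀ q, 0 ≤ pQ q) (hQ1 : ∑ q, pQ q = 1)
    (hp : ∀ u, 0 ≤ p u) (hp1 : ∑ u, p u = 1)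
    (hk : ∀ q u w x, 0 ≤ k q u w x) (hk1 : ∀ q u, ∑ w, ∑ x, k q u w x = 1) (t : ℝ)
    (ht : ∑ θ : Q × U × W × X, pQ θ.1 * p θ.2.1 * k θ.1 θ.2.1 θ.2.2.1 θ.2.2.2 *
      (Real.logb 2 (∑ x, k θ.1 θ.2.1 θ.2.2.1 x) - Real.logb 2 (rr p (k θ.1) θ.2.2.1)) < t) :
    ∃ ρ : ℝ, 0 ≤ ρ ∧ ρ < 1 ∧ ∀ n : ℕ, ∑ q : Fin n → Q, (∏ i, pQ (q i)) *
      (∑ u, ∑ w, ∑ x, pN p u * kN k q u w x *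
        ind (¬ EE (pN p) (kN k q) (((2 : ℝ) ^ t) ^ n) u w)) ≤ ρ ^ n := by
  obtain ⟨ρ, h0, h1, h2⟩ := chernoff
    (fun θ : Q × U × W × X => pQ θ.1 * p θ.2.1 * k θ.1 θ.2.1 θ.2.2.1 θ.2.2.2)
    (fun θ => ∑ x, k θ.1 θ.2.1 θ.2.2.1 x) (fun θ => rr p (k θ.1) θ.2.2.1)
    (fun θ => mul_nonneg (mul_nonneg (hQ _) (hp _)) (hk _ _ _ _))
    (by
      simp only [Fintype.sum_prod_type, mul_assoc, ← Finset.mul_sum, hk1]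
      simp [hp1, hQ1])
    (by
      rintro ⟨q, u, w, x⟩ hne
      simp only at hne ⊢
      have hk0 : 0 < k q u w x := lt_of_le_of_ne (hk _ _ _ _) (fun h => hne (by simp [← h]))
      have hp0 : 0 < p u := lt_of_le_of_ne (hp _) (fun h => hne (by simp [← h]))
      refine ⟨lt_of_lt_of_le hk0 (Finset.single_le_sum (f := fun x => k q u w x)
        (fun x _ => hk _ _ _ _) (Finset.mem_univ x)), ?_⟩
      exact lt_of_lt_of_le (mul_pos hp0 hk0) (rr_le hp (hk q) u w x))
    t ht
  refine ⟨ρ, h0, h1, fun n => le_trans (le_of_eq ?_) (h2 n)⟩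
  rw [sum_word4]
  refine Finset.sum_congr rfl fun q _ => ?_
  rw [Finset.mul_sum]
  refine Finset.sum_congr rfl fun u _ => ?_
  rw [Finset.mul_sum]
  refine Finset.sum_congr rfl fun w _ => ?_
  rw [Finset.mul_sum]
  refine Finset.sum_congr rfl fun x _ => ?_
  simp only [EE, K_N, rr_N]
  simp only [pN, kN, Finset.prod_mul_distrib, mul_assoc]

theorem Jpos {p : U → ℝ} {k : U → W → X → ℝ} {G : X → Z → A → ℝ}
    (hp : ∀ u, 0 ≤ p u) (hk : ∀ u w x, 0 ≤ k u w x) (hG : ∀ x z a, 0 ≤ G x z a)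
    {u : U} {w : W} {x : X} {z : Z} {a : A} (h : 0 < p u * k u w x * G x z a) :
    0 < Ja p k G w z a ∧ 0 < Jb p k G z a ∧ 0 < Jc p k G w a ∧ 0 < Jd p k G a := by
  have h0 : ∀ u w x z a, 0 ≤ p u * k u w x * G x z a := fun u w x z a =>
    mul_nonneg (mul_nonneg (hp _) (hk _ _ _)) (hG _ _ _)
  have ha : 0 < Ja p k G w z a := by
    refine Finset.sum_pos' (fun u _ => Finset.sum_nonneg fun x _ => h0 _ _ _ _ _) ⟨u, Finset.mem_univ _, ?_⟩
    exact Finset.sum_pos' (fun x _ => h0 _ _ _ _ _) ⟨x, Finset.mem_univ _, h⟩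
  have hb : 0 < Jb p k G z a := by
    refine Finset.sum_pos' (fun u _ => Finset.sum_nonneg fun w _ => Finset.sum_nonneg fun x _ =>
      h0 _ _ _ _ _) ⟨u, Finset.mem_univ _, ?_⟩
    refine Finset.sum_pos' (fun w _ => Finset.sum_nonneg fun x _ => h0 _ _ _ _ _) ⟨w, Finset.mem_univ _, ?_⟩
    exact Finset.sum_pos' (fun x _ => h0 _ _ _ _ _) ⟨x, Finset.mem_univ _, h⟩
  have hc : 0 < Jc p k G w a := by
    refine Finset.sum_pos' (fun u _ => Finset.sum_nonneg fun w _ => Finset.sum_nonneg fun x _ =>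
      h0 _ _ _ _ _) ⟨u, Finset.mem_univ _, ?_⟩
    refine Finset.sum_pos' (fun w _ => Finset.sum_nonneg fun x _ => h0 _ _ _ _ _) ⟨x, Finset.mem_univ _, ?_⟩
    exact Finset.sum_pos' (fun x _ => h0 _ _ _ _ _) ⟨z, Finset.mem_univ _, h⟩
  refine ⟨ha, hb, hc, ?_⟩
  refine Finset.sum_pos' (fun u _ => Finset.sum_nonneg fun w _ => Finset.sum_nonneg fun x _ =>
      Finset.sum_nonneg fun z _ => h0 _ _ _ _ _) ⟨u, Finset.mem_univ _, ?_⟩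
  refine Finset.sum_pos' (fun w _ => Finset.sum_nonneg fun x _ =>
      Finset.sum_nonneg fun z _ => h0 _ _ _ _ _) ⟨w, Finset.mem_univ _, ?_⟩
  refine Finset.sum_pos' (fun w _ => Finset.sum_nonneg fun x _ => h0 _ _ _ _ _) ⟨x, Finset.mem_univ _, ?_⟩
  exact Finset.sum_pos' (fun x _ => h0 _ _ _ _ _) ⟨z, Finset.mem_univ _, h⟩

end NL

set_option linter.unusedSectionVars false

theorem ind_and4 (a b c d : Prop) :
    ind (¬ (a ∧ b ∧ c ∧ d)) ≤ ind (¬ a) + ind (¬ b) + ind (¬ c) + ind (¬ d) := by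
  unfold ind
  by_cases ha : a <;> by_cases hb : b <;> by_cases hc : c <;> by_cases hd : d <;> simp [ha, hb, hc, hd]
  all_goals norm_num

section NL
variable {Q U W X Z A U' X' : Type} [Fintype Q] [Fintype U] [Fintype W] [Fintype X]
  [Fintype Z] [Fintype A] [Fintype U'] [Fintype X']

theorem GG_sum {p' : U' → ℝ} (k' : U' → Z → X' → ℝ) {Γ : U' → X → X' → A → ℝ}
    (hΓ1 : ∀ u x x', ∑ a, Γ u x x' a = p' u) (x : X) (z : Z) :
    ∑ a, GG k' Γ x z a = rr p' k' z := by
  simp only [GG, rr]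
  rw [Finset.sum_comm]
  refine Finset.sum_congr rfl fun u' _ => ?_
  rw [Finset.sum_comm]
  refine Finset.sum_congr rfl fun x' _ => ?_
  rw [← Finset.mul_sum, hΓ1]; ring

theorem GG_nonneg {k' : U' → Z → X' → ℝ} {Γ : U' → X → X' → A → ℝ}
    (hk' : ∀ u w x, 0 ≤ k' u w x) (hΓ : ∀ u x x' a, 0 ≤ Γ u x x' a) (x : X) (z : Z) (a : A) :
    0 ≤ GG k' Γ x z a :=
  Finset.sum_nonneg fun u' _ => Finset.sum_nonneg fun x' _ => mul_nonneg (hk' _ _ _) (hΓ _ _ _ _)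

/-- single-letter law seen by one receiver -/
noncomputable def PP (pQ : Q → ℝ) (p : U → ℝ) (k : Q → U → W → X → ℝ) (k' : Q → U' → Z → X' → ℝ)
    (Γ : U' → X → X' → A → ℝ) (θ : Q × U × W × X × Z × A) : ℝ :=
  pQ θ.1 * (p θ.2.1 * k θ.1 θ.2.1 θ.2.2.1 θ.2.2.2.1 *
    GG (k' θ.1) Γ θ.2.2.2.1 θ.2.2.2.2.1 θ.2.2.2.2.2)

noncomputable def BBd (p : U → ℝ) (k : Q → U → W → X → ℝ) (k' : Q → U' → Z → X' → ℝ)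
    (Γ : U' → X → X' → A → ℝ) (θ : Q × U × W × X × Z × A) : ℝ :=
  p θ.2.1 * k θ.1 θ.2.1 θ.2.2.1 θ.2.2.2.1 *
    GG (k' θ.1) Γ θ.2.2.2.1 θ.2.2.2.2.1 θ.2.2.2.2.2

noncomputable def Aa (p : U → ℝ) (k : Q → U → W → X → ℝ) (k' : Q → U' → Z → X' → ℝ)
    (Γ : U' → X → X' → A → ℝ) (θ : Q × U × W × X × Z × A) : ℝ :=
  Ja p (k θ.1) (GG (k' θ.1) Γ) θ.2.2.1 θ.2.2.2.2.1 θ.2.2.2.2.2 *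
    (k θ.1 θ.2.1 θ.2.2.1 θ.2.2.2.1 / rr p (k θ.1) θ.2.2.1)
noncomputable def Ab (p : U → ℝ) (k : Q → U → W → X → ℝ) (k' : Q → U' → Z → X' → ℝ)
    (Γ : U' → X → X' → A → ℝ) (θ : Q × U × W × X × Z × A) : ℝ :=
  Jb p (k θ.1) (GG (k' θ.1) Γ) θ.2.2.2.2.1 θ.2.2.2.2.2 *
    k θ.1 θ.2.1 θ.2.2.1 θ.2.2.2.1
noncomputable def Ac (p : U → ℝ) (k : Q → U → W → X → ℝ) (p' : U' → ℝ) (k' : Q → U' → Z → X' → ℝ)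
    (Γ : U' → X → X' → A → ℝ) (θ : Q × U × W × X × Z × A) : ℝ :=
  Jc p (k θ.1) (GG (k' θ.1) Γ) θ.2.2.1 θ.2.2.2.2.2 * rr p' (k' θ.1) θ.2.2.2.2.1 *
    (k θ.1 θ.2.1 θ.2.2.1 θ.2.2.2.1 / rr p (k θ.1) θ.2.2.1)
noncomputable def Ad (p : U → ℝ) (k : Q → U → W → X → ℝ) (p' : U' → ℝ) (k' : Q → U' → Z → X' → ℝ)
    (Γ : U' → X → X' → A → ℝ) (θ : Q × U × W × X × Z × A) : ℝ :=
  Jd p (k θ.1) (GG (k' θ.1) Γ) θ.2.2.2.2.2 * rr p' (k' θ.1) θ.2.2.2.2.1 *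
    k θ.1 θ.2.1 θ.2.2.1 θ.2.2.2.1

theorem PP_sum {p : U → ℝ} {k : Q → U → W → X → ℝ} {pQ : Q → ℝ}
    {p' : U' → ℝ} {k' : Q → U' → Z → X' → ℝ} {Γ : U' → X → X' → A → ℝ}
    (hQ1 : ∑ q, pQ q = 1) (hp1 : ∑ u, p u = 1) (hk1 : ∀ q u, ∑ w, ∑ x, k q u w x = 1)
    (hp1' : ∑ u, p' u = 1) (hk1' : ∀ q u, ∑ w, ∑ x, k' q u w x = 1)
    (hΓ1 : ∀ u x x', ∑ a, Γ u x x' a = p' u) : ∑ θ, PP pQ p k k' Γ θ = 1 := by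
  simp only [PP, Fintype.sum_prod_type, mul_assoc, ← Finset.mul_sum]
  simp only [GG_sum _ hΓ1, rr_sum hp1' (hk1' _), mul_one, hk1, hp1, hQ1]

theorem PP_pos {p : U → ℝ} {k : Q → U → W → X → ℝ} {pQ : Q → ℝ}
    {p' : U' → ℝ} {k' : Q → U' → Z → X' → ℝ} {Γ : U' → X → X' → A → ℝ}
    (hp : ∀ u, 0 ≤ p u) (hQ : ∀ q, 0 ≤ pQ q)
    (hk : ∀ q u w x, 0 ≤ k q u w x)
    (hk' : ∀ q u w x, 0 ≤ k' q u w x)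
    (hΓ : ∀ u x x' a, 0 ≤ Γ u x x' a)
    (hΓ1 : ∀ u x x', ∑ a, Γ u x x' a = p' u) (q : Q) (u : U) (w : W) (x : X) (z : Z) (a : A)
    (h : PP pQ p k k' Γ (q, u, w, x, z, a) ≠ 0) :
    0 < pQ q ∧ 0 < p u ∧ 0 < k q u w x ∧ 0 < GG (k' q) Γ x z a ∧ 0 < rr p (k q) w ∧
    0 < rr p' (k' q) z ∧ 
    0 < Ja p (k q) (GG (k' q) Γ) w z a ∧ 0 < Jb p (k q) (GG (k' q) Γ) z a ∧
    0 < Jc p (k q) (GG (k' q) Γ) w a ∧ 0 < Jd p (k q) (GG (k' q) Γ) a := by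
  simp only [PP] at h
  have h1 : 0 < pQ q := lt_of_le_of_ne (hQ _) (fun h' => h (by simp [← h']))
  have h2 : 0 < p u := lt_of_le_of_ne (hp _) (fun h' => h (by simp [← h']))
  have h3 : 0 < k q u w x := lt_of_le_of_ne (hk _ _ _ _) (fun h' => h (by simp [← h']))
  have h4 : 0 < GG (k' q) Γ x z a :=
    lt_of_le_of_ne (GG_nonneg (hk' q) hΓ _ _ _) (fun h' => h (by simp [← h']))
  have h5 := Jpos hp (hk q) (GG_nonneg (hk' q) hΓ) (mul_pos (mul_pos h2 h3) h4)
  refine ⟨h1, h2, h3, h4, lt_of_lt_of_le (mul_pos h2 h3) (rr_le hp (hk q) u w x), ?_, h5⟩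
  rw [← GG_sum (k' q) hΓ1 x z]
  exact Finset.sum_pos' (fun a _ => GG_nonneg (hk' q) hΓ _ _ _) ⟨a, Finset.mem_univ _, h4⟩

theorem dec_avg {p : U → ℝ} {k : Q → U → W → X → ℝ} {pQ : Q → ℝ}
    {p' : U' → ℝ} {k' : Q → U' → Z → X' → ℝ} {Γ : U' → X → X' → A → ℝ}
    (hQ : ∀ q, 0 ≤ pQ q) (hQ1 : ∑ q, pQ q = 1)
    (hp : ∀ u, 0 ≤ p u) (hp1 : ∑ u, p u = 1)
    (hk : ∀ q u w x, 0 ≤ k q u w x) (hk1 : ∀ q u, ∑ w, ∑ x, k q u w x = 1)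
    (hp1' : ∑ u, p' u = 1)
    (hk' : ∀ q u w x, 0 ≤ k' q u w x) (hk1' : ∀ q u, ∑ w, ∑ x, k' q u w x = 1)
    (hΓ : ∀ u x x' a, 0 ≤ Γ u x x' a)
    (hΓ1 : ∀ u x x', ∑ a, Γ u x x' a = p' u)
    (ta tb tc td : ℝ)
    (hta : ∑ θ, PP pQ p k k' Γ θ * (logb 2 (Aa p k k' Γ θ) - logb 2 (BBd p k k' Γ θ)) < ta)
    (htb : ∑ θ, PP pQ p k k' Γ θ * (logb 2 (Ab p k k' Γ θ) - logb 2 (BBd p k k' Γ θ)) < tb)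
    (htc : ∑ θ, PP pQ p k k' Γ θ * (logb 2 (Ac p k p' k' Γ θ) - logb 2 (BBd p k k' Γ θ)) < tc)
    (htd : ∑ θ, PP pQ p k k' Γ θ * (logb 2 (Ad p k p' k' Γ θ) - logb 2 (BBd p k k' Γ θ)) < td) :
    ∃ ρ : ℝ, 0 ≤ ρ ∧ ρ < 1 ∧ ∀ n : ℕ, ∑ q : Fin n → Q, (∏ i, pQ (q i)) *
      (∑ u, ∑ w, ∑ x, ∑ z, ∑ a, pN p u * kN k q u w x * GG (kN k' q) (gN Γ) x z a *
        ind (¬ TT (pN p) (kN k q) (rr (pN p') (kN k' q)) (GG (kN k' q) (gN Γ))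
          (((2 : ℝ) ^ ta) ^ n) (((2 : ℝ) ^ tb) ^ n) (((2 : ℝ) ^ tc) ^ n) (((2 : ℝ) ^ td) ^ n)
          u w x z a)) ≤ 4 * ρ ^ n := by
  have hpos := PP_pos (k := k) (k' := k') (Γ := Γ) hp hQ hk hk' hΓ hΓ1
  have hP0 : ∀ θ, 0 ≤ PP pQ p k k' Γ θ := fun θ => mul_nonneg (hQ _) (mul_nonneg (mul_nonneg (hp _)
    (hk _ _ _ _)) (GG_nonneg (hk' _) hΓ _ _ _))
  have hP1 := PP_sum (k := k) hQ1 hp1 hk1 hp1' hk1' hΓ1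
  obtain ⟨ρ1, h10, h11, h12⟩ := chernoff _ _ _ hP0 hP1 (by
    rintro ⟨q, u, w, x, z, a⟩ h
    obtain ⟨g1, g2, g3, g4, g5, g6, g7, g8, g9, g10⟩ := hpos q u w x z a h
    simp only [Aa, BBd]
    constructor <;> positivity) ta hta
  obtain ⟨ρ2, h20, h21, h22⟩ := chernoff _ _ _ hP0 hP1 (by
    rintro ⟨q, u, w, x, z, a⟩ h
    obtain ⟨g1, g2, g3, g4, g5, g6, g7, g8, g9, g10⟩ := hpos q u w x z a h
    simp only [Ab, BBd]
    constructor <;> positivity) tb htb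
  obtain ⟨ρ3, h30, h31, h32⟩ := chernoff _ _ _ hP0 hP1 (by
    rintro ⟨q, u, w, x, z, a⟩ h
    obtain ⟨g1, g2, g3, g4, g5, g6, g7, g8, g9, g10⟩ := hpos q u w x z a h
    simp only [Ac, BBd]
    constructor <;> positivity) tc htc
  obtain ⟨ρ4, h40, h41, h42⟩ := chernoff _ _ _ hP0 hP1 (by
    rintro ⟨q, u, w, x, z, a⟩ h
    obtain ⟨g1, g2, g3, g4, g5, g6, g7, g8, g9, g10⟩ := hpos q u w x z a h
    simp only [Ad, BBd]
    constructor <;> positivity) td htd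
  refine ⟨max (max ρ1 ρ2) (max ρ3 ρ4), le_max_of_le_left (le_max_of_le_left h10),
    max_lt (max_lt h11 h21) (max_lt h31 h41), fun n => ?_⟩
  have b1 : ρ1 ^ n ≤ (max (max ρ1 ρ2) (max ρ3 ρ4)) ^ n := pow_le_pow_left₀ h10 (by simp) n
  have b2 : ρ2 ^ n ≤ (max (max ρ1 ρ2) (max ρ3 ρ4)) ^ n := pow_le_pow_left₀ h20 (by simp) n
  have b3 : ρ3 ^ n ≤ (max (max ρ1 ρ2) (max ρ3 ρ4)) ^ n := pow_le_pow_left₀ h30 (by simp) n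
  have b4 : ρ4 ^ n ≤ (max (max ρ1 ρ2) (max ρ3 ρ4)) ^ n := pow_le_pow_left₀ h40 (by simp) n
  have c1 := h12 n
  have c2 := h22 n
  have c3 := h32 n
  have c4 := h42 n
  have c5 := add_le_add (add_le_add (add_le_add (c1.trans b1) (c2.trans b2)) (c3.trans b3)) (c4.trans b4)
  refine le_trans ?_ (c5.trans (le_of_eq (by ring)))
  rw [← Finset.sum_add_distrib, ← Finset.sum_add_distrib, ← Finset.sum_add_distrib, sum_word6]
  refine Finset.sum_le_sum fun q _ => ?_
  rw [Finset.mul_sum]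
  refine Finset.sum_le_sum fun u _ => ?_
  rw [Finset.mul_sum]
  refine Finset.sum_le_sum fun w _ => ?_
  rw [Finset.mul_sum]
  refine Finset.sum_le_sum fun x _ => ?_
  rw [Finset.mul_sum]
  refine Finset.sum_le_sum fun z _ => ?_
  rw [Finset.mul_sum]
  refine Finset.sum_le_sum fun a _ => ?_
  rw [← mul_add, ← mul_add, ← mul_add, ← mul_assoc]
  have eP : (∏ i, pQ (q i)) * (pN p u * kN k q u w x * GG (kN k' q) (gN Γ) x z a) =
      ∏ i, PP pQ p k k' Γ (q i, u i, w i, x i, z i, a i) := by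
    simp only [GG_N]
    simp only [PP, pN, kN, Finset.prod_mul_distrib]
  rw [eP]
  refine mul_le_mul_of_nonneg_left ?_ (Finset.prod_nonneg fun i _ => hP0 _)
  refine (ind_and4 _ _ _ _).trans (le_of_eq ?_)
  simp only [Ja_N, Jb_N, Jc_N, Jd_N, GG_N, rr_N]
  simp only [Aa, Ab, Ac, Ad, BBd, pN, kN, Finset.prod_mul_distrib, Finset.prod_div_distrib]

end NL

set_option linter.unusedSectionVars false

theorem ite_eq_ind (P : Prop) [Decidable P] : (if P then (0 : ℝ) else 1) = ind (¬ P) := by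
  by_cases h : P <;> simp [ind, h]

noncomputable def MM (R : ℝ) (n : ℕ) : ℕ := ⌈((2 : ℝ) ^ R) ^ n⌉₊

theorem two_rpow_pos (R : ℝ) : (0 : ℝ) < 2 ^ R := Real.rpow_pos_of_pos (by norm_num) R

theorem MM_ge (R : ℝ) (n : ℕ) : ((2 : ℝ) ^ R) ^ n ≤ MM R n := Nat.le_ceil _

theorem MM_pos (R : ℝ) (n : ℕ) : 0 < MM R n := by
  unfold MM
  exact Nat.ceil_pos.2 (pow_pos (two_rpow_pos R) n)

theorem MM_le (R : ℝ) (hR : 0 ≤ R) (n : ℕ) : (MM R n : ℝ) ≤ 2 * ((2 : ℝ) ^ R) ^ n := by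
  have h1 : (1 : ℝ) ≤ ((2 : ℝ) ^ R) ^ n := one_le_pow₀ (Real.one_le_rpow (by norm_num) hR)
  have h2 := Nat.ceil_lt_add_one (a := ((2 : ℝ) ^ R) ^ n) (by positivity)
  have h3 : (MM R n : ℝ) < ((2 : ℝ) ^ R) ^ n + 1 := h2
  linarith

theorem two_tendsto {t : ℝ} (ht : t < 0) : Tendsto (fun n : ℕ => ((2 : ℝ) ^ t) ^ n) atTop (nhds 0) :=
  tendsto_pow_atTop_nhds_zero_of_lt_one (two_rpow_pos t).le
    (Real.rpow_lt_one_of_one_lt_of_neg (by norm_num) ht)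

theorem avg_add_const {C : Type} [Fintype C] (g f : C → ℝ) (hg1 : ∑ c, g c = 1) (b : ℝ) :
    ∑ c, g c * (f c + b) = (∑ c, g c * f c) + b := by
  simp_rw [mul_add]
  rw [Finset.sum_add_distrib, ← Finset.sum_mul, hg1, one_mul]

section NL
variable {Q U W X Z A U' X' : Type} [Fintype Q] [Fintype U] [Fintype W] [Fintype X]
  [Fintype Z] [Fintype A] [Fintype U'] [Fintype X']

theorem enc_lim {p : U → ℝ} {k : Q → U → W → X → ℝ} {pQ : Q → ℝ}
    (hQ : ∀ q, 0 ≤ pQ q) (hQ1 : ∑ q, pQ q = 1)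
    (hp : ∀ u, 0 ≤ p u) (hp1 : ∑ u, p u = 1)
    (hk : ∀ q u w x, 0 ≤ k q u w x) (hk1 : ∀ q u, ∑ w, ∑ x, k q u w x = 1) (t R : ℝ)
    (ht : ∑ θ : Q × U × W × X, pQ θ.1 * p θ.2.1 * k θ.1 θ.2.1 θ.2.2.1 θ.2.2.2 *
      (Real.logb 2 (∑ x, k θ.1 θ.2.1 θ.2.2.1 x) - Real.logb 2 (rr p (k θ.1) θ.2.2.1)) < t)
    (htR : t < R) :
    ∃ B : ℕ → ℝ, Tendsto B atTop (nhds 0) ∧ ∀ n : ℕ, ∑ q : Fin n → Q, (∏ i, pQ (q i)) *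
      encF (pN p) (kN k q) (((2 : ℝ) ^ t) ^ n) (((2 : ℝ) ^ ((t - R) / 2)) ^ n) (MM R n) ≤ B n := by
  obtain ⟨ρ, h0, h1, h2⟩ := enc_avg hQ hQ1 hp hp1 hk hk1 t ht
  refine ⟨fun n => ρ ^ n + (((2 : ℝ) ^ ((t - R) / 2)) ^ n + ((2 : ℝ) ^ ((t - R) / 2)) ^ n), ?_, ?_⟩
  · have a := tendsto_pow_atTop_nhds_zero_of_lt_one h0 h1
    have b := two_tendsto (t := (t - R) / 2) (by linarith)
    simpa using a.add (b.add b)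
  · intro n
    simp only [encF]
    have hw : ∑ q : Fin n → Q, ∏ i, pQ (q i) = 1 := pN_sum pQ hQ1
    rw [avg_add_const _ _ hw]
    refine add_le_add (h2 n) ?_
    refine add_le_add le_rfl ?_
    rw [div_le_iff₀ (mul_pos (by exact_mod_cast MM_pos R n) (pow_pos (two_rpow_pos _) n))]
    have e : ((2 : ℝ) ^ t) ^ n = ((2 : ℝ) ^ ((t - R) / 2)) ^ n * (((2 : ℝ) ^ R) ^ n *
        ((2 : ℝ) ^ ((t - R) / 2)) ^ n) := by
      rw [← mul_pow, ← mul_pow, ← Real.rpow_add (by norm_num), ← Real.rpow_add (by norm_num)]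
      congr 2; ring
    rw [e]
    have := MM_ge R n
    have hh := pow_pos (two_rpow_pos ((t - R) / 2)) n
    gcongr

theorem dec_lim {p : U → ℝ} {k : Q → U → W → X → ℝ} {pQ : Q → ℝ}
    {p' : U' → ℝ} {k' : Q → U' → Z → X' → ℝ} {Γ : U' → X → X' → A → ℝ}
    (hQ : ∀ q, 0 ≤ pQ q) (hQ1 : ∑ q, pQ q = 1)
    (hp : ∀ u, 0 ≤ p u) (hp1 : ∑ u, p u = 1)
    (hk : ∀ q u w x, 0 ≤ k q u w x) (hk1 : ∀ q u, ∑ w, ∑ x, k q u w x = 1)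
    (hp1' : ∑ u, p' u = 1)
    (hk' : ∀ q u w x, 0 ≤ k' q u w x) (hk1' : ∀ q u, ∑ w, ∑ x, k' q u w x = 1)
    (hΓ : ∀ u x x' a, 0 ≤ Γ u x x' a)
    (hΓ1 : ∀ u x x', ∑ a, Γ u x x' a = p' u)
    (ta tb tc td R R' : ℝ) (hR' : 0 ≤ R')
    (hta : ∑ θ, PP pQ p k k' Γ θ * (logb 2 (Aa p k k' Γ θ) - logb 2 (BBd p k k' Γ θ)) < ta)
    (htb : ∑ θ, PP pQ p k k' Γ θ * (logb 2 (Ab p k k' Γ θ) - logb 2 (BBd p k k' Γ θ)) < tb)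
    (htc : ∑ θ, PP pQ p k k' Γ θ * (logb 2 (Ac p k p' k' Γ θ) - logb 2 (BBd p k k' Γ θ)) < tc)
    (htd : ∑ θ, PP pQ p k k' Γ θ * (logb 2 (Ad p k p' k' Γ θ) - logb 2 (BBd p k k' Γ θ)) < td)
    (ha : ta < R) (hb : tb < 0) (hc : tc + R' < R) (hd : td + R' < 0) :
    ∃ B : ℕ → ℝ, Tendsto B atTop (nhds 0) ∧ ∀ n : ℕ, ∑ q : Fin n → Q, (∏ i, pQ (q i)) *
      decF (pN p) (kN k q) (pN p') (kN k' q) (gN Γ)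
        (((2 : ℝ) ^ ta) ^ n) (((2 : ℝ) ^ tb) ^ n) (((2 : ℝ) ^ tc) ^ n) (((2 : ℝ) ^ td) ^ n)
        (MM R n) (MM R' n) ≤ B n := by
  obtain ⟨ρ, h0, h1, h2⟩ := dec_avg hQ hQ1 hp hp1 hk hk1 hp1' hk' hk1' hΓ hΓ1 ta tb tc td hta htb htc htd
  refine ⟨fun n => 4 * ρ ^ n + (((2 : ℝ) ^ (ta - R)) ^ n + ((2 : ℝ) ^ tb) ^ n +
    2 * ((2 : ℝ) ^ (tc + R' - R)) ^ n + 2 * ((2 : ℝ) ^ (td + R')) ^ n), ?_, ?_⟩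
  · have a0 := (tendsto_pow_atTop_nhds_zero_of_lt_one h0 h1).const_mul 4
    have a1 := two_tendsto (t := ta - R) (by linarith)
    have a2 := two_tendsto (t := tb) (by linarith)
    have a3 := (two_tendsto (t := tc + R' - R) (by linarith)).const_mul 2
    have a4 := (two_tendsto (t := td + R') (by linarith)).const_mul 2
    simpa using a0.add (((a1.add a2).add a3).add a4)
  · intro n
    simp only [decF]
    have hw : ∑ q : Fin n → Q, ∏ i, pQ (q i) = 1 := pN_sum pQ hQ1
    rw [avg_add_const _ _ hw]
    have hM : (0 : ℝ) < MM R n := by exact_mod_cast MM_pos R n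
    have hM1 := MM_ge R n
    have hM2 := MM_le R' hR' n
    have hR0 := pow_pos (two_rpow_pos R) n
    have hR0' := pow_pos (two_rpow_pos R') n
    refine add_le_add (h2 n) (add_le_add (add_le_add (add_le_add ?_ le_rfl) ?_) ?_)
    · rw [div_le_iff₀ hM]
      have e : ((2 : ℝ) ^ ta) ^ n = ((2 : ℝ) ^ (ta - R)) ^ n * ((2 : ℝ) ^ R) ^ n := by
        rw [← mul_pow, ← Real.rpow_add (by norm_num)]
        congr 2; ring
      rw [e]
      have hh := pow_pos (two_rpow_pos (ta - R)) n
      gcongr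
    · rw [div_le_iff₀ hM]
      have e : ((2 : ℝ) ^ tc) ^ n * ((2 : ℝ) ^ R') ^ n =
          ((2 : ℝ) ^ (tc + R' - R)) ^ n * ((2 : ℝ) ^ R) ^ n := by
        rw [← mul_pow, ← mul_pow, ← Real.rpow_add (by norm_num), ← Real.rpow_add (by norm_num)]
        congr 2; ring
      calc ((2 : ℝ) ^ tc) ^ n * MM R' n ≤ ((2 : ℝ) ^ tc) ^ n * (2 * ((2 : ℝ) ^ R') ^ n) :=
            mul_le_mul_of_nonneg_left hM2 (pow_pos (two_rpow_pos _) n).le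
        _ = 2 * (((2 : ℝ) ^ tc) ^ n * ((2 : ℝ) ^ R') ^ n) := by ring
        _ = 2 * ((2 : ℝ) ^ (tc + R' - R)) ^ n * ((2 : ℝ) ^ R) ^ n := by rw [e]; ring
        _ ≤ _ := mul_le_mul_of_nonneg_left hM1 (by positivity)
    · have e : ((2 : ℝ) ^ td) ^ n * ((2 : ℝ) ^ R') ^ n = ((2 : ℝ) ^ (td + R')) ^ n := by
        rw [← mul_pow, ← Real.rpow_add (by norm_num)]
      calc ((2 : ℝ) ^ td) ^ n * MM R' n ≤ ((2 : ℝ) ^ td) ^ n * (2 * ((2 : ℝ) ^ R') ^ n) :=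
            mul_le_mul_of_nonneg_left hM2 (pow_pos (two_rpow_pos _) n).le
        _ = 2 * (((2 : ℝ) ^ td) ^ n * ((2 : ℝ) ^ R') ^ n) := by ring
        _ = _ := by rw [e]

end NL

section Both
variable {Q U1 W1 X1 U2 W2 X2 A1 A2 : Type} [Fintype Q] [Fintype U1] [Fintype W1] [Fintype X1] [Fintype U2]
  [Fintype W2] [Fintype X2] [Fintype A1] [Fintype A2]

set_option maxHeartbeats 2000000 in
theorem coding {pQ : Q → ℝ} {p1 : U1 → ℝ} {k1 : Q → U1 → W1 → X1 → ℝ}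
    {p2 : U2 → ℝ} {k2 : Q → U2 → W2 → X2 → ℝ}
    (hQ : ∀ q, 0 ≤ pQ q) (hQ1 : ∑ q, pQ q = 1)
    (hp1 : ∀ u, 0 ≤ p1 u) (hps1 : ∑ u, p1 u = 1) (hp2 : ∀ u, 0 ≤ p2 u) (hps2 : ∑ u, p2 u = 1)
    (hk1 : ∀ q u w x, 0 ≤ k1 q u w x) (hk2 : ∀ q u w x, 0 ≤ k2 q u w x)
    (hks1 : ∀ q u, ∑ w, ∑ x, k1 q u w x = 1) (hks2 : ∀ q u, ∑ w, ∑ x, k2 q u w x = 1)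
    (Γ1 : U2 → X1 → X2 → A1 → ℝ) (hΓ1 : ∀ u x x' a, 0 ≤ Γ1 u x x' a)
    (hΓs1 : ∀ u x x', ∑ a, Γ1 u x x' a = p2 u)
    (Γ2 : U1 → X2 → X1 → A2 → ℝ) (hΓ2 : ∀ u x x' a, 0 ≤ Γ2 u x x' a)
    (hΓs2 : ∀ u x x', ∑ a, Γ2 u x x' a = p1 u)
    (R1 R2 : ℝ) (hR1 : 0 ≤ R1) (hR2 : 0 ≤ R2)
    (he1 : ∑ θ : Q × U1 × W1 × X1, pQ θ.1 * p1 θ.2.1 * k1 θ.1 θ.2.1 θ.2.2.1 θ.2.2.2 *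
      (Real.logb 2 (∑ x, k1 θ.1 θ.2.1 θ.2.2.1 x) - Real.logb 2 (rr p1 (k1 θ.1) θ.2.2.1)) < R1)
    (he2 : ∑ θ : Q × U2 × W2 × X2, pQ θ.1 * p2 θ.2.1 * k2 θ.1 θ.2.1 θ.2.2.1 θ.2.2.2 *
      (Real.logb 2 (∑ x, k2 θ.1 θ.2.1 θ.2.2.1 x) - Real.logb 2 (rr p2 (k2 θ.1) θ.2.2.1)) < R2)
    (ha1 : ∑ θ, PP pQ p1 k1 k2 Γ1 θ * (logb 2 (Aa p1 k1 k2 Γ1 θ) - logb 2 (BBd p1 k1 k2 Γ1 θ)) < R1)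
    (hb1 : ∑ θ, PP pQ p1 k1 k2 Γ1 θ * (logb 2 (Ab p1 k1 k2 Γ1 θ) - logb 2 (BBd p1 k1 k2 Γ1 θ)) < 0)
    (hc1 : ∑ θ, PP pQ p1 k1 k2 Γ1 θ * (logb 2 (Ac p1 k1 p2 k2 Γ1 θ) - logb 2 (BBd p1 k1 k2 Γ1 θ)) <
      R1 - R2)
    (hd1 : ∑ θ, PP pQ p1 k1 k2 Γ1 θ * (logb 2 (Ad p1 k1 p2 k2 Γ1 θ) - logb 2 (BBd p1 k1 k2 Γ1 θ)) < -R2)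
    (ha2 : ∑ θ, PP pQ p2 k2 k1 Γ2 θ * (logb 2 (Aa p2 k2 k1 Γ2 θ) - logb 2 (BBd p2 k2 k1 Γ2 θ)) < R2)
    (hb2 : ∑ θ, PP pQ p2 k2 k1 Γ2 θ * (logb 2 (Ab p2 k2 k1 Γ2 θ) - logb 2 (BBd p2 k2 k1 Γ2 θ)) < 0)
    (hc2 : ∑ θ, PP pQ p2 k2 k1 Γ2 θ * (logb 2 (Ac p2 k2 p1 k1 Γ2 θ) - logb 2 (BBd p2 k2 k1 Γ2 θ)) <
      R2 - R1)
    (hd2 : ∑ θ, PP pQ p2 k2 k1 Γ2 θ * (logb 2 (Ad p2 k2 p1 k1 Γ2 θ) - logb 2 (BBd p2 k2 k1 Γ2 θ)) < -R1)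
    (u01 : U1) (x01 : X1) (u02 : U2) (x02 : X2) :
    ∃ B : ℕ → ℝ, Tendsto B atTop (nhds 0) ∧ ∀ n : ℕ,
    ∃ (f1 : (Fin n → U1) → Fin n → X1) (f2 : (Fin n → U2) → Fin n → X2)
      (g1 : (Fin n → A1) → Fin n → U1) (g2 : (Fin n → A2) → Fin n → U2),
      (∑ u, ∑ u', ∑ a, pN p1 u * (gN Γ1 u' (f1 u) (f2 u') a * ind (¬ g1 a = u))) +
      (∑ u, ∑ u', ∑ a, pN p2 u * (gN Γ2 u' (f2 u) (f1 u') a * ind (¬ g2 a = u))) ≤ B n := by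
  obtain ⟨s1, hs1, hs1'⟩ := exists_between he1
  obtain ⟨s2, hs2, hs2'⟩ := exists_between he2
  obtain ⟨ta1, ha1, ha1'⟩ := exists_between ha1
  obtain ⟨tb1, hb1, hb1'⟩ := exists_between hb1
  obtain ⟨tc1, hc1, hc1'⟩ := exists_between hc1
  obtain ⟨td1, hd1, hd1'⟩ := exists_between hd1
  obtain ⟨ta2, ha2, ha2'⟩ := exists_between ha2
  obtain ⟨tb2, hb2, hb2'⟩ := exists_between hb2
  obtain ⟨tc2, hc2, hc2'⟩ := exists_between hc2
  obtain ⟨td2, hd2, hd2'⟩ := exists_between hd2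
  obtain ⟨B1, hB1, hB1'⟩ := enc_lim hQ hQ1 hp1 hps1 hk1 hks1 s1 R1 hs1 hs1'
  obtain ⟨B2, hB2, hB2'⟩ := enc_lim hQ hQ1 hp2 hps2 hk2 hks2 s2 R2 hs2 hs2'
  obtain ⟨B3, hB3, hB3'⟩ := dec_lim hQ hQ1 hp1 hps1 hk1 hks1 hps2 hk2 hks2 hΓ1 hΓs1 ta1 tb1 tc1 td1
    R1 R2 hR2 ha1 hb1 hc1 hd1 ha1' hb1' (by linarith) (by linarith)
  obtain ⟨B4, hB4, hB4'⟩ := dec_lim hQ hQ1 hp2 hps2 hk2 hks2 hps1 hk1 hks1 hΓ2 hΓs2 ta2 tb2 tc2 td2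
    R2 R1 hR1 ha2 hb2 hc2 hd2 ha2' hb2' (by linarith) (by linarith)
  refine ⟨fun n => 2 * B1 n + 2 * B2 n + B3 n + B4 n, ?_, fun n => ?_⟩
  · simpa using (((hB1.const_mul 2).add (hB2.const_mul 2)).add hB3).add hB4
  have hw : ∑ q : Fin n → Q, ∏ i, pQ (q i) = 1 := pN_sum pQ hQ1
  have hw0 : ∀ q : Fin n → Q, 0 ≤ ∏ i, pQ (q i) := fun q => Finset.prod_nonneg fun i _ => hQ _
  obtain ⟨q, hq⟩ := exists_le_avg (fun q : Fin n → Q => ∏ i, pQ (q i))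
    (fun q => 2 * encF (pN p1) (kN k1 q) (((2 : ℝ) ^ s1) ^ n) (((2 : ℝ) ^ ((s1 - R1) / 2)) ^ n) (MM R1 n) +
      2 * encF (pN p2) (kN k2 q) (((2 : ℝ) ^ s2) ^ n) (((2 : ℝ) ^ ((s2 - R2) / 2)) ^ n) (MM R2 n) +
      decF (pN p1) (kN k1 q) (pN p2) (kN k2 q) (gN Γ1)
        (((2 : ℝ) ^ ta1) ^ n) (((2 : ℝ) ^ tb1) ^ n) (((2 : ℝ) ^ tc1) ^ n) (((2 : ℝ) ^ td1) ^ n)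
        (MM R1 n) (MM R2 n) +
      decF (pN p2) (kN k2 q) (pN p1) (kN k1 q) (gN Γ2)
        (((2 : ℝ) ^ ta2) ^ n) (((2 : ℝ) ^ tb2) ^ n) (((2 : ℝ) ^ tc2) ^ n) (((2 : ℝ) ^ td2) ^ n)
        (MM R2 n) (MM R1 n)) hw0 hw
    (2 * B1 n + 2 * B2 n + B3 n + B4 n) (by
      have g1 := hB1' n
      have g2 := hB2' n
      have g3 := hB3' n
      have g4 := hB4' n
      simp only [mul_add, Finset.sum_add_distrib, mul_left_comm _ (2 : ℝ) _]
      rw [← Finset.mul_sum, ← Finset.mul_sum]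
      linarith)
  obtain ⟨f1, f2, g1, g2, h⟩ := one_shot (M1 := MM R1 n) (M2 := MM R2 n)
    (p1 := pN (n := n) p1) (k1 := kN k1 q) (p2 := pN (n := n) p2) (k2 := kN k2 q)
    (fun u => Finset.prod_nonneg fun i _ => hp1 _) (pN_sum p1 hps1)
    (fun u => Finset.prod_nonneg fun i _ => hp2 _) (pN_sum p2 hps2)
    (fun u w x => Finset.prod_nonneg fun i _ => hk1 _ _ _ _) (MM_pos _ _)
    (fun u w x => Finset.prod_nonneg fun i _ => hk2 _ _ _ _) (MM_pos _ _)
    (kN_sum k1 q hks1) (kN_sum k2 q hks2)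
    (gN Γ1) (fun u x x' a => Finset.prod_nonneg fun i _ => hΓ1 _ _ _ _)
    (by
      intro u x x'
      simp only [gN, pN]
      rw [sum_pi_prod (fun i a => Γ1 (u i) (x i) (x' i) a)]
      simp [hΓs1])
    (gN Γ2) (fun u x x' a => Finset.prod_nonneg fun i _ => hΓ2 _ _ _ _)
    (by
      intro u x x'
      simp only [gN, pN]
      rw [sum_pi_prod (fun i a => Γ2 (u i) (x i) (x' i) a)]
      simp [hΓs2])
    (((2 : ℝ) ^ s1) ^ n) (((2 : ℝ) ^ ((s1 - R1) / 2)) ^ n)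
    (((2 : ℝ) ^ s2) ^ n) (((2 : ℝ) ^ ((s2 - R2) / 2)) ^ n)
    (by positivity) (by positivity) (by positivity) (by positivity)
    (((2 : ℝ) ^ ta1) ^ n) (((2 : ℝ) ^ tb1) ^ n) (((2 : ℝ) ^ tc1) ^ n) (((2 : ℝ) ^ td1) ^ n)
    (((2 : ℝ) ^ ta2) ^ n) (((2 : ℝ) ^ tb2) ^ n) (((2 : ℝ) ^ tc2) ^ n) (((2 : ℝ) ^ td2) ^ n)
    (by positivity) (by positivity) (by positivity) (by positivity)
    (by positivity) (by positivity) (by positivity) (by positivity)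
    (fun _ => u01) (fun _ => x01) (fun _ => u02) (fun _ => x02)
  simp only [ite_eq_ind] at h
  exact ⟨f1, f2, g1, g2, h.trans hq⟩

end Both

set_option linter.unusedSectionVars false

section Oper
variable {U1 V1 U2 V2 X1 X2 Y1 Y2 : Type}
  [Fintype U1] [Fintype V1] [Fintype U2] [Fintype V2]
  [Fintype X1] [Fintype X2] [Fintype Y1] [Fintype Y2]

noncomputable def mg {U V : Type} [Fintype V] (q : U × V → ℝ) (u : U) : ℝ := ∑ v, q (u, v)

noncomputable def Gm1 (ch : X1 × X2 → Y1 × Y2 → ℝ) (q2 : U2 × V2 → ℝ) (u : U2) (x1 : X1) (x2 : X2)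
    (a : V2 × Y1) : ℝ := ∑ y2, q2 (u, a.1) * ch (x1, x2) (a.2, y2)
noncomputable def Gm2 (ch : X1 × X2 → Y1 × Y2 → ℝ) (q1 : U1 × V1 → ℝ) (u : U1) (x2 : X2) (x1 : X1)
    (a : V1 × Y2) : ℝ := ∑ y1, q1 (u, a.1) * ch (x1, x2) (y1, a.2)

theorem pN_mg {n : ℕ} {U V : Type} [Fintype V] (q : U × V → ℝ) (u : Fin n → U) :
    pN (mg q) u = ∑ v : Fin n → V, ∏ i, q (u i, v i) := by
  simp only [pN, mg]
  exact (sum_pi_prod (fun i v => q (u i, v))).symm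

theorem gN_Gm1 {n : ℕ} (ch : X1 × X2 → Y1 × Y2 → ℝ) (q2 : U2 × V2 → ℝ) (u : Fin n → U2)
    (x1 : Fin n → X1) (x2 : Fin n → X2) (v : Fin n → V2) (y1 : Fin n → Y1) :
    gN (Gm1 ch q2) u x1 x2 (fun i => (v i, y1 i)) =
      ∑ y2 : Fin n → Y2, (∏ i, q2 (u i, v i)) * ∏ i, ch (x1 i, x2 i) (y1 i, y2 i) := by
  simp only [gN, Gm1, ← Finset.prod_mul_distrib]
  exact (sum_pi_prod (fun i y2 => q2 (u i, v i) * ch (x1 i, x2 i) (y1 i, y2))).symm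

theorem gN_Gm2 {n : ℕ} (ch : X1 × X2 → Y1 × Y2 → ℝ) (q1 : U1 × V1 → ℝ) (u : Fin n → U1)
    (x1 : Fin n → X1) (x2 : Fin n → X2) (v : Fin n → V1) (y2 : Fin n → Y2) :
    gN (Gm2 ch q1) u x2 x1 (fun i => (v i, y2 i)) =
      ∑ y1 : Fin n → Y1, (∏ i, q1 (u i, v i)) * ∏ i, ch (x1 i, x2 i) (y1 i, y2 i) := by
  simp only [gN, Gm2, ← Finset.prod_mul_distrib]
  exact (sum_pi_prod (fun i y1 => q1 (u i, v i) * ch (x1 i, x2 i) (y1, y2 i))).symm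

theorem perm_e {A B C D E F : Type} [Fintype A] [Fintype B] [Fintype C] [Fintype D] [Fintype E]
    [Fintype F] (f : A → B → C → D → E → F → ℝ) :
    ∑ a, ∑ b, ∑ c, ∑ d, ∑ e, ∑ g, f a b c d e g = ∑ a, ∑ c, ∑ d, ∑ e, ∑ b, ∑ g, f a b c d e g := by
  refine Finset.sum_congr rfl fun a _ => ?_
  rw [Finset.sum_comm]
  refine Finset.sum_congr rfl fun c _ => ?_
  rw [Finset.sum_comm]
  refine Finset.sum_congr rfl fun d _ => ?_
  rw [Finset.sum_comm]

theorem perm_f {A B C D E F : Type} [Fintype A] [Fintype B] [Fintype C] [Fintype D] [Fintype E]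
    [Fintype F] (f : A → B → C → D → E → F → ℝ) :
    ∑ a, ∑ b, ∑ c, ∑ d, ∑ e, ∑ g, f a b c d e g = ∑ c, ∑ a, ∑ b, ∑ g, ∑ d, ∑ e, f a b c d e g := by
  have := Fintype.sum_equiv (⟨fun t => (t.2.2.1, t.1, t.2.1, t.2.2.2.2.2, t.2.2.2.1, t.2.2.2.2.1),
    fun t => (t.2.1, t.2.2.1, t.1, t.2.2.2.2.1, t.2.2.2.2.2, t.2.2.2.1),
      fun _ => rfl, fun _ => rfl⟩ :
      A × B × C × D × E × F ≃ C × A × B × F × D × E)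
      (fun t => f t.1 t.2.1 t.2.2.1 t.2.2.2.1 t.2.2.2.2.1 t.2.2.2.2.2)
      (fun t => f t.2.1 t.2.2.1 t.1 t.2.2.2.2.1 t.2.2.2.2.2 t.2.2.2.1) (fun _ => rfl)
  simpa only [Fintype.sum_prod_type] using this

theorem perr_le {n : ℕ} (ch : X1 × X2 → Y1 × Y2 → ℝ) (q1 : U1 × V1 → ℝ) (q2 : U2 × V2 → ℝ)
    (hch : IsKernel ch) (hq1 : IsPMF q1) (hq2 : IsPMF q2)
    (f1 : (Fin n → U1) → Fin n → X1) (f2 : (Fin n → U2) → Fin n → X2)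
    (g1 : (Fin n → V2 × Y1) → Fin n → U1) (g2 : (Fin n → V1 × Y2) → Fin n → U2) :
    PerrCross ch q1 q2 n f1 f2 (fun y v => g1 fun i => (v i, y i)) (fun y v => g2 fun i => (v i, y i)) ≤
      (∑ u, ∑ u', ∑ a, pN (mg q1) u * (gN (Gm1 ch q2) u' (f1 u) (f2 u') a * ind (¬ g1 a = u))) +
      (∑ u, ∑ u', ∑ a, pN (mg q2) u * (gN (Gm2 ch q1) u' (f2 u) (f1 u') a * ind (¬ g2 a = u))) := by
  have e1 : (∑ u, ∑ u', ∑ a, pN (mg q1) u * (gN (Gm1 ch q2) u' (f1 u) (f2 u') a * ind (¬ g1 a = u))) =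
      ∑ u1 : Fin n → U1, ∑ v1 : Fin n → V1, ∑ u2 : Fin n → U2, ∑ v2 : Fin n → V2,
      ∑ y1 : Fin n → Y1, ∑ y2 : Fin n → Y2,
      (∏ i, q1 (u1 i, v1 i)) * (∏ i, q2 (u2 i, v2 i)) *
      (∏ i, ch (f1 u1 i, f2 u2 i) (y1 i, y2 i)) * ind (¬ g1 (fun i => (v2 i, y1 i)) = u1) := by
    rw [perm_e]
    refine Finset.sum_congr rfl fun u1 _ => Finset.sum_congr rfl fun u2 _ => ?_
    rw [sum_word2]
    refine Finset.sum_congr rfl fun v2 _ => Finset.sum_congr rfl fun y1 _ => ?_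
    rw [pN_mg, gN_Gm1, Finset.sum_mul]
    refine Finset.sum_congr rfl fun v1 _ => ?_
    rw [Finset.sum_mul, Finset.mul_sum]
    refine Finset.sum_congr rfl fun y2 _ => ?_
    ring
  have e2 : (∑ u, ∑ u', ∑ a, pN (mg q2) u * (gN (Gm2 ch q1) u' (f2 u) (f1 u') a * ind (¬ g2 a = u))) =
      ∑ u1 : Fin n → U1, ∑ v1 : Fin n → V1, ∑ u2 : Fin n → U2, ∑ v2 : Fin n → V2,
      ∑ y1 : Fin n → Y1, ∑ y2 : Fin n → Y2,
      (∏ i, q1 (u1 i, v1 i)) * (∏ i, q2 (u2 i, v2 i)) *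
      (∏ i, ch (f1 u1 i, f2 u2 i) (y1 i, y2 i)) * ind (¬ g2 (fun i => (v1 i, y2 i)) = u2) := by
    rw [perm_f]
    refine Finset.sum_congr rfl fun u2 _ => Finset.sum_congr rfl fun u1 _ => ?_
    rw [sum_word2]
    refine Finset.sum_congr rfl fun v1 _ => Finset.sum_congr rfl fun y2 _ => ?_
    rw [pN_mg, gN_Gm2, Finset.sum_mul]
    refine Finset.sum_congr rfl fun v2 _ => ?_
    rw [Finset.sum_mul, Finset.mul_sum]
    refine Finset.sum_congr rfl fun y1 _ => ?_
    ring
  rw [e1, e2]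
  simp only [← Finset.sum_add_distrib]
  unfold PerrCross
  refine Finset.sum_le_sum fun u1 _ => Finset.sum_le_sum fun v1 _ => Finset.sum_le_sum fun u2 _ =>
    Finset.sum_le_sum fun v2 _ => ?_
  rw [sum_word2]
  refine Finset.sum_le_sum fun y1 _ => Finset.sum_le_sum fun y2 _ => ?_
  rw [← mul_add]
  refine mul_le_mul_of_nonneg_left ?_ (mul_nonneg (mul_nonneg (Finset.prod_nonneg fun i _ => hq1.1 _)
    (Finset.prod_nonneg fun i _ => hq2.1 _)) (Finset.prod_nonneg fun i _ => (hch _).1 _))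
  rw [ite_eq_ind]
  unfold ind
  by_cases ha : g1 (fun i => (v2 i, y1 i)) = u1 <;> by_cases hb : g2 (fun i => (v1 i, y2 i)) = u2 <;>
    simp [ha, hb]

theorem perr_nonneg {n : ℕ} (ch : X1 × X2 → Y1 × Y2 → ℝ) (q1 : U1 × V1 → ℝ) (q2 : U2 × V2 → ℝ)
    (hch : IsKernel ch) (hq1 : IsPMF q1) (hq2 : IsPMF q2)
    (f1 : (Fin n → U1) → Fin n → X1) (f2 : (Fin n → U2) → Fin n → X2)
    (g1 : (Fin n → Y1) → (Fin n → V2) → Fin n → U1)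
    (g2 : (Fin n → Y2) → (Fin n → V1) → Fin n → U2) : 0 ≤ PerrCross ch q1 q2 n f1 f2 g1 g2 := by
  unfold PerrCross
  refine Finset.sum_nonneg fun u1 _ => Finset.sum_nonneg fun v1 _ => Finset.sum_nonneg fun u2 _ =>
    Finset.sum_nonneg fun v2 _ => Finset.sum_nonneg fun y _ => ?_
  refine mul_nonneg (mul_nonneg (mul_nonneg (Finset.prod_nonneg fun i _ => hq1.1 _)
    (Finset.prod_nonneg fun i _ => hq2.1 _)) (Finset.prod_nonneg fun i _ => (hch _).1 _)) ?_
  split_ifs <;> norm_num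

theorem reliable_of_bound (ch : X1 × X2 → Y1 × Y2 → ℝ) (q1 : U1 × V1 → ℝ) (q2 : U2 × V2 → ℝ)
    (hch : IsKernel ch) (hq1 : IsPMF q1) (hq2 : IsPMF q2)
    (h : ∃ B : ℕ → ℝ, Tendsto B atTop (nhds 0) ∧ ∀ n : ℕ,
    ∃ (f1 : (Fin n → U1) → Fin n → X1) (f2 : (Fin n → U2) → Fin n → X2)
      (g1 : (Fin n → V2 × Y1) → Fin n → U1) (g2 : (Fin n → V1 × Y2) → Fin n → U2),
      (∑ u, ∑ u', ∑ a, pN (mg q1) u * (gN (Gm1 ch q2) u' (f1 u) (f2 u') a * ind (¬ g1 a = u))) +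
      (∑ u, ∑ u', ∑ a, pN (mg q2) u * (gN (Gm2 ch q1) u' (f2 u) (f1 u') a * ind (¬ g2 a = u))) ≤ B n) :
    ReliableCross ch q1 q2 := by
  obtain ⟨B, hB, h⟩ := h
  choose f1 f2 g1 g2 h using h
  refine ⟨f1, f2, fun n y v => g1 n fun i => (v i, y i), fun n y v => g2 n fun i => (v i, y i), ?_⟩
  refine squeeze_zero (fun n => perr_nonneg ch q1 q2 hch hq1 hq2 _ _ _ _) (fun n => ?_) hB
  exact (perr_le ch q1 q2 hch hq1 hq2 _ _ _ _).trans (h n)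

end Oper

set_option linter.unusedSectionVars false

section Ent
variable {Ω Θ α β : Type} [Fintype Ω] [Fintype Θ] [Fintype α] [Fintype β]

theorem pr_nonneg' {α : Type} (P : Θ → ℝ) (Y : Θ → α) (hP : ∀ θ, 0 ≤ P θ) (y : α) : 0 ≤ pr P Y y :=
  Finset.sum_nonneg fun θ _ => by split_ifs <;> simp [hP]

theorem ent_eq (P : Θ → ℝ) (Y : Θ → α) :
    ent P Y = ∑ θ, P θ * (-(logb 2 (pr P Y (Y θ)))) := by
  unfold ent
  have h : ∀ y, -(pr P Y y * logb 2 (pr P Y y)) =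
      ∑ θ, if Y θ = y then P θ * (-(logb 2 (pr P Y (Y θ)))) else 0 := by
    intro y
    have : ∀ θ, (if Y θ = y then P θ * (-(logb 2 (pr P Y (Y θ)))) else 0) =
        (if Y θ = y then P θ else 0) * (-(logb 2 (pr P Y y))) := by
      intro θ
      split_ifs with h
      · rw [h]
      · simp
    simp_rw [this]
    rw [← Finset.sum_mul, pr]
    ring
  simp_rw [h]
  rw [Finset.sum_comm]
  simp

theorem ent_inj (P : Θ → ℝ) (Y : Θ → α) (f : α → β) (hf : Function.Injective f) :
    ent P (fun θ => f (Y θ)) = ent P Y := by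
  rw [ent_eq, ent_eq]
  refine Finset.sum_congr rfl fun θ _ => ?_
  simp only [pr, hf.eq_iff]

theorem pr_push (p : Ω → ℝ) (proj : Ω → Θ) (Y : Θ → α) (y : α) :
    pr p (fun ω => Y (proj ω)) y = pr (pr p proj) Y y := by
  simp only [pr]
  have : ∀ θ, (if Y θ = y then ∑ ω, (if proj ω = θ then p ω else 0) else 0) =
      ∑ ω, if proj ω = θ then (if Y (proj ω) = y then p ω else 0) else 0 := by
    intro θ
    split_ifs with h
    · refine Finset.sum_congr rfl fun ω _ => ?_
      split_ifs with h1 h2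
      · rfl
      · rw [h1] at h2; exact absurd h h2
      · rfl
    · symm
      refine Finset.sum_eq_zero fun ω _ => ?_
      split_ifs with h1 h2
      · rw [h1] at h2; exact absurd h2 h
      · rfl
      · rfl
  simp_rw [this]
  rw [Finset.sum_comm]
  simp

theorem ent_push (p : Ω → ℝ) (proj : Ω → Θ) (Y : Θ → α) :
    ent p (fun ω => Y (proj ω)) = ent (pr p proj) Y := by
  unfold ent
  refine Finset.sum_congr rfl fun y _ => ?_
  rw [pr_push]

theorem pr_equiv (P : Θ → ℝ) (Y : Θ → α) (e : Θ ≃ α × β) (hY : ∀ θ, Y θ = (e θ).1) (y : α) :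
    pr P Y y = ∑ b, P (e.symm (y, b)) := by
  unfold pr
  rw [← Equiv.sum_comp e.symm, Fintype.sum_prod_type]
  simp only [hY, Equiv.apply_symm_apply]
  have : ∀ a, (∑ b, if a = y then P (e.symm (a, b)) else 0) =
      if a = y then ∑ b, P (e.symm (a, b)) else 0 := by
    intro a; split_ifs <;> simp
  simp_rw [this]
  simp

end Ent

section Info
variable {Q U W X Z A U' X' : Type} [Fintype Q] [Fintype U] [Fintype W] [Fintype X]
  [Fintype Z] [Fintype A] [Fintype U'] [Fintype X']

/-- generic single-letter law -/
noncomputable def P6 (pQ : Q → ℝ) (p : U → ℝ) (k : Q → U → W → X → ℝ) (G : Q → X → Z → A → ℝ)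
    (θ : Q × U × W × X × Z × A) : ℝ :=
  pQ θ.1 * (p θ.2.1 * k θ.1 θ.2.1 θ.2.2.1 θ.2.2.2.1 * G θ.1 θ.2.2.2.1 θ.2.2.2.2.1 θ.2.2.2.2.2)

variable {pQ : Q → ℝ} {p : U → ℝ} {k : Q → U → W → X → ℝ} {G : Q → X → Z → A → ℝ} {r' : Q → Z → ℝ}

theorem prU
    (hGr : ∀ q x z, ∑ a, G q x z a = r' q z) (hr1 : ∀ q, ∑ z, r' q z = 1)
    (hk1 : ∀ q u, ∑ w, ∑ x, k q u w x = 1) (hp1 : ∑ u, p u = 1) (hQ1 : ∑ q, pQ q = 1)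
    (u : U) : pr (P6 pQ p k G) (fun θ => θ.2.1) u = p u := by
  rw [pr_equiv (P6 pQ p k G) (fun θ => θ.2.1) (⟨fun θ => (θ.2.1, θ.1, θ.2.2),
    fun t => (t.2.1, t.1, t.2.2), fun _ => rfl, fun _ => rfl⟩ :
      Q × U × W × X × Z × A ≃ U × Q × W × X × Z × A) (fun _ => rfl)]
  simp only [P6, Equiv.coe_fn_symm_mk, Fintype.sum_prod_type, mul_assoc, ← Finset.mul_sum, hGr, hr1,
    mul_one, hk1]
  rw [← Finset.sum_mul, hQ1, one_mul]

theorem prQ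
    (hGr : ∀ q x z, ∑ a, G q x z a = r' q z) (hr1 : ∀ q, ∑ z, r' q z = 1)
    (hk1 : ∀ q u, ∑ w, ∑ x, k q u w x = 1) (hp1 : ∑ u, p u = 1) (hQ1 : ∑ q, pQ q = 1)
    (q : Q) : pr (P6 pQ p k G) (fun θ => θ.1) q = pQ q := by
  rw [pr_equiv (P6 pQ p k G) (fun θ => θ.1) (Equiv.refl _) (fun _ => rfl)]
  simp only [P6, Equiv.refl_symm, Equiv.coe_refl, id, Fintype.sum_prod_type, mul_assoc,
    ← Finset.mul_sum, hGr, hr1, mul_one, hk1, hp1]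

theorem prUQ
    (hGr : ∀ q x z, ∑ a, G q x z a = r' q z) (hr1 : ∀ q, ∑ z, r' q z = 1)
    (hk1 : ∀ q u, ∑ w, ∑ x, k q u w x = 1) (hp1 : ∑ u, p u = 1) (hQ1 : ∑ q, pQ q = 1)
    (u : U) (q : Q) : pr (P6 pQ p k G) (fun θ => (θ.2.1, θ.1)) (u, q) = pQ q * p u := by
  rw [pr_equiv (P6 pQ p k G) (fun θ => (θ.2.1, θ.1)) (⟨fun θ => ((θ.2.1, θ.1), θ.2.2),
    fun t => (t.1.2, t.1.1, t.2), fun _ => rfl, fun _ => rfl⟩ :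
      Q × U × W × X × Z × A ≃ (U × Q) × W × X × Z × A) (fun _ => rfl)]
  simp only [P6, Equiv.coe_fn_symm_mk, Fintype.sum_prod_type, mul_assoc, ← Finset.mul_sum, hGr, hr1,
    mul_one, hk1]

theorem prWQ
    (hGr : ∀ q x z, ∑ a, G q x z a = r' q z) (hr1 : ∀ q, ∑ z, r' q z = 1)
    (hk1 : ∀ q u, ∑ w, ∑ x, k q u w x = 1) (hp1 : ∑ u, p u = 1) (hQ1 : ∑ q, pQ q = 1)
    (w : W) (q : Q) :
    pr (P6 pQ p k G) (fun θ => (θ.2.2.1, θ.1)) (w, q) = pQ q * rr p (k q) w := by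
  rw [pr_equiv (P6 pQ p k G) (fun θ => (θ.2.2.1, θ.1)) (⟨fun θ => ((θ.2.2.1, θ.1), θ.2.1, θ.2.2.2),
    fun t => (t.1.2, t.2.1, t.1.1, t.2.2), fun _ => rfl, fun _ => rfl⟩ :
      Q × U × W × X × Z × A ≃ (W × Q) × U × X × Z × A) (fun _ => rfl)]
  simp only [P6, rr, Equiv.coe_fn_symm_mk, Fintype.sum_prod_type, mul_assoc, ← Finset.mul_sum, hGr, hr1,
    mul_one]

theorem prUWQ
    (hGr : ∀ q x z, ∑ a, G q x z a = r' q z) (hr1 : ∀ q, ∑ z, r' q z = 1)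
    (hk1 : ∀ q u, ∑ w, ∑ x, k q u w x = 1) (hp1 : ∑ u, p u = 1) (hQ1 : ∑ q, pQ q = 1)
    (u : U) (w : W) (q : Q) :
    pr (P6 pQ p k G) (fun θ => (θ.2.1, θ.2.2.1, θ.1)) (u, w, q) = pQ q * (p u * ∑ x, k q u w x) := by
  rw [pr_equiv (P6 pQ p k G) (fun θ => (θ.2.1, θ.2.2.1, θ.1))
    (⟨fun θ => ((θ.2.1, θ.2.2.1, θ.1), θ.2.2.2),
    fun t => (t.1.2.2, t.1.1, t.1.2.1, t.2), fun _ => rfl, fun _ => rfl⟩ :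
      Q × U × W × X × Z × A ≃ (U × W × Q) × X × Z × A) (fun _ => rfl)]
  simp only [P6, Equiv.coe_fn_symm_mk, Fintype.sum_prod_type, mul_assoc, ← Finset.mul_sum, hGr, hr1,
    mul_one]

theorem prZQ
    (hGr : ∀ q x z, ∑ a, G q x z a = r' q z) (hr1 : ∀ q, ∑ z, r' q z = 1)
    (hk1 : ∀ q u, ∑ w, ∑ x, k q u w x = 1) (hp1 : ∑ u, p u = 1) (hQ1 : ∑ q, pQ q = 1)
    (z : Z) (q : Q) :
    pr (P6 pQ p k G) (fun θ => (θ.2.2.2.2.1, θ.1)) (z, q) = pQ q * r' q z := by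
  rw [pr_equiv (P6 pQ p k G) (fun θ => (θ.2.2.2.2.1, θ.1))
    (⟨fun θ => ((θ.2.2.2.2.1, θ.1), θ.2.1, θ.2.2.1, θ.2.2.2.1, θ.2.2.2.2.2),
    fun t => (t.1.2, t.2.1, t.2.2.1, t.2.2.2.1, t.1.1, t.2.2.2.2), fun _ => rfl, fun _ => rfl⟩ :
      Q × U × W × X × Z × A ≃ (Z × Q) × U × W × X × A) (fun _ => rfl)]
  simp only [P6, Equiv.coe_fn_symm_mk, Fintype.sum_prod_type, mul_assoc, ← Finset.mul_sum, hGr]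
  simp only [← Finset.sum_mul, ← mul_assoc, hk1, mul_one, ← Finset.mul_sum, hp1]

theorem prWZQ
    (hGr : ∀ q x z, ∑ a, G q x z a = r' q z) (hr1 : ∀ q, ∑ z, r' q z = 1)
    (hk1 : ∀ q u, ∑ w, ∑ x, k q u w x = 1) (hp1 : ∑ u, p u = 1) (hQ1 : ∑ q, pQ q = 1)
    (w : W) (z : Z) (q : Q) :
    pr (P6 pQ p k G) (fun θ => (θ.2.2.1, θ.2.2.2.2.1, θ.1)) (w, z, q) = pQ q * (rr p (k q) w * r' q z) := by
  rw [pr_equiv (P6 pQ p k G) (fun θ => (θ.2.2.1, θ.2.2.2.2.1, θ.1))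
    (⟨fun θ => ((θ.2.2.1, θ.2.2.2.2.1, θ.1), θ.2.1, θ.2.2.2.1, θ.2.2.2.2.2),
    fun t => (t.1.2.2, t.2.1, t.1.1, t.2.2.1, t.1.2.1, t.2.2.2), fun _ => rfl, fun _ => rfl⟩ :
      Q × U × W × X × Z × A ≃ (W × Z × Q) × U × X × A) (fun _ => rfl)]
  simp only [P6, rr, Equiv.coe_fn_symm_mk, Fintype.sum_prod_type, mul_assoc, ← Finset.mul_sum, hGr]
  simp only [← mul_assoc, ← Finset.sum_mul]

/-- law of `(W, X)` -/
noncomputable def kap (p : U → ℝ) (k : Q → U → W → X → ℝ) (q : Q) (w : W) (x : X) : ℝ :=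
  ∑ u, p u * k q u w x
noncomputable def kap' (p : U → ℝ) (k : Q → U → W → X → ℝ) (q : Q) (x : X) : ℝ :=
  ∑ u, ∑ w, p u * k q u w x

theorem prX_WZQ
    (hGr : ∀ q x z, ∑ a, G q x z a = r' q z) (hr1 : ∀ q, ∑ z, r' q z = 1)
    (hk1 : ∀ q u, ∑ w, ∑ x, k q u w x = 1) (hp1 : ∑ u, p u = 1) (hQ1 : ∑ q, pQ q = 1)
    (x : X) (w : W) (z : Z) (q : Q) :
    pr (P6 pQ p k G) (fun θ => (θ.2.2.2.1, θ.2.2.1, θ.2.2.2.2.1, θ.1)) (x, w, z, q) =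
      pQ q * (kap p k q w x * r' q z) := by
  rw [pr_equiv (P6 pQ p k G) (fun θ => (θ.2.2.2.1, θ.2.2.1, θ.2.2.2.2.1, θ.1))
    (⟨fun θ => ((θ.2.2.2.1, θ.2.2.1, θ.2.2.2.2.1, θ.1), θ.2.1, θ.2.2.2.2.2),
    fun t => (t.1.2.2.2, t.2.1, t.1.2.1, t.1.1, t.1.2.2.1, t.2.2), fun _ => rfl, fun _ => rfl⟩ :
      Q × U × W × X × Z × A ≃ (X × W × Z × Q) × U × A) (fun _ => rfl)]
  simp only [P6, kap, Equiv.coe_fn_symm_mk, Fintype.sum_prod_type, ← Finset.mul_sum, hGr]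
  simp only [← Finset.sum_mul]

theorem prA_WZQ
    (hGr : ∀ q x z, ∑ a, G q x z a = r' q z) (hr1 : ∀ q, ∑ z, r' q z = 1)
    (hk1 : ∀ q u, ∑ w, ∑ x, k q u w x = 1) (hp1 : ∑ u, p u = 1) (hQ1 : ∑ q, pQ q = 1)
    (a : A) (w : W) (z : Z) (q : Q) :
    pr (P6 pQ p k G) (fun θ => (θ.2.2.2.2.2, θ.2.2.1, θ.2.2.2.2.1, θ.1)) (a, w, z, q) =
      pQ q * Ja p (k q) (G q) w z a := by
  rw [pr_equiv (P6 pQ p k G) (fun θ => (θ.2.2.2.2.2, θ.2.2.1, θ.2.2.2.2.1, θ.1))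
    (⟨fun θ => ((θ.2.2.2.2.2, θ.2.2.1, θ.2.2.2.2.1, θ.1), θ.2.1, θ.2.2.2.1),
    fun t => (t.1.2.2.2, t.2.1, t.1.2.1, t.2.2, t.1.2.2.1, t.1.1), fun _ => rfl, fun _ => rfl⟩ :
      Q × U × W × X × Z × A ≃ (A × W × Z × Q) × U × X) (fun _ => rfl)]
  simp only [P6, Ja, Equiv.coe_fn_symm_mk, Fintype.sum_prod_type, ← Finset.mul_sum]

theorem prXA_WZQ
    (hGr : ∀ q x z, ∑ a, G q x z a = r' q z) (hr1 : ∀ q, ∑ z, r' q z = 1)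
    (hk1 : ∀ q u, ∑ w, ∑ x, k q u w x = 1) (hp1 : ∑ u, p u = 1) (hQ1 : ∑ q, pQ q = 1)
    (x : X) (a : A) (w : W) (z : Z) (q : Q) :
    pr (P6 pQ p k G) (fun θ => (θ.2.2.2.1, θ.2.2.2.2.2, θ.2.2.1, θ.2.2.2.2.1, θ.1)) (x, a, w, z, q) =
      pQ q * (kap p k q w x * G q x z a) := by
  rw [pr_equiv (P6 pQ p k G) (fun θ => (θ.2.2.2.1, θ.2.2.2.2.2, θ.2.2.1, θ.2.2.2.2.1, θ.1))
    (⟨fun θ => ((θ.2.2.2.1, θ.2.2.2.2.2, θ.2.2.1, θ.2.2.2.2.1, θ.1), θ.2.1),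
    fun t => (t.1.2.2.2.2, t.2, t.1.2.2.1, t.1.1, t.1.2.2.2.1, t.1.2.1), fun _ => rfl, fun _ => rfl⟩ :
      Q × U × W × X × Z × A ≃ (X × A × W × Z × Q) × U) (fun _ => rfl)]
  simp only [P6, kap, Equiv.coe_fn_symm_mk, ← Finset.mul_sum, ← Finset.sum_mul]

theorem prX_ZQ
    (hGr : ∀ q x z, ∑ a, G q x z a = r' q z) (hr1 : ∀ q, ∑ z, r' q z = 1)
    (hk1 : ∀ q u, ∑ w, ∑ x, k q u w x = 1) (hp1 : ∑ u, p u = 1) (hQ1 : ∑ q, pQ q = 1)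
    (x : X) (z : Z) (q : Q) :
    pr (P6 pQ p k G) (fun θ => (θ.2.2.2.1, θ.2.2.2.2.1, θ.1)) (x, z, q) =
      pQ q * (kap' p k q x * r' q z) := by
  rw [pr_equiv (P6 pQ p k G) (fun θ => (θ.2.2.2.1, θ.2.2.2.2.1, θ.1))
    (⟨fun θ => ((θ.2.2.2.1, θ.2.2.2.2.1, θ.1), θ.2.1, θ.2.2.1, θ.2.2.2.2.2),
    fun t => (t.1.2.2, t.2.1, t.2.2.1, t.1.1, t.1.2.1, t.2.2.2), fun _ => rfl, fun _ => rfl⟩ :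
      Q × U × W × X × Z × A ≃ (X × Z × Q) × U × W × A) (fun _ => rfl)]
  simp only [P6, kap', Equiv.coe_fn_symm_mk, Fintype.sum_prod_type, ← Finset.mul_sum, hGr]
  simp only [← Finset.sum_mul, ← Finset.mul_sum]

theorem prA_ZQ
    (hGr : ∀ q x z, ∑ a, G q x z a = r' q z) (hr1 : ∀ q, ∑ z, r' q z = 1)
    (hk1 : ∀ q u, ∑ w, ∑ x, k q u w x = 1) (hp1 : ∑ u, p u = 1) (hQ1 : ∑ q, pQ q = 1)
    (a : A) (z : Z) (q : Q) :
    pr (P6 pQ p k G) (fun θ => (θ.2.2.2.2.2, θ.2.2.2.2.1, θ.1)) (a, z, q) =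
      pQ q * Jb p (k q) (G q) z a := by
  rw [pr_equiv (P6 pQ p k G) (fun θ => (θ.2.2.2.2.2, θ.2.2.2.2.1, θ.1))
    (⟨fun θ => ((θ.2.2.2.2.2, θ.2.2.2.2.1, θ.1), θ.2.1, θ.2.2.1, θ.2.2.2.1),
    fun t => (t.1.2.2, t.2.1, t.2.2.1, t.2.2.2, t.1.2.1, t.1.1), fun _ => rfl, fun _ => rfl⟩ :
      Q × U × W × X × Z × A ≃ (A × Z × Q) × U × W × X) (fun _ => rfl)]
  simp only [P6, Jb, Equiv.coe_fn_symm_mk, Fintype.sum_prod_type, ← Finset.mul_sum]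

theorem prXA_ZQ
    (hGr : ∀ q x z, ∑ a, G q x z a = r' q z) (hr1 : ∀ q, ∑ z, r' q z = 1)
    (hk1 : ∀ q u, ∑ w, ∑ x, k q u w x = 1) (hp1 : ∑ u, p u = 1) (hQ1 : ∑ q, pQ q = 1)
    (x : X) (a : A) (z : Z) (q : Q) :
    pr (P6 pQ p k G) (fun θ => (θ.2.2.2.1, θ.2.2.2.2.2, θ.2.2.2.2.1, θ.1)) (x, a, z, q) =
      pQ q * (kap' p k q x * G q x z a) := by
  rw [pr_equiv (P6 pQ p k G) (fun θ => (θ.2.2.2.1, θ.2.2.2.2.2, θ.2.2.2.2.1, θ.1))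
    (⟨fun θ => ((θ.2.2.2.1, θ.2.2.2.2.2, θ.2.2.2.2.1, θ.1), θ.2.1, θ.2.2.1),
    fun t => (t.1.2.2.2, t.2.1, t.2.2, t.1.1, t.1.2.2.1, t.1.2.1), fun _ => rfl, fun _ => rfl⟩ :
      Q × U × W × X × Z × A ≃ (X × A × Z × Q) × U × W) (fun _ => rfl)]
  simp only [P6, kap', Equiv.coe_fn_symm_mk, Fintype.sum_prod_type, ← Finset.mul_sum, ← Finset.sum_mul]

theorem prZX_WQ
    (hGr : ∀ q x z, ∑ a, G q x z a = r' q z) (hr1 : ∀ q, ∑ z, r' q z = 1)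
    (hk1 : ∀ q u, ∑ w, ∑ x, k q u w x = 1) (hp1 : ∑ u, p u = 1) (hQ1 : ∑ q, pQ q = 1)
    (z : Z) (x : X) (w : W) (q : Q) :
    pr (P6 pQ p k G) (fun θ => ((θ.2.2.2.2.1, θ.2.2.2.1), θ.2.2.1, θ.1)) ((z, x), w, q) =
      pQ q * (kap p k q w x * r' q z) := by
  rw [← prX_WZQ hGr hr1 hk1 hp1 hQ1]
  simp only [pr, Prod.mk.injEq]
  refine Finset.sum_congr rfl fun θ _ => ?_
  congr 1
  exact propext ⟨by tauto, by tauto⟩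

theorem prA_WQ
    (hGr : ∀ q x z, ∑ a, G q x z a = r' q z) (hr1 : ∀ q, ∑ z, r' q z = 1)
    (hk1 : ∀ q u, ∑ w, ∑ x, k q u w x = 1) (hp1 : ∑ u, p u = 1) (hQ1 : ∑ q, pQ q = 1)
    (a : A) (w : W) (q : Q) :
    pr (P6 pQ p k G) (fun θ => (θ.2.2.2.2.2, θ.2.2.1, θ.1)) (a, w, q) =
      pQ q * Jc p (k q) (G q) w a := by
  rw [pr_equiv (P6 pQ p k G) (fun θ => (θ.2.2.2.2.2, θ.2.2.1, θ.1))
    (⟨fun θ => ((θ.2.2.2.2.2, θ.2.2.1, θ.1), θ.2.1, θ.2.2.2.1, θ.2.2.2.2.1),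
    fun t => (t.1.2.2, t.2.1, t.1.2.1, t.2.2.1, t.2.2.2, t.1.1), fun _ => rfl, fun _ => rfl⟩ :
      Q × U × W × X × Z × A ≃ (A × W × Q) × U × X × Z) (fun _ => rfl)]
  simp only [P6, Jc, Equiv.coe_fn_symm_mk, Fintype.sum_prod_type, ← Finset.mul_sum]

theorem prZXA_WQ
    (hGr : ∀ q x z, ∑ a, G q x z a = r' q z) (hr1 : ∀ q, ∑ z, r' q z = 1)
    (hk1 : ∀ q u, ∑ w, ∑ x, k q u w x = 1) (hp1 : ∑ u, p u = 1) (hQ1 : ∑ q, pQ q = 1)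
    (z : Z) (x : X) (a : A) (w : W) (q : Q) :
    pr (P6 pQ p k G) (fun θ => ((θ.2.2.2.2.1, θ.2.2.2.1), θ.2.2.2.2.2, θ.2.2.1, θ.1)) ((z, x), a, w, q) =
      pQ q * (kap p k q w x * G q x z a) := by
  rw [← prXA_WZQ hGr hr1 hk1 hp1 hQ1]
  simp only [pr, Prod.mk.injEq]
  refine Finset.sum_congr rfl fun θ _ => ?_
  congr 1
  exact propext ⟨by tauto, by tauto⟩

theorem prZX_Q
    (hGr : ∀ q x z, ∑ a, G q x z a = r' q z) (hr1 : ∀ q, ∑ z, r' q z = 1)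
    (hk1 : ∀ q u, ∑ w, ∑ x, k q u w x = 1) (hp1 : ∑ u, p u = 1) (hQ1 : ∑ q, pQ q = 1)
    (z : Z) (x : X) (q : Q) :
    pr (P6 pQ p k G) (fun θ => ((θ.2.2.2.2.1, θ.2.2.2.1), θ.1)) ((z, x), q) =
      pQ q * (kap' p k q x * r' q z) := by
  rw [← prX_ZQ hGr hr1 hk1 hp1 hQ1]
  simp only [pr, Prod.mk.injEq]
  refine Finset.sum_congr rfl fun θ _ => ?_
  congr 1
  exact propext ⟨by tauto, by tauto⟩

theorem prA_Q
    (hGr : ∀ q x z, ∑ a, G q x z a = r' q z) (hr1 : ∀ q, ∑ z, r' q z = 1)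
    (hk1 : ∀ q u, ∑ w, ∑ x, k q u w x = 1) (hp1 : ∑ u, p u = 1) (hQ1 : ∑ q, pQ q = 1)
    (a : A) (q : Q) :
    pr (P6 pQ p k G) (fun θ => (θ.2.2.2.2.2, θ.1)) (a, q) =
      pQ q * Jd p (k q) (G q) a := by
  rw [pr_equiv (P6 pQ p k G) (fun θ => (θ.2.2.2.2.2, θ.1))
    (⟨fun θ => ((θ.2.2.2.2.2, θ.1), θ.2.1, θ.2.2.1, θ.2.2.2.1, θ.2.2.2.2.1),
    fun t => (t.1.2, t.2.1, t.2.2.1, t.2.2.2.1, t.2.2.2.2, t.1.1), fun _ => rfl, fun _ => rfl⟩ :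
      Q × U × W × X × Z × A ≃ (A × Q) × U × W × X × Z) (fun _ => rfl)]
  simp only [P6, Jd, Equiv.coe_fn_symm_mk, Fintype.sum_prod_type, ← Finset.mul_sum]

theorem prZXA_Q
    (hGr : ∀ q x z, ∑ a, G q x z a = r' q z) (hr1 : ∀ q, ∑ z, r' q z = 1)
    (hk1 : ∀ q u, ∑ w, ∑ x, k q u w x = 1) (hp1 : ∑ u, p u = 1) (hQ1 : ∑ q, pQ q = 1)
    (z : Z) (x : X) (a : A) (q : Q) :
    pr (P6 pQ p k G) (fun θ => ((θ.2.2.2.2.1, θ.2.2.2.1), θ.2.2.2.2.2, θ.1)) ((z, x), a, q) =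
      pQ q * (kap' p k q x * G q x z a) := by
  rw [← prXA_ZQ hGr hr1 hk1 hp1 hQ1]
  simp only [pr, Prod.mk.injEq]
  refine Finset.sum_congr rfl fun θ _ => ?_
  congr 1
  exact propext ⟨by tauto, by tauto⟩

end Info

set_option linter.unusedSectionVars false

section Dens
variable {Q U W X Z A U' X' : Type} [Fintype Q] [Fintype U] [Fintype W] [Fintype X]
  [Fintype Z] [Fintype A] [Fintype U'] [Fintype X']

theorem PP_eq (pQ : Q → ℝ) (p : U → ℝ) (k : Q → U → W → X → ℝ) (k' : Q → U' → Z → X' → ℝ)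
    (Γ : U' → X → X' → A → ℝ) : PP pQ p k k' Γ = P6 pQ p k (fun q => GG (k' q) Γ) := rfl

theorem kap_pos {p : U → ℝ} {k : Q → U → W → X → ℝ} (hp : ∀ u, 0 ≤ p u)
    (hk : ∀ q u w x, 0 ≤ k q u w x) {q : Q} {u : U} {w : W} {x : X} (h1 : 0 < p u)
    (h2 : 0 < k q u w x) : 0 < kap p k q w x :=
  Finset.sum_pos' (fun u _ => mul_nonneg (hp _) (hk _ _ _ _)) ⟨u, Finset.mem_univ _, mul_pos h1 h2⟩

theorem kap'_pos {p : U → ℝ} {k : Q → U → W → X → ℝ} (hp : ∀ u, 0 ≤ p u)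
    (hk : ∀ q u w x, 0 ≤ k q u w x) {q : Q} {u : U} {w : W} {x : X} (h1 : 0 < p u)
    (h2 : 0 < k q u w x) : 0 < kap' p k q x :=
  Finset.sum_pos' (fun u _ => Finset.sum_nonneg fun w _ => mul_nonneg (hp _) (hk _ _ _ _))
    ⟨u, Finset.mem_univ _, Finset.sum_pos' (fun w _ => mul_nonneg (hp _) (hk _ _ _ _))
      ⟨w, Finset.mem_univ _, mul_pos h1 h2⟩⟩

theorem lmul {a b : ℝ} (ha : 0 < a) (hb : 0 < b) : logb 2 (a * b) = logb 2 a + logb 2 b :=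
  Real.logb_mul ha.ne' hb.ne'
theorem ldiv {a b : ℝ} (ha : 0 < a) (hb : 0 < b) : logb 2 (a / b) = logb 2 a - logb 2 b :=
  Real.logb_div ha.ne' hb.ne'

variable {p : U → ℝ} {k : Q → U → W → X → ℝ} {pQ : Q → ℝ}
    {p' : U' → ℝ} {k' : Q → U' → Z → X' → ℝ} {Γ : U' → X → X' → A → ℝ}

theorem dens_a 
    (hQ : ∀ q, 0 ≤ pQ q) (hQ1 : ∑ q, pQ q = 1)
    (hp : ∀ u, 0 ≤ p u) (hp1 : ∑ u, p u = 1)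
    (hk : ∀ q u w x, 0 ≤ k q u w x) (hk1 : ∀ q u, ∑ w, ∑ x, k q u w x = 1)
    (hp1' : ∑ u, p' u = 1)
    (hk' : ∀ q u w x, 0 ≤ k' q u w x) (hk1' : ∀ q u, ∑ w, ∑ x, k' q u w x = 1)
    (hΓ : ∀ u x x' a, 0 ≤ Γ u x x' a)
    (hΓ1 : ∀ u x x', ∑ a, Γ u x x' a = p' u) :
    ∑ θ, PP pQ p k k' Γ θ * (logb 2 (Aa p k k' Γ θ) - logb 2 (BBd p k k' Γ θ)) =
      ent (PP pQ p k k' Γ) (fun θ => θ.2.1) - cmi (PP pQ p k k' Γ) (fun θ => θ.2.2.2.1)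
        (fun θ => θ.2.2.2.2.2) (fun θ => (θ.2.2.1, θ.2.2.2.2.1, θ.1)) := by
  have hpos := PP_pos (k := k) (k' := k') (Γ := Γ) hp hQ hk hk' hΓ hΓ1
  have hGr : ∀ q x z, ∑ a, GG (k' q) Γ x z a = rr p' (k' q) z := fun q => GG_sum (k' q) hΓ1
  have hr1 : ∀ q, ∑ z, rr p' (k' q) z = 1 := fun q => rr_sum hp1' (hk1' q)
  unfold cmi
  simp only [ent_eq, ← Finset.sum_sub_distrib, ← Finset.sum_add_distrib]
  refine Finset.sum_congr rfl ?_
  rintro ⟨q, u, w, x, z, a⟩ -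
  by_cases h : PP pQ p k k' Γ (q, u, w, x, z, a) = 0
  · simp [h]
  obtain ⟨g1, g2, g3, g4, g5, g6, g7, g8, g9, g10⟩ := hpos q u w x z a h
  have g11 := kap_pos hp hk g2 g3
  have g12 := kap'_pos hp hk g2 g3
  rw [PP_eq]
  dsimp only
  rw [prU hGr hr1 hk1 hp1 hQ1, prX_WZQ hGr hr1 hk1 hp1 hQ1, prA_WZQ hGr hr1 hk1 hp1 hQ1,
    prXA_WZQ hGr hr1 hk1 hp1 hQ1, prWZQ hGr hr1 hk1 hp1 hQ1]
  simp only [Aa, BBd]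
  rw [lmul g7 (div_pos g3 g5), ldiv g3 g5, lmul (mul_pos g2 g3) g4, lmul g2 g3,
    lmul g1 (mul_pos g11 g6), lmul g11 g6, lmul g1 g7, lmul g1 (mul_pos g11 g4), lmul g11 g4,
    lmul g1 (mul_pos g5 g6), lmul g5 g6]
  ring

theorem dens_b
    (hQ : ∀ q, 0 ≤ pQ q) (hQ1 : ∑ q, pQ q = 1)
    (hp : ∀ u, 0 ≤ p u) (hp1 : ∑ u, p u = 1)
    (hk : ∀ q u w x, 0 ≤ k q u w x) (hk1 : ∀ q u, ∑ w, ∑ x, k q u w x = 1)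
    (hp1' : ∑ u, p' u = 1)
    (hk' : ∀ q u w x, 0 ≤ k' q u w x) (hk1' : ∀ q u, ∑ w, ∑ x, k' q u w x = 1)
    (hΓ : ∀ u x x' a, 0 ≤ Γ u x x' a)
    (hΓ1 : ∀ u x x', ∑ a, Γ u x x' a = p' u) :
    ∑ θ, PP pQ p k k' Γ θ * (logb 2 (Ab p k k' Γ θ) - logb 2 (BBd p k k' Γ θ)) =
      ent (PP pQ p k k' Γ) (fun θ => θ.2.1) - cmi (PP pQ p k k' Γ) (fun θ => θ.2.2.2.1)
        (fun θ => θ.2.2.2.2.2) (fun θ => (θ.2.2.2.2.1, θ.1)) := by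
  have hpos := PP_pos (k := k) (k' := k') (Γ := Γ) hp hQ hk hk' hΓ hΓ1
  have hGr : ∀ q x z, ∑ a, GG (k' q) Γ x z a = rr p' (k' q) z := fun q => GG_sum (k' q) hΓ1
  have hr1 : ∀ q, ∑ z, rr p' (k' q) z = 1 := fun q => rr_sum hp1' (hk1' q)
  unfold cmi
  simp only [ent_eq, ← Finset.sum_sub_distrib, ← Finset.sum_add_distrib]
  refine Finset.sum_congr rfl ?_
  rintro ⟨q, u, w, x, z, a⟩ -
  by_cases h : PP pQ p k k' Γ (q, u, w, x, z, a) = 0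
  · simp [h]
  obtain ⟨g1, g2, g3, g4, g5, g6, g7, g8, g9, g10⟩ := hpos q u w x z a h
  have g11 := kap_pos hp hk g2 g3
  have g12 := kap'_pos hp hk g2 g3
  rw [PP_eq]
  dsimp only
  rw [prU hGr hr1 hk1 hp1 hQ1, prX_ZQ hGr hr1 hk1 hp1 hQ1, prA_ZQ hGr hr1 hk1 hp1 hQ1,
    prXA_ZQ hGr hr1 hk1 hp1 hQ1, prZQ hGr hr1 hk1 hp1 hQ1]
  simp only [Ab, BBd]
  rw [lmul g8 g3, lmul (mul_pos g2 g3) g4, lmul g2 g3,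
    lmul g1 (mul_pos g12 g6), lmul g12 g6, lmul g1 g8, lmul g1 (mul_pos g12 g4), lmul g12 g4,
    lmul g1 g6]
  ring

theorem dens_c
    (hQ : ∀ q, 0 ≤ pQ q) (hQ1 : ∑ q, pQ q = 1)
    (hp : ∀ u, 0 ≤ p u) (hp1 : ∑ u, p u = 1)
    (hk : ∀ q u w x, 0 ≤ k q u w x) (hk1 : ∀ q u, ∑ w, ∑ x, k q u w x = 1)
    (hp1' : ∑ u, p' u = 1)
    (hk' : ∀ q u w x, 0 ≤ k' q u w x) (hk1' : ∀ q u, ∑ w, ∑ x, k' q u w x = 1)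
    (hΓ : ∀ u x x' a, 0 ≤ Γ u x x' a)
    (hΓ1 : ∀ u x x', ∑ a, Γ u x x' a = p' u) :
    ∑ θ, PP pQ p k k' Γ θ * (logb 2 (Ac p k p' k' Γ θ) - logb 2 (BBd p k k' Γ θ)) =
      ent (PP pQ p k k' Γ) (fun θ => θ.2.1) - cmi (PP pQ p k k' Γ)
        (fun θ => (θ.2.2.2.2.1, θ.2.2.2.1))
        (fun θ => θ.2.2.2.2.2) (fun θ => (θ.2.2.1, θ.1)) := by
  have hpos := PP_pos (k := k) (k' := k') (Γ := Γ) hp hQ hk hk' hΓ hΓ1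
  have hGr : ∀ q x z, ∑ a, GG (k' q) Γ x z a = rr p' (k' q) z := fun q => GG_sum (k' q) hΓ1
  have hr1 : ∀ q, ∑ z, rr p' (k' q) z = 1 := fun q => rr_sum hp1' (hk1' q)
  unfold cmi
  simp only [ent_eq, ← Finset.sum_sub_distrib, ← Finset.sum_add_distrib]
  refine Finset.sum_congr rfl ?_
  rintro ⟨q, u, w, x, z, a⟩ -
  by_cases h : PP pQ p k k' Γ (q, u, w, x, z, a) = 0
  · simp [h]
  obtain ⟨g1, g2, g3, g4, g5, g6, g7, g8, g9, g10⟩ := hpos q u w x z a h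
  have g11 := kap_pos hp hk g2 g3
  have g12 := kap'_pos hp hk g2 g3
  rw [PP_eq]
  dsimp only
  rw [prU hGr hr1 hk1 hp1 hQ1, prZX_WQ hGr hr1 hk1 hp1 hQ1, prA_WQ hGr hr1 hk1 hp1 hQ1,
    prZXA_WQ hGr hr1 hk1 hp1 hQ1, prWQ hGr hr1 hk1 hp1 hQ1]
  simp only [Ac, BBd]
  rw [lmul (mul_pos g9 g6) (div_pos g3 g5), lmul g9 g6, ldiv g3 g5, lmul (mul_pos g2 g3) g4, lmul g2 g3,
    lmul g1 (mul_pos g11 g6), lmul g11 g6, lmul g1 g9, lmul g1 (mul_pos g11 g4), lmul g11 g4,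
    lmul g1 g5]
  ring

theorem dens_d
    (hQ : ∀ q, 0 ≤ pQ q) (hQ1 : ∑ q, pQ q = 1)
    (hp : ∀ u, 0 ≤ p u) (hp1 : ∑ u, p u = 1)
    (hk : ∀ q u w x, 0 ≤ k q u w x) (hk1 : ∀ q u, ∑ w, ∑ x, k q u w x = 1)
    (hp1' : ∑ u, p' u = 1)
    (hk' : ∀ q u w x, 0 ≤ k' q u w x) (hk1' : ∀ q u, ∑ w, ∑ x, k' q u w x = 1)
    (hΓ : ∀ u x x' a, 0 ≤ Γ u x x' a)
    (hΓ1 : ∀ u x x', ∑ a, Γ u x x' a = p' u) :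
    ∑ θ, PP pQ p k k' Γ θ * (logb 2 (Ad p k p' k' Γ θ) - logb 2 (BBd p k k' Γ θ)) =
      ent (PP pQ p k k' Γ) (fun θ => θ.2.1) - cmi (PP pQ p k k' Γ)
        (fun θ => (θ.2.2.2.2.1, θ.2.2.2.1))
        (fun θ => θ.2.2.2.2.2) (fun θ => θ.1) := by
  have hpos := PP_pos (k := k) (k' := k') (Γ := Γ) hp hQ hk hk' hΓ hΓ1
  have hGr : ∀ q x z, ∑ a, GG (k' q) Γ x z a = rr p' (k' q) z := fun q => GG_sum (k' q) hΓ1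
  have hr1 : ∀ q, ∑ z, rr p' (k' q) z = 1 := fun q => rr_sum hp1' (hk1' q)
  unfold cmi
  simp only [ent_eq, ← Finset.sum_sub_distrib, ← Finset.sum_add_distrib]
  refine Finset.sum_congr rfl ?_
  rintro ⟨q, u, w, x, z, a⟩ -
  by_cases h : PP pQ p k k' Γ (q, u, w, x, z, a) = 0
  · simp [h]
  obtain ⟨g1, g2, g3, g4, g5, g6, g7, g8, g9, g10⟩ := hpos q u w x z a h
  have g11 := kap_pos hp hk g2 g3
  have g12 := kap'_pos hp hk g2 g3
  rw [PP_eq]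
  dsimp only
  rw [prU hGr hr1 hk1 hp1 hQ1, prZX_Q hGr hr1 hk1 hp1 hQ1, prA_Q hGr hr1 hk1 hp1 hQ1,
    prZXA_Q hGr hr1 hk1 hp1 hQ1, prQ hGr hr1 hk1 hp1 hQ1]
  simp only [Ad, BBd]
  rw [lmul (mul_pos g10 g6) g3, lmul g10 g6, lmul (mul_pos g2 g3) g4, lmul g2 g3,
    lmul g1 (mul_pos g12 g6), lmul g12 g6, lmul g1 g10, lmul g1 (mul_pos g12 g4), lmul g12 g4]
  ring

theorem dens_e
    (hQ : ∀ q, 0 ≤ pQ q) (hQ1 : ∑ q, pQ q = 1)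
    (hp : ∀ u, 0 ≤ p u) (hp1 : ∑ u, p u = 1)
    (hk : ∀ q u w x, 0 ≤ k q u w x) (hk1 : ∀ q u, ∑ w, ∑ x, k q u w x = 1)
    (hp1' : ∑ u, p' u = 1)
    (hk' : ∀ q u w x, 0 ≤ k' q u w x) (hk1' : ∀ q u, ∑ w, ∑ x, k' q u w x = 1)
    (hΓ : ∀ u x x' a, 0 ≤ Γ u x x' a)
    (hΓ1 : ∀ u x x', ∑ a, Γ u x x' a = p' u) :
    ∑ θ : Q × U × W × X, pQ θ.1 * p θ.2.1 * k θ.1 θ.2.1 θ.2.2.1 θ.2.2.2 *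
      (Real.logb 2 (∑ x, k θ.1 θ.2.1 θ.2.2.1 x) - Real.logb 2 (rr p (k θ.1) θ.2.2.1)) =
      cmi (PP pQ p k k' Γ) (fun θ => θ.2.1) (fun θ => θ.2.2.1) (fun θ => θ.1) := by
  have hpos := PP_pos (k := k) (k' := k') (Γ := Γ) hp hQ hk hk' hΓ hΓ1
  have hGr : ∀ q x z, ∑ a, GG (k' q) Γ x z a = rr p' (k' q) z := fun q => GG_sum (k' q) hΓ1
  have hr1 : ∀ q, ∑ z, rr p' (k' q) z = 1 := fun q => rr_sum hp1' (hk1' q)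
  have e : ∑ θ : Q × U × W × X, pQ θ.1 * p θ.2.1 * k θ.1 θ.2.1 θ.2.2.1 θ.2.2.2 *
      (Real.logb 2 (∑ x, k θ.1 θ.2.1 θ.2.2.1 x) - Real.logb 2 (rr p (k θ.1) θ.2.2.1)) =
      ∑ θ, PP pQ p k k' Γ θ * (Real.logb 2 (∑ x, k θ.1 θ.2.1 θ.2.2.1 x) -
        Real.logb 2 (rr p (k θ.1) θ.2.2.1)) := by
    simp only [Fintype.sum_prod_type]
    refine Finset.sum_congr rfl fun q _ => Finset.sum_congr rfl fun u _ =>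
      Finset.sum_congr rfl fun w _ => Finset.sum_congr rfl fun x _ => ?_
    simp only [PP, ← Finset.sum_mul, ← Finset.mul_sum, hGr, hr1]
    ring
  rw [e]
  unfold cmi
  simp only [ent_eq, ← Finset.sum_sub_distrib, ← Finset.sum_add_distrib]
  refine Finset.sum_congr rfl ?_
  rintro ⟨q, u, w, x, z, a⟩ -
  by_cases h : PP pQ p k k' Γ (q, u, w, x, z, a) = 0
  · simp [h]
  obtain ⟨g1, g2, g3, g4, g5, g6, g7, g8, g9, g10⟩ := hpos q u w x z a h
  have g11 : 0 < ∑ x, k q u w x :=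
    Finset.sum_pos' (fun x _ => hk _ _ _ _) ⟨x, Finset.mem_univ _, g3⟩
  rw [PP_eq]
  dsimp only
  rw [prUQ hGr hr1 hk1 hp1 hQ1, prWQ hGr hr1 hk1 hp1 hQ1, prUWQ hGr hr1 hk1 hp1 hQ1,
    prQ hGr hr1 hk1 hp1 hQ1]
  rw [lmul g1 g2, lmul g1 g5, lmul g1 (mul_pos g2 g11), lmul g2 g11]
  ring

theorem log_ineq {K r : ℝ} (hK : 0 < K) (hr : 0 < r) :
    (K - r) / Real.log 2 ≤ K * (logb 2 K - logb 2 r) := by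
  have h2 : 0 < Real.log 2 := Real.log_pos (by norm_num)
  have h := Real.log_le_sub_one_of_pos (div_pos hr hK)
  rw [Real.log_div hr.ne' hK.ne'] at h
  have h' : K * (Real.log r - Real.log K) ≤ r - K := by
    calc _ ≤ K * (r / K - 1) := mul_le_mul_of_nonneg_left h hK.le
      _ = r - K := by field_simp
  simp only [Real.logb]
  rw [← sub_div, ← mul_div_assoc]
  apply div_le_div_of_nonneg_right _ h2.le
  linarith

theorem e_nonneg
    (hQ : ∀ q, 0 ≤ pQ q) 
    (hp : ∀ u, 0 ≤ p u) (hp1 : ∑ u, p u = 1)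
    (hk : ∀ q u w x, 0 ≤ k q u w x) (hk1 : ∀ q u, ∑ w, ∑ x, k q u w x = 1) :
    0 ≤ ∑ θ : Q × U × W × X, pQ θ.1 * p θ.2.1 * k θ.1 θ.2.1 θ.2.2.1 θ.2.2.2 *
      (Real.logb 2 (∑ x, k θ.1 θ.2.1 θ.2.2.1 x) - Real.logb 2 (rr p (k θ.1) θ.2.2.1)) := by
  simp only [Fintype.sum_prod_type]
  refine Finset.sum_nonneg fun q _ => Finset.sum_nonneg fun u _ => ?_
  have h2 : 0 < Real.log 2 := Real.log_pos (by norm_num)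
  by_cases hu : p u = 0
  · simp [hu]
  have hu' : 0 < p u := lt_of_le_of_ne (hp u) (Ne.symm hu)
  simp only [mul_assoc, ← Finset.mul_sum, ← Finset.sum_mul]
  refine mul_nonneg (hQ q) (mul_nonneg (hp u) ?_)
  have key : ∀ w, ((∑ x, k q u w x) - rr p (k q) w) / Real.log 2 ≤
      (∑ x, k q u w x) * (logb 2 (∑ x, k q u w x) - logb 2 (rr p (k q) w)) := by
    intro w
    have hr0 : 0 ≤ rr p (k q) w := rr_nonneg hp (hk q) w
    by_cases hK : (∑ x, k q u w x) = 0
    · rw [hK, zero_mul, zero_sub, neg_div]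
      have := div_nonneg hr0 h2.le
      linarith
    have hK' : 0 < ∑ x, k q u w x :=
      lt_of_le_of_ne (Finset.sum_nonneg fun x _ => hk _ _ _ _) (Ne.symm hK)
    have hr : 0 < rr p (k q) w := by
      have : p u * ∑ x, k q u w x ≤ rr p (k q) w := by
        rw [Finset.mul_sum]
        exact Finset.single_le_sum (f := fun u => ∑ x, p u * k q u w x)
          (fun u _ => Finset.sum_nonneg fun x _ => mul_nonneg (hp _) (hk _ _ _ _)) (Finset.mem_univ u)
      exact lt_of_lt_of_le (mul_pos hu' hK') this
    exact log_ineq hK' hr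
  refine le_trans (le_of_eq ?_) (Finset.sum_le_sum fun w _ => key w)
  rw [← Finset.sum_div, Finset.sum_sub_distrib, hk1, rr_sum hp1 (hk1 q)]
  simp

end Dens

theorem fm {H1 H2 I1 I2 a1 c1 d1 a2 c2 d2 : ℝ}
    (h3 : H1 < d1 - I2) (h4 : H2 < d2 - I1) (h5 : H1 + H2 < a1 + d2) (h6 : H1 + H2 < a2 + d1)
    (h7 : H1 + H2 < c2 + c1) (h8 : H1 + H2 < d1 + c2 - I1) (h9 : H1 + H2 < d2 + c1 - I2)
    (h10 : 2 * H1 + H2 < d1 + a1 + c2) (h11 : H1 + 2 * H2 < d2 + a2 + c1) :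
    ∃ R1 R2 : ℝ, I1 < R1 ∧ I2 < R2 ∧ H1 - a1 < R1 ∧ H1 - c1 < R1 - R2 ∧ H1 - d1 < -R2 ∧
      H2 - a2 < R2 ∧ H2 - c2 < R2 - R1 ∧ H2 - d2 < -R1 := by
  obtain ⟨R2, l2, r2⟩ := exists_between
    (show max (max I2 (H2 - a2)) (max (I1 + H2 - c2) (H1 + H2 - a1 - c2)) <
      min (d1 - H1) (c1 + d2 - H1 - H2) by
      simp only [max_lt_iff, lt_min_iff]
      refine ⟨⟨⟨?_, ?_⟩, ?_, ?_⟩, ⟨?_, ?_⟩, ?_, ?_⟩ <;> linarith)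
  simp only [max_lt_iff, lt_min_iff] at l2 r2
  obtain ⟨⟨l21, l22⟩, l23, l24⟩ := l2
  obtain ⟨R1, l1, r1⟩ := exists_between
    (show max (max I1 (H1 - a1)) (H1 + R2 - c1) < min (d2 - H2) (c2 - H2 + R2) by
      simp only [max_lt_iff, lt_min_iff]
      refine ⟨⟨⟨?_, ?_⟩, ?_⟩, ⟨?_, ?_⟩, ?_⟩ <;> linarith)
  simp only [max_lt_iff, lt_min_iff] at l1 r1
  exact ⟨R1, R2, by linarith, by linarith, by linarith, by linarith, by linarith, by linarith,
    by linarith, by linarith⟩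

set_option linter.unusedSectionVars false

section Push
variable {Ω Θ α β γ : Type} [Fintype Ω] [Fintype Θ] [Fintype α] [Fintype β] [Fintype γ]

theorem cmi_push (p : Ω → ℝ) (proj : Ω → Θ) (P : Θ → ℝ) (hP : pr p proj = P)
    (X : Θ → α) (Y : Θ → β) (Z : Θ → γ) :
    cmi p (fun ω => X (proj ω)) (fun ω => Y (proj ω)) (fun ω => Z (proj ω)) = cmi P X Y Z := by
  subst hP
  unfold cmi
  rw [← ent_push p proj (fun θ => (X θ, Z θ)), ← ent_push p proj (fun θ => (Y θ, Z θ)),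
    ← ent_push p proj (fun θ => (X θ, Y θ, Z θ)), ← ent_push p proj Z]

theorem ent_push' (p : Ω → ℝ) (proj : Ω → Θ) (P : Θ → ℝ) (hP : pr p proj = P) (X : Θ → α) :
    ent p (fun ω => X (proj ω)) = ent P X := by
  subst hP
  exact ent_push p proj X

theorem cmi_swap {δ : Type} [Fintype δ] (p : Ω → ℝ) (X : Ω → α) (Y : Ω → β) (Z : Ω → γ) (f : γ → δ)
    (hf : Function.Injective f) : cmi p X Y (fun ω => f (Z ω)) = cmi p X Y Z := by
  unfold cmi
  have e1 := ent_inj p (fun ω => (X ω, Z ω)) (fun t => (t.1, f t.2))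
    (by rintro ⟨a, b⟩ ⟨c, d⟩ h; simp only [Prod.mk.injEq] at h; rw [h.1, hf h.2])
  have e2 := ent_inj p (fun ω => (Y ω, Z ω)) (fun t => (t.1, f t.2))
    (by rintro ⟨a, b⟩ ⟨c, d⟩ h; simp only [Prod.mk.injEq] at h; rw [h.1, hf h.2])
  have e3 := ent_inj p (fun ω => (X ω, Y ω, Z ω)) (fun t => (t.1, t.2.1, f t.2.2))
    (by rintro ⟨a, b, b'⟩ ⟨c, d, d'⟩ h; simp only [Prod.mk.injEq] at h; rw [h.1, h.2.1, hf h.2.2])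
  have e4 := ent_inj p Z f hf
  rw [e4]
  dsimp only at e1 e2 e3
  rw [e1, e2, e3]
end Push

section Fin
variable {U1 V1 U2 V2 X1 X2 Y1 Y2 : Type}
  [Fintype U1] [Fintype V1] [Fintype U2] [Fintype V2]
  [Fintype X1] [Fintype X2] [Fintype Y1] [Fintype Y2]

theorem push1 (mQ mW1 mW2 : ℕ) (ch : X1 × X2 → Y1 × Y2 → ℝ)
    (q1 : U1 × V1 → ℝ) (q2 : U2 × V2 → ℝ)
    (pQ : Fin mQ → ℝ) (k1 : U1 → Fin mQ → Fin mW1 × X1 → ℝ)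
    (k2 : U2 → Fin mQ → Fin mW2 × X2 → ℝ) :
    pr (jointHK mQ mW1 mW2 ch q1 q2 pQ k1 k2)
      (fun ω => (ω.1, ω.2.1, ω.2.2.2.2.2.1, ω.2.2.2.2.2.2.1, ω.2.2.2.2.2.2.2.1,
        (ω.2.2.2.2.1, ω.2.2.2.2.2.2.2.2.2.1))) =
    PP pQ (mg q1) (fun q u w x => k1 u q (w, x)) (fun q u w x => k2 u q (w, x)) (Gm1 ch q2) := by
  funext ⟨q, u1, w1, x1, w2, v2, y1⟩
  refine (pr_equiv (jointHK mQ mW1 mW2 ch q1 q2 pQ k1 k2) _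
    (⟨fun ω => ((ω.1, ω.2.1, ω.2.2.2.2.2.1, ω.2.2.2.2.2.2.1, ω.2.2.2.2.2.2.2.1,
        (ω.2.2.2.2.1, ω.2.2.2.2.2.2.2.2.2.1)),
        (ω.2.2.2.1, ω.2.2.2.2.2.2.2.2.1, ω.2.2.2.2.2.2.2.2.2.2, ω.2.2.1)),
      fun t => (t.1.1, t.1.2.1, t.2.2.2.2, t.2.1, t.1.2.2.2.2.2.1, t.1.2.2.1, t.1.2.2.2.1,
        t.1.2.2.2.2.1, t.2.2.1, t.1.2.2.2.2.2.2, t.2.2.2.1), fun _ => rfl, fun _ => rfl⟩ :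
      Fin mQ × U1 × V1 × U2 × V2 × Fin mW1 × X1 × Fin mW2 × X2 × Y1 × Y2 ≃
        (Fin mQ × U1 × Fin mW1 × X1 × Fin mW2 × (V2 × Y1)) × (U2 × X2 × Y2 × V1)) (fun _ => rfl) _).trans ?_
  simp only [jointHK, PP, GG, Gm1, mg, Equiv.coe_fn_symm_mk, Fintype.sum_prod_type, Finset.sum_mul,
    Finset.mul_sum]
  refine Finset.sum_congr rfl fun a _ => ?_
  refine Finset.sum_congr rfl fun b _ => ?_
  refine Finset.sum_congr rfl fun c _ => ?_
  refine Finset.sum_congr rfl fun d _ => ?_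
  ring

theorem push2 (mQ mW1 mW2 : ℕ) (ch : X1 × X2 → Y1 × Y2 → ℝ)
    (q1 : U1 × V1 → ℝ) (q2 : U2 × V2 → ℝ)
    (pQ : Fin mQ → ℝ) (k1 : U1 → Fin mQ → Fin mW1 × X1 → ℝ)
    (k2 : U2 → Fin mQ → Fin mW2 × X2 → ℝ) :
    pr (jointHK mQ mW1 mW2 ch q1 q2 pQ k1 k2)
      (fun ω => (ω.1, ω.2.2.2.1, ω.2.2.2.2.2.2.2.1, ω.2.2.2.2.2.2.2.2.1, ω.2.2.2.2.2.1,
        (ω.2.2.1, ω.2.2.2.2.2.2.2.2.2.2))) =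
    PP pQ (mg q2) (fun q u w x => k2 u q (w, x)) (fun q u w x => k1 u q (w, x)) (Gm2 ch q1) := by
  funext ⟨q, u2, w2, x2, w1, v1, y2⟩
  refine (pr_equiv (jointHK mQ mW1 mW2 ch q1 q2 pQ k1 k2) _
    (⟨fun ω => ((ω.1, ω.2.2.2.1, ω.2.2.2.2.2.2.2.1, ω.2.2.2.2.2.2.2.2.1, ω.2.2.2.2.2.1,
        (ω.2.2.1, ω.2.2.2.2.2.2.2.2.2.2)),
        (ω.2.1, ω.2.2.2.2.2.2.1, ω.2.2.2.2.2.2.2.2.2.1, ω.2.2.2.2.1)),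
      fun t => (t.1.1, t.2.1, t.1.2.2.2.2.2.1, t.1.2.1, t.2.2.2.2, t.1.2.2.2.2.1, t.2.2.1,
        t.1.2.2.1, t.1.2.2.2.1, t.2.2.2.1, t.1.2.2.2.2.2.2), fun _ => rfl, fun _ => rfl⟩ :
      Fin mQ × U1 × V1 × U2 × V2 × Fin mW1 × X1 × Fin mW2 × X2 × Y1 × Y2 ≃
        (Fin mQ × U2 × Fin mW2 × X2 × Fin mW1 × (V1 × Y2)) × (U1 × X1 × Y1 × V2)) (fun _ => rfl) _).trans ?_
  simp only [jointHK, PP, GG, Gm2, mg, Equiv.coe_fn_symm_mk, Fintype.sum_prod_type, Finset.sum_mul,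
    Finset.mul_sum]
  refine Finset.sum_congr rfl fun a _ => ?_
  refine Finset.sum_congr rfl fun b _ => ?_
  refine Finset.sum_congr rfl fun c _ => ?_
  refine Finset.sum_congr rfl fun d _ => ?_
  ring

theorem ne_of_pmf {α : Type} [Fintype α] {p : α → ℝ} (h : IsPMF p) : Nonempty α := by
  by_contra hn
  rw [not_nonempty_iff] at hn
  have := h.2
  simp at this

end Fin

section Stmt1

variable {U1 V1 U2 V2 X1 X2 Y1 Y2 : Type}
  [Fintype U1] [Fintype V1] [Fintype U2] [Fintype V2]
  [Fintype X1] [Fintype X2] [Fintype Y1] [Fintype Y2]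

theorem stmt1 (ch : X1 × X2 → Y1 × Y2 → ℝ) (q1 : U1 × V1 → ℝ) (q2 : U2 × V2 → ℝ)
    (hch : IsKernel ch) (hq1 : IsPMF q1) (hq2 : IsPMF q2)
    (h : ∃ (mQ mW1 mW2 : ℕ) (pQ : Fin mQ → ℝ)
        (k1 : U1 → Fin mQ → Fin mW1 × X1 → ℝ) (k2 : U2 → Fin mQ → Fin mW2 × X2 → ℝ),
        IsPMF pQ ∧ (∀ u q, IsPMF (k1 u q)) ∧ (∀ u q, IsPMF (k2 u q)) ∧
        (let p := jointHK mQ mW1 mW2 ch q1 q2 pQ k1 k2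
         let vQ := fun (ω : Fin mQ × U1 × V1 × U2 × V2 × Fin mW1 × X1 × Fin mW2 × X2 × Y1 × Y2) => ω.1
         let vU1 := fun (ω : Fin mQ × U1 × V1 × U2 × V2 × Fin mW1 × X1 × Fin mW2 × X2 × Y1 × Y2) => ω.2.1
         let vV1 := fun (ω : Fin mQ × U1 × V1 × U2 × V2 × Fin mW1 × X1 × Fin mW2 × X2 × Y1 × Y2) => ω.2.2.1
         let vU2 := fun (ω : Fin mQ × U1 × V1 × U2 × V2 × Fin mW1 × X1 × Fin mW2 × X2 × Y1 × Y2) => ω.2.2.2.1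
         let vV2 := fun (ω : Fin mQ × U1 × V1 × U2 × V2 × Fin mW1 × X1 × Fin mW2 × X2 × Y1 × Y2) => ω.2.2.2.2.1
         let vW1 := fun (ω : Fin mQ × U1 × V1 × U2 × V2 × Fin mW1 × X1 × Fin mW2 × X2 × Y1 × Y2) => ω.2.2.2.2.2.1
         let vX1 := fun (ω : Fin mQ × U1 × V1 × U2 × V2 × Fin mW1 × X1 × Fin mW2 × X2 × Y1 × Y2) => ω.2.2.2.2.2.2.1
         let vW2 := fun (ω : Fin mQ × U1 × V1 × U2 × V2 × Fin mW1 × X1 × Fin mW2 × X2 × Y1 × Y2) => ω.2.2.2.2.2.2.2.1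
         let vX2 := fun (ω : Fin mQ × U1 × V1 × U2 × V2 × Fin mW1 × X1 × Fin mW2 × X2 × Y1 × Y2) => ω.2.2.2.2.2.2.2.2.1
         let vY1 := fun (ω : Fin mQ × U1 × V1 × U2 × V2 × Fin mW1 × X1 × Fin mW2 × X2 × Y1 × Y2) => ω.2.2.2.2.2.2.2.2.2.1
         let vY2 := fun (ω : Fin mQ × U1 × V1 × U2 × V2 × Fin mW1 × X1 × Fin mW2 × X2 × Y1 × Y2) => ω.2.2.2.2.2.2.2.2.2.2
         -- receiver super-outputs
         let A1 := fun ω => (vV2 ω, vY1 ω)   -- (V2, Y1) at Receiver 1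
         let A2 := fun ω => (vV1 ω, vY2 ω)   -- (V1, Y2) at Receiver 2
         ent p vU1 < cmi p vX1 A1 (fun ω => (vW2 ω, vQ ω)) ∧
         ent p vU2 < cmi p vX2 A2 (fun ω => (vW1 ω, vQ ω)) ∧
         ent p vU1 < cmi p (fun ω => (vW2 ω, vX1 ω)) A1 vQ - cmi p vU2 vW2 vQ ∧
         ent p vU2 < cmi p (fun ω => (vW1 ω, vX2 ω)) A2 vQ - cmi p vU1 vW1 vQ ∧
         ent p vU1 + ent p vU2 <
           cmi p vX1 A1 (fun ω => (vW1 ω, vW2 ω, vQ ω)) +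
           cmi p (fun ω => (vW1 ω, vX2 ω)) A2 vQ ∧
         ent p vU1 + ent p vU2 <
           cmi p vX2 A2 (fun ω => (vW1 ω, vW2 ω, vQ ω)) +
           cmi p (fun ω => (vW2 ω, vX1 ω)) A1 vQ ∧
         ent p vU1 + ent p vU2 <
           cmi p (fun ω => (vW1 ω, vX2 ω)) A2 (fun ω => (vW2 ω, vQ ω)) +
           cmi p (fun ω => (vW2 ω, vX1 ω)) A1 (fun ω => (vW1 ω, vQ ω)) ∧
         ent p vU1 + ent p vU2 <
           cmi p (fun ω => (vW2 ω, vX1 ω)) A1 vQ +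
           cmi p (fun ω => (vW1 ω, vX2 ω)) A2 (fun ω => (vW2 ω, vQ ω)) - cmi p vU1 vW1 vQ ∧
         ent p vU1 + ent p vU2 <
           cmi p (fun ω => (vW1 ω, vX2 ω)) A2 vQ +
           cmi p (fun ω => (vW2 ω, vX1 ω)) A1 (fun ω => (vW1 ω, vQ ω)) - cmi p vU2 vW2 vQ ∧
         2 * ent p vU1 + ent p vU2 <
           cmi p (fun ω => (vW2 ω, vX1 ω)) A1 vQ +
           cmi p vX1 A1 (fun ω => (vW1 ω, vW2 ω, vQ ω)) +
           cmi p (fun ω => (vW1 ω, vX2 ω)) A2 (fun ω => (vW2 ω, vQ ω)) ∧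
         ent p vU1 + 2 * ent p vU2 <
           cmi p (fun ω => (vW1 ω, vX2 ω)) A2 vQ +
           cmi p vX2 A2 (fun ω => (vW1 ω, vW2 ω, vQ ω)) +
           cmi p (fun ω => (vW2 ω, vX1 ω)) A1 (fun ω => (vW1 ω, vQ ω)))) :
    ReliableCross ch q1 q2 := by
  obtain ⟨mQ, mW1, mW2, pQ, k1, k2, hpQ, hk1, hk2, h⟩ := h
  obtain ⟨h1, h2, h3, h4, h5, h6, h7, h8, h9, h10, h11⟩ := h
  obtain ⟨u01, v01⟩ := (ne_of_pmf hq1).some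
  obtain ⟨u02, v02⟩ := (ne_of_pmf hq2).some
  have q0 := (ne_of_pmf hpQ).some
  obtain ⟨w01, x01⟩ := (ne_of_pmf (hk1 u01 q0)).some
  obtain ⟨w02, x02⟩ := (ne_of_pmf (hk2 u02 q0)).some
  have P1 := push1 mQ mW1 mW2 ch q1 q2 pQ k1 k2
  have P2 := push2 mQ mW1 mW2 ch q1 q2 pQ k1 k2
  set p := jointHK mQ mW1 mW2 ch q1 q2 pQ k1 k2 with hp
  have hp1 : ∀ u, 0 ≤ mg q1 u := fun u => Finset.sum_nonneg fun v _ => hq1.1 _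
  have hp2 : ∀ u, 0 ≤ mg q2 u := fun u => Finset.sum_nonneg fun v _ => hq2.1 _
  have hps1 : ∑ u, mg q1 u = 1 := by rw [← hq1.2, Fintype.sum_prod_type]; rfl
  have hps2 : ∑ u, mg q2 u = 1 := by rw [← hq2.2, Fintype.sum_prod_type]; rfl
  have hkn1 : ∀ (q : Fin mQ) (u : U1) (w : Fin mW1) (x : X1),
      0 ≤ (fun q u w x => k1 u q (w, x) : Fin mQ → U1 → Fin mW1 → X1 → ℝ) q u w x :=
    fun q u w x => (hk1 u q).1 _
  have hkn2 : ∀ (q : Fin mQ) (u : U2) (w : Fin mW2) (x : X2),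
      0 ≤ (fun q u w x => k2 u q (w, x) : Fin mQ → U2 → Fin mW2 → X2 → ℝ) q u w x :=
    fun q u w x => (hk2 u q).1 _
  have hks1 : ∀ (q : Fin mQ) (u : U1),
      ∑ w, ∑ x, (fun q u w x => k1 u q (w, x) : Fin mQ → U1 → Fin mW1 → X1 → ℝ) q u w x = 1 := by
    intro q u; rw [← (hk1 u q).2, Fintype.sum_prod_type]
  have hks2 : ∀ (q : Fin mQ) (u : U2),
      ∑ w, ∑ x, (fun q u w x => k2 u q (w, x) : Fin mQ → U2 → Fin mW2 → X2 → ℝ) q u w x = 1 := by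
    intro q u; rw [← (hk2 u q).2, Fintype.sum_prod_type]
  have hg1 : ∀ u x x' a, 0 ≤ Gm1 ch q2 u x x' a := fun u x x' a =>
    Finset.sum_nonneg fun y _ => mul_nonneg (hq2.1 _) ((hch _).1 _)
  have hg2 : ∀ u x x' a, 0 ≤ Gm2 ch q1 u x x' a := fun u x x' a =>
    Finset.sum_nonneg fun y _ => mul_nonneg (hq1.1 _) ((hch _).1 _)
  have hgs1 : ∀ u x x', ∑ a, Gm1 ch q2 u x x' a = mg q2 u := by
    intro u x x'
    simp only [Gm1, mg, Fintype.sum_prod_type, ← Finset.mul_sum]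
    have := (hch (x, x')).2
    rw [Fintype.sum_prod_type] at this
    simp only [this, mul_one]
  have hgs2 : ∀ u x x', ∑ a, Gm2 ch q1 u x x' a = mg q1 u := by
    intro u x x'
    simp only [Gm2, mg, Fintype.sum_prod_type, ← Finset.mul_sum]
    have := (hch (x', x)).2
    rw [Fintype.sum_prod_type, Finset.sum_comm] at this
    simp only [this, mul_one]
  have da1 := dens_a hpQ.1 hpQ.2 hp1 hps1 hkn1 hks1 hps2 hkn2 hks2 hg1 hgs1
  have db1 := dens_b hpQ.1 hpQ.2 hp1 hps1 hkn1 hks1 hps2 hkn2 hks2 hg1 hgs1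
  have dc1 := dens_c hpQ.1 hpQ.2 hp1 hps1 hkn1 hks1 hps2 hkn2 hks2 hg1 hgs1
  have dd1 := dens_d hpQ.1 hpQ.2 hp1 hps1 hkn1 hks1 hps2 hkn2 hks2 hg1 hgs1
  have de1 := dens_e hpQ.1 hpQ.2 hp1 hps1 hkn1 hks1 hps2 hkn2 hks2 hg1 hgs1
  have da2 := dens_a hpQ.1 hpQ.2 hp2 hps2 hkn2 hks2 hps1 hkn1 hks1 hg2 hgs2
  have db2 := dens_b hpQ.1 hpQ.2 hp2 hps2 hkn2 hks2 hps1 hkn1 hks1 hg2 hgs2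
  have dc2 := dens_c hpQ.1 hpQ.2 hp2 hps2 hkn2 hks2 hps1 hkn1 hks1 hg2 hgs2
  have dd2 := dens_d hpQ.1 hpQ.2 hp2 hps2 hkn2 hks2 hps1 hkn1 hks1 hg2 hgs2
  have de2 := dens_e hpQ.1 hpQ.2 hp2 hps2 hkn2 hks2 hps1 hkn1 hks1 hg2 hgs2
  have n1 := e_nonneg (pQ := pQ) hpQ.1 hp1 hps1 hkn1 hks1
  have n2 := e_nonneg (pQ := pQ) hpQ.1 hp2 hps2 hkn2 hks2
  rw [← ent_push' p _ _ P1, ← cmi_push p _ _ P1] at da1 db1 dc1 dd1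
  rw [← ent_push' p _ _ P2, ← cmi_push p _ _ P2] at da2 db2 dc2 dd2
  rw [← cmi_push p _ _ P1] at de1
  rw [← cmi_push p _ _ P2] at de2
  rw [← cmi_swap p _ _ _ (fun t : Fin mW2 × Fin mW1 × Fin mQ => (t.2.1, t.1, t.2.2))
    (by rintro ⟨a, b, c⟩ ⟨a', b', c'⟩ h; simp only [Prod.mk.injEq] at h ⊢; tauto)] at da2
  dsimp only at h1 h2 h3 h4 h5 h6 h7 h8 h9 h10 h11 da1 db1 dc1 dd1 de1 da2 db2 dc2 dd2 de2
  obtain ⟨R1, R2, e1, e2, f1, f2, f3, f4, f5, f6⟩ := fm h3 h4 h5 h6 h7 h8 h9 h10 h11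
  refine reliable_of_bound ch q1 q2 hch hq1 hq2 (coding hpQ.1 hpQ.2 hp1 hps1 hp2 hps2 hkn1 hkn2
    hks1 hks2 (Gm1 ch q2) hg1 hgs1 (Gm2 ch q1) hg2 hgs2 R1 R2 ?_ ?_ ?_ ?_ ?_ ?_ ?_ ?_ ?_ ?_ ?_ ?_
    u01 x01 u02 x02)
  · rw [de1] at n1; exact n1.trans e1.le
  · rw [de2] at n2; exact n2.trans e2.le
  · rw [de1]; exact e1
  · rw [de2]; exact e2
  · rw [da1]; linarith
  · rw [db1]; linarith
  · rw [dc1]; linarith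
  · rw [dd1]; linarith
  · rw [da2]; linarith
  · rw [db2]; linarith
  · rw [dc2]; linarith
  · rw [dd2]; linarith

end Stmt1

end Paper
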